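/- arXiv:2202.06195 — 2 statements merged into one kernel-verified Lean document; each statement's English description precedes it below -/
import Mathlib

section
/- We have ∑_{n₁ > n₂ ≥ 0} 4^{n₁} / (binom(2n₁, n₁) · (2n₁−1)² · (2n₂+1)) = 14 β(4) − 16 · Im(∑_{n=1}^∞ ((1+i)/2)^n / n⁴) − (π (log 2)³)/12 − (3 π³ log 2)/16 + (π (log 2)²)/8 + 5π³/32 − 4 · Im(∑_{n=1}^∞ ((1+i)/2)^n / n³), where β(s) = ∑_{k=0}^∞ (−1)^k/(2k+1)^s is the Dirichlet beta function and the double sum is over integers n₁ > n₂ ≥ 0. -/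
open Real Complex

/-
Expanding `4 ^ n / binom (2 n) n` and the odd harmonic numbers as integrals and summing a geometric
series turns the double series into the integral of `-log x (1 - log t) / (1 - t² (1 - x²))` over
the unit square. Since `log x = log (t x) - log t`, it is the difference of two integrals. In the
first, putting `y = t x` and swapping the order of integration leaves an integral over `y` alone;
its hard part, folded by `y ↦ 1 / y` to the half line, is a double integral with a rational kernel.
In the second, the integral over `x` is elementary and `t = 2 u / (1 + u²)` leads to
`∫₀¹ (arctan u / u) (L² - L) du` with `L = log (2 u / (1 + u²))`. As `L` and `-2 arctan u` are the
real and imaginary parts of one affine combination of `log (i u)` and `-log (1 + i u)`, this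
integrand is, up to `arctan u ^ 3 / u`, the imaginary part of a polynomial in those two logarithms
divided by `u`. The primitive is a combination of polylogarithms of `-i u`, `1 / (1 + i u)` and
`i u / (1 + i u)`, and at `u = 1` the last of these arguments is `(1 + i) / 2`.
-/

namespace CentralBinomialSum

open Set Filter Topology MeasureTheory

/-! ### Polylogarithms and the Dirichlet beta function -/

/-- The polylogarithm `Liₙ(z)`, as the sum of its power series; it is used only for `‖z‖ ≤ 1`. -/
noncomputable def polylog (n : ℕ) (z : ℂ) : ℂ := ∑' k : ℕ, z ^ (k + 1) / ((k : ℂ) + 1) ^ n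

/-- The Dirichlet beta function at a natural number. -/
noncomputable def dirichletBeta (n : ℕ) : ℝ := ∑' k : ℕ, (-1 : ℝ) ^ k / (2 * (k : ℝ) + 1) ^ n

lemma norm_polylog_term (n k : ℕ) (z : ℂ) :
    ‖z ^ (k + 1) / ((k : ℂ) + 1) ^ n‖ = ‖z‖ ^ (k + 1) / ((k : ℝ) + 1) ^ n := by
  rw [norm_div, norm_pow, norm_pow, ← Nat.cast_add_one, Complex.norm_natCast, Nat.cast_add_one]

lemma norm_polylog_term_le (n k : ℕ) {z : ℂ} (hz : ‖z‖ ≤ 1) :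
    ‖z ^ (k + 1) / ((k : ℂ) + 1) ^ n‖ ≤ 1 / ((k : ℝ) + 1) ^ n := by
  rw [norm_polylog_term]
  gcongr
  exact pow_le_one₀ (norm_nonneg z) hz

lemma summable_one_div_add_one_pow {n : ℕ} (hn : 1 < n) :
    Summable fun k : ℕ => 1 / ((k : ℝ) + 1) ^ n := by
  simpa using (summable_nat_add_iff 1).2 (Real.summable_one_div_nat_pow.2 hn)

lemma summable_polylog {n : ℕ} (hn : 1 < n) {z : ℂ} (hz : ‖z‖ ≤ 1) :
    Summable fun k : ℕ => z ^ (k + 1) / ((k : ℂ) + 1) ^ n :=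
  .of_norm_bounded (summable_one_div_add_one_pow hn) fun k => norm_polylog_term_le n k hz

lemma continuousOn_polylog {n : ℕ} (hn : 1 < n) :
    ContinuousOn (polylog n) (Metric.closedBall 0 1) :=
  continuousOn_tsum (fun k => by fun_prop) (summable_one_div_add_one_pow hn)
    fun k _ hz => norm_polylog_term_le n k (mem_closedBall_zero_iff.1 hz)

lemma polylog_isBigO {n : ℕ} (hn : 1 < n) :
    polylog n =O[𝓝 0] (fun z => z) := by
  refine .of_bound (∑' k : ℕ, 1 / ((k : ℝ) + 1) ^ n) ?_
  filter_upwards [Metric.closedBall_mem_nhds (0 : ℂ) one_pos] with z hz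
  have hz : ‖z‖ ≤ 1 := mem_closedBall_zero_iff.1 hz
  rw [← tsum_mul_right]
  refine tsum_of_norm_bounded ((summable_one_div_add_one_pow hn).mul_right ‖z‖).hasSum fun k => ?_
  rw [norm_polylog_term, pow_succ, div_mul_eq_mul_div]
  gcongr
  exact pow_le_one₀ (norm_nonneg z) hz

lemma hasDerivAt_polylog_succ (n : ℕ) {z : ℂ} (hz : ‖z‖ < 1) (hz₀ : z ≠ 0) :
    HasDerivAt (polylog (n + 1)) (polylog n z / z) z := by
  obtain ⟨r, hzr, hr⟩ := exists_between hz
  have hr₀ : 0 < r := (norm_nonneg z).trans_lt hzr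
  have hterm (k : ℕ) (w : ℂ) : HasDerivAt (fun w : ℂ => w ^ (k + 1) / ((k : ℂ) + 1) ^ (n + 1))
      (w ^ k / ((k : ℂ) + 1) ^ n) w := by
    refine ((hasDerivAt_pow (k + 1) w).div_const _).congr_deriv ?_
    have : (k : ℂ) + 1 ≠ 0 := k.cast_add_one_ne_zero
    rw [Nat.add_sub_cancel, pow_succ ((k : ℂ) + 1)]
    push_cast
    field_simp
  have hbound (k : ℕ) (w : ℂ) (hw : w ∈ Metric.ball 0 r) : ‖w ^ k / ((k : ℂ) + 1) ^ n‖ ≤ r ^ k := by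
    rw [norm_div, norm_pow, norm_pow, ← Nat.cast_add_one, Complex.norm_natCast]
    have hk : (1 : ℝ) ≤ ((k + 1 : ℕ) : ℝ) ^ n := one_le_pow₀ (mod_cast k.succ_pos)
    exact (div_le_self (by positivity) hk).trans
      (pow_le_pow_left₀ (norm_nonneg w) (mem_ball_zero_iff.1 hw).le k)
  refine (hasDerivAt_tsum_of_isPreconnected (summable_geometric_of_lt_one hr₀.le hr)
    Metric.isOpen_ball (convex_ball 0 r).isPreconnected (fun k w _ => hterm k w) hbound
    (Metric.mem_ball_self hr₀) (by simp [summable_zero])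
    (mem_ball_zero_iff.2 hzr)).congr_deriv ?_
  rw [polylog, ← tsum_div_const]
  refine tsum_congr fun k => ?_
  rw [pow_succ]
  field_simp

lemma hasDerivAt_polylog_comp (n : ℕ) {f : ℝ → ℂ} {f' : ℂ} {u : ℝ} (hf : HasDerivAt f f' u)
    (hu : ‖f u‖ < 1) (hu₀ : f u ≠ 0) :
    HasDerivAt (fun u => polylog (n + 1) (f u)) (polylog n (f u) * (f' / f u)) u :=
  ((hasDerivAt_polylog_succ n hu hu₀).comp_of_eq u hf rfl).congr_deriv (by ring)

lemma polylog_one_left {z : ℂ} (hz : ‖z‖ < 1) : polylog 1 z = -Complex.log (1 - z) := by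
  simpa [polylog] using (Complex.hasSum_taylorSeries_neg_log' hz).tsum_eq

lemma polylog_two_one : polylog 2 1 = (π ^ 2 / 6 : ℝ) := by
  have h := (Complex.hasSum_ofReal.2 ((hasSum_nat_add_iff' 1).2 hasSum_zeta_two)).tsum_eq
  simpa [polylog] using h

lemma polylog_conj (n : ℕ) (z : ℂ) :
    polylog n ((starRingEnd ℂ) z) = (starRingEnd ℂ) (polylog n z) := by
  simp [polylog, Complex.conj_tsum]

lemma polylog_one_right (n : ℕ) : polylog n 1 = ((polylog n 1).re : ℂ) :=
  (Complex.conj_eq_iff_re.1 (by rw [← polylog_conj, map_one])).symm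

lemma summable_dirichletBeta {n : ℕ} (hn : 1 < n) :
    Summable fun k : ℕ => (-1 : ℝ) ^ k / (2 * (k : ℝ) + 1) ^ n := by
  refine .of_norm_bounded (summable_one_div_add_one_pow hn) fun k => ?_
  rw [norm_div, norm_pow, norm_neg, norm_one, one_pow, Real.norm_of_nonneg (by positivity)]
  gcongr
  linarith [k.cast_nonneg (α := ℝ)]

lemma tsum_eq_tsum_odd {f : ℕ → ℝ} (hf : Summable f) (heven : ∀ k, f (2 * k) = 0) :
    ∑' k, f k = ∑' k, f (2 * k + 1) := by
  rw [← tsum_even_add_odd (hf.comp_injective (mul_right_injective₀ two_ne_zero))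
    (hf.comp_injective fun a b h => by simpa using h)]
  simp [heven]

lemma dirichletBeta_three : dirichletBeta 3 = π ^ 3 / 32 := by
  have h := hasSum_L_function_mod_four_eval_three
  rw [← h.tsum_eq, tsum_eq_tsum_odd h.summable, dirichletBeta]
  · refine tsum_congr fun k => ?_
    rw [show π * ((2 * k + 1 : ℕ) : ℝ) / 2 = π / 2 + k * π by push_cast; ring,
      Real.sin_add_nat_mul_pi, Real.sin_pi_div_two]
    push_cast
    ring
  · intro k
    rw [show π * ((2 * k : ℕ) : ℝ) / 2 = k * π by push_cast; ring, Real.sin_nat_mul_pi, mul_zero]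

lemma polylog_neg_I_im {n : ℕ} (hn : 1 < n) : (polylog n (-I)).im = -dirichletBeta n := by
  have hI : Summable fun k : ℕ => (-I) ^ k / (k : ℂ) ^ n :=
    (summable_nat_add_iff 1).1 (by simpa using summable_polylog hn (z := -I) (by simp))
  have him : ∑' k : ℕ, ((-I) ^ k / (k : ℂ) ^ n).im = (polylog n (-I)).im := by
    rw [← Complex.im_tsum hI, hI.tsum_eq_zero_add, polylog]
    simp [show n ≠ 0 by omega]
  have heven (k : ℕ) : ((-I) ^ (2 * k) / ((2 * k : ℕ) : ℂ) ^ n).im = 0 := by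
    have : (-I) ^ (2 * k) / ((2 * k : ℕ) : ℂ) ^ n =
        (((-1 : ℝ) ^ k / ((2 * k : ℕ) : ℝ) ^ n : ℝ) : ℂ) := by
      rw [pow_mul, neg_sq, I_sq]
      push_cast
      rfl
    rw [this, ofReal_im]
  have hodd (k : ℕ) : ((-I) ^ (2 * k + 1) / ((2 * k + 1 : ℕ) : ℂ) ^ n).im =
      -((-1 : ℝ) ^ k / (2 * (k : ℝ) + 1) ^ n) := by
    have : (-I) ^ (2 * k + 1) / ((2 * k + 1 : ℕ) : ℂ) ^ n =
        ((-((-1 : ℝ) ^ k / (2 * (k : ℝ) + 1) ^ n) : ℝ) : ℂ) * I := by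
      rw [pow_succ, pow_mul, neg_sq, I_sq]
      push_cast
      ring
    rw [this, im_ofReal_mul, I_im, mul_one]
  rw [← him, tsum_eq_tsum_odd (Complex.hasSum_im hI.hasSum).summable heven, dirichletBeta,
    ← tsum_neg]
  exact tsum_congr hodd

/-! ### Integration on open intervals -/

lemma neg_log_nonneg {x : ℝ} (hx : x ∈ Ioo (0 : ℝ) 1) : 0 ≤ -Real.log x :=
  neg_nonneg.2 (Real.log_nonpos hx.1.le hx.2.le)

lemma integrableOn_Ioo_of_hasDerivAt_of_nonneg {a b fa fb : ℝ} {f f' : ℝ → ℝ}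
    (hderiv : ∀ x ∈ Ioo a b, HasDerivAt f (f' x) x) (hf' : ∀ x ∈ Ioo a b, 0 ≤ f' x)
    (ha : Tendsto f (𝓝[>] a) (𝓝 fa)) (hb : Tendsto f (𝓝[<] b) (𝓝 fb)) :
    IntegrableOn f' (Ioo a b) := by
  rw [← integrableOn_Ioc_iff_integrableOn_Ioo]
  have hcont : ContinuousOn f (Ioo a b) := fun x hx => (hderiv x hx).continuousAt.continuousWithinAt
  refine intervalIntegral.integrableOn_deriv_of_nonneg
    (continuousOn_Icc_extendFrom_Ioo hcont ha hb) (fun x hx => ?_) hf'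
  refine (hderiv x hx).congr_of_eventuallyEq ?_
  filter_upwards [Ioo_mem_nhds hx.1 hx.2] with y hy using extendFrom_extends hcont y hy

lemma integral_Ioo_of_hasDerivAt_of_tendsto {a b : ℝ} {E : Type*} [NormedAddCommGroup E]
    [NormedSpace ℝ E] [CompleteSpace E] {fa fb : E} {f f' : ℝ → E} (hab : a < b)
    (hderiv : ∀ x ∈ Ioo a b, HasDerivAt f (f' x) x) (hf' : IntegrableOn f' (Ioo a b))
    (ha : Tendsto f (𝓝[>] a) (𝓝 fa)) (hb : Tendsto f (𝓝[<] b) (𝓝 fb)) :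
    ∫ x in Ioo a b, f' x = fb - fa := by
  rw [← integral_Ioc_eq_integral_Ioo, ← intervalIntegral.integral_of_le hab.le]
  exact intervalIntegral.integral_eq_sub_of_hasDerivAt_of_tendsto hab hderiv
    ((intervalIntegrable_iff_integrableOn_Ioo_of_le hab.le).2 hf') ha hb

lemma setLIntegral_ofReal {s : Set ℝ} (hs : MeasurableSet s) {f : ℝ → ℝ} (hf : IntegrableOn f s)
    (hf₀ : ∀ x ∈ s, 0 ≤ f x) :
    ∫⁻ x in s, ENNReal.ofReal (f x) = ENNReal.ofReal (∫ x in s, f x) :=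
  (ofReal_integral_eq_lintegral_ofReal hf ((ae_restrict_iff' hs).2 (.of_forall hf₀))).symm

lemma lintegral_Ioo_of_hasDerivAt_of_nonneg {a b fa fb : ℝ} {f f' : ℝ → ℝ} (hab : a < b)
    (hderiv : ∀ x ∈ Ioo a b, HasDerivAt f (f' x) x) (hf' : ∀ x ∈ Ioo a b, 0 ≤ f' x)
    (ha : Tendsto f (𝓝[>] a) (𝓝 fa)) (hb : Tendsto f (𝓝[<] b) (𝓝 fb)) :
    ∫⁻ x in Ioo a b, ENNReal.ofReal (f' x) = ENNReal.ofReal (fb - fa) := by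
  have hint := integrableOn_Ioo_of_hasDerivAt_of_nonneg hderiv hf' ha hb
  rw [setLIntegral_ofReal measurableSet_Ioo hint hf',
    integral_Ioo_of_hasDerivAt_of_tendsto hab hderiv hint ha hb]

lemma eq_of_hasDerivAt_zero_of_tendsto {E : Type*} [NormedAddCommGroup E] [NormedSpace ℝ E]
    [CompleteSpace E] {a b : ℝ} {l : E} {f : ℝ → E} (hf : ContinuousOn f (Ioc a b))
    (hderiv : ∀ x ∈ Ioo a b, HasDerivAt f 0 x) (ha : Tendsto f (𝓝[>] a) (𝓝 l)) {x : ℝ}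
    (hx : x ∈ Ioc a b) : f x = l := by
  have hleft : Tendsto f (𝓝[<] x) (𝓝 (f x)) :=
    (hf x hx).mono_of_mem_nhdsWithin
      (mem_of_superset (Ioo_mem_nhdsLT hx.1) fun y hy => ⟨hy.1, hy.2.le.trans hx.2⟩)
  have h := integral_Ioo_of_hasDerivAt_of_tendsto hx.1
    (fun y hy => hderiv y ⟨hy.1, hy.2.trans_le hx.2⟩) integrableOn_zero ha hleft
  rw [integral_zero] at h
  exact (sub_eq_zero.1 h.symm)

lemma image_exp_neg_Ioi_zero : (fun y : ℝ => Real.exp (-y)) '' Ioi 0 = Ioo 0 1 := by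
  ext x
  refine ⟨?_, fun hx => ⟨-Real.log x, ?_, ?_⟩⟩
  · rintro ⟨y, hy, rfl⟩
    exact ⟨Real.exp_pos _, Real.exp_lt_one_iff.2 (neg_lt_zero.2 hy)⟩
  · exact neg_pos.2 (Real.log_neg hx.1 hx.2)
  · simp only [neg_neg, Real.exp_log hx.1]

lemma exp_neg_smul_rpow_mul_neg_log_pow (s : ℝ) (k : ℕ) (y : ℝ) :
    |-Real.exp (-y)| • (Real.exp (-y) ^ s * (-Real.log (Real.exp (-y))) ^ k) =
      y ^ ((k : ℝ) + 1 - 1) * Real.exp (-((s + 1) * y)) := by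
  rw [abs_neg, Real.abs_exp, Real.log_exp, neg_neg, ← Real.exp_mul, add_sub_cancel_right,
    Real.rpow_natCast, smul_eq_mul, ← mul_assoc, ← Real.exp_add, mul_comm]
  ring_nf

lemma hasDerivWithinAt_exp_neg (s : Set ℝ) (y : ℝ) :
    HasDerivWithinAt (fun y : ℝ => Real.exp (-y)) (-Real.exp (-y)) s y := by
  simpa using (hasDerivAt_neg y).exp.hasDerivWithinAt

lemma injOn_exp_neg (s : Set ℝ) : InjOn (fun y : ℝ => Real.exp (-y)) s :=
  fun _ _ _ _ h => neg_injective (Real.exp_injective h)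

lemma integrableOn_rpow_mul_neg_log_pow {s : ℝ} (hs : -1 < s) (k : ℕ) :
    IntegrableOn (fun x : ℝ => x ^ s * (-Real.log x) ^ k) (Ioo 0 1) := by
  rw [← image_exp_neg_Ioi_zero, integrableOn_image_iff_integrableOn_abs_deriv_smul
    measurableSet_Ioi (fun y _ => hasDerivWithinAt_exp_neg _ y) (injOn_exp_neg _)]
  simp only [exp_neg_smul_rpow_mul_neg_log_pow]
  have hk : (-1 : ℝ) < k := neg_one_lt_zero.trans_le k.cast_nonneg
  have hs' : 0 < s + 1 := by linarith
  simpa only [Real.rpow_one, neg_mul, add_sub_cancel_right] using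
    integrableOn_rpow_mul_exp_neg_mul_rpow hk one_pos hs'

lemma integral_rpow_mul_neg_log_pow {s : ℝ} (hs : -1 < s) (k : ℕ) :
    ∫ x in Ioo (0 : ℝ) 1, x ^ s * (-Real.log x) ^ k =
      (k.factorial : ℝ) / (s + 1) ^ (k + 1) := by
  rw [← image_exp_neg_Ioi_zero, integral_image_eq_integral_abs_deriv_smul measurableSet_Ioi
    (fun y _ => hasDerivWithinAt_exp_neg _ y) (injOn_exp_neg _)]
  simp only [exp_neg_smul_rpow_mul_neg_log_pow]
  rw [Real.integral_rpow_mul_exp_neg_mul_Ioi (by positivity) (by linarith),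
    Real.Gamma_nat_eq_factorial, ← Nat.cast_add_one k, Real.rpow_natCast, one_div,
    inv_pow, inv_mul_eq_div]

lemma integrableOn_pow_mul_neg_log_pow (n k : ℕ) :
    IntegrableOn (fun x : ℝ => x ^ n * (-Real.log x) ^ k) (Ioo 0 1) := by
  simpa only [Real.rpow_natCast] using
    integrableOn_rpow_mul_neg_log_pow (s := n) (neg_one_lt_zero.trans_le n.cast_nonneg) k

lemma integral_pow_mul_neg_log_pow (n k : ℕ) :
    ∫ x in Ioo (0 : ℝ) 1, x ^ n * (-Real.log x) ^ k =
      (k.factorial : ℝ) / ((n : ℝ) + 1) ^ (k + 1) := by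
  simpa only [Real.rpow_natCast] using
    integral_rpow_mul_neg_log_pow (s := n) (neg_one_lt_zero.trans_le n.cast_nonneg) k

lemma integrableOn_div_one_add_sq {f : ℝ → ℝ} {s : Set ℝ} (hf : IntegrableOn f s) :
    IntegrableOn (fun x => f x / (1 + x ^ 2)) s := by
  refine (Integrable.bdd_mul (c := 1) (f := fun x : ℝ => (1 + x ^ 2)⁻¹) hf (by fun_prop)
    (.of_forall fun x => ?_)).congr (.of_forall fun x => by ring)
  rw [Real.norm_of_nonneg (by positivity)]
  exact inv_le_one_of_one_le₀ (by nlinarith [sq_nonneg x])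

lemma integrableOn_neg_log_pow_div_one_add_sq (k : ℕ) :
    IntegrableOn (fun x : ℝ => (-Real.log x) ^ k / (1 + x ^ 2)) (Ioo 0 1) :=
  integrableOn_div_one_add_sq (by simpa using integrableOn_pow_mul_neg_log_pow 0 k)

lemma integral_neg_log_pow_div_one_add_sq {k : ℕ} (hk : 0 < k) :
    ∫ x in Ioo (0 : ℝ) 1, (-Real.log x) ^ k / (1 + x ^ 2) =
      k.factorial * dirichletBeta (k + 1) := by
  have hint (j : ℕ) : ∫ x in Ioo (0 : ℝ) 1, (-1) ^ j * (x ^ (2 * j) * (-Real.log x) ^ k) =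
      k.factorial * ((-1) ^ j / (2 * (j : ℝ) + 1) ^ (k + 1)) := by
    rw [integral_const_mul, integral_pow_mul_neg_log_pow]
    push_cast
    ring
  have hnorm (j : ℕ) : ∫ x in Ioo (0 : ℝ) 1, ‖(-1) ^ j * (x ^ (2 * j) * (-Real.log x) ^ k)‖ =
      k.factorial * ‖(-1 : ℝ) ^ j / (2 * (j : ℝ) + 1) ^ (k + 1)‖ := by
    rw [norm_div, norm_pow, norm_neg, norm_one, one_pow, Real.norm_of_nonneg (by positivity),
      mul_one_div, setIntegral_congr_fun (g := fun x => x ^ (2 * j) * (-Real.log x) ^ k)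
      measurableSet_Ioo fun x hx => ?_, integral_pow_mul_neg_log_pow]
    · push_cast
      rfl
    · have hlog := neg_log_nonneg hx
      have hx₀ := hx.1
      rw [norm_mul, norm_pow, norm_neg, norm_one, one_pow, one_mul]
      exact Real.norm_of_nonneg (by positivity)
  have hsum : HasSum (fun j => ∫ x in Ioo (0 : ℝ) 1, (-1) ^ j * (x ^ (2 * j) * (-Real.log x) ^ k))
      (∫ x in Ioo (0 : ℝ) 1, ∑' j : ℕ, (-1) ^ j * (x ^ (2 * j) * (-Real.log x) ^ k)) := by
    refine hasSum_integral_of_summable_integral_norm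
      (fun j => (integrableOn_pow_mul_neg_log_pow (2 * j) k).const_mul _) ?_
    simp only [hnorm]
    exact (summable_dirichletBeta (by omega)).norm.mul_left _
  rw [dirichletBeta, ← tsum_mul_left, ← tsum_congr hint, hsum.tsum_eq]
  refine setIntegral_congr_fun measurableSet_Ioo fun x hx => ?_
  have hx2 : ‖-x ^ 2‖ < 1 := by
    rw [norm_neg, norm_pow, Real.norm_of_nonneg hx.1.le]
    exact pow_lt_one₀ hx.1.le hx.2 two_ne_zero
  have hgeom := (hasSum_geometric_of_norm_lt_one hx2).mul_right ((-Real.log x) ^ k)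
  rw [sub_neg_eq_add, inv_mul_eq_div] at hgeom
  rw [← hgeom.tsum_eq]
  exact tsum_congr fun j => by rw [neg_pow, pow_mul]; ring

/-! ### The double series as a double integral -/

lemma hasDerivAt_one_sub_sq_pow (m : ℕ) (x : ℝ) :
    HasDerivAt (fun x : ℝ => (1 - x ^ 2) ^ (m + 1)) (-(2 * (m + 1) * x * (1 - x ^ 2) ^ m)) x := by
  refine (((hasDerivAt_pow 2 x).const_sub 1).fun_pow (m + 1)).congr_deriv ?_
  push_cast [Nat.add_sub_cancel]
  ring

lemma integral_one_sub_sq_pow_succ (m : ℕ) :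
    (2 * (m : ℝ) + 3) * ∫ x in (0 : ℝ)..1, (1 - x ^ 2) ^ (m + 1) =
      2 * ((m : ℝ) + 1) * ∫ x in (0 : ℝ)..1, (1 - x ^ 2) ^ m := by
  have hderiv (x : ℝ) : HasDerivAt (fun x : ℝ => x * (1 - x ^ 2) ^ (m + 1))
      ((2 * m + 3) * (1 - x ^ 2) ^ (m + 1) - 2 * (m + 1) * (1 - x ^ 2) ^ m) x :=
    ((hasDerivAt_id' x).mul (hasDerivAt_one_sub_sq_pow m x)).congr_deriv (by ring)
  have h := intervalIntegral.integral_eq_sub_of_hasDerivAt (a := 0) (b := 1)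
    (fun x _ => hderiv x) (Continuous.intervalIntegrable (by fun_prop) _ _)
  rw [intervalIntegral.integral_sub (Continuous.intervalIntegrable (by fun_prop) _ _)
    (Continuous.intervalIntegrable (by fun_prop) _ _), intervalIntegral.integral_const_mul,
    intervalIntegral.integral_const_mul] at h
  simp only [one_pow, sub_self, zero_mul, ne_eq, Nat.succ_ne_zero, not_false_eq_true, zero_pow,
    mul_zero] at h
  exact sub_eq_zero.1 h

lemma integral_one_sub_sq_pow (m : ℕ) :
    ∫ x in (0 : ℝ)..1, (1 - x ^ 2) ^ m =
      (4 : ℝ) ^ (m + 1) / (2 * (m + 1) * (m + 1).centralBinom) := by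
  induction m with
  | zero => norm_num [Nat.centralBinom]
  | succ m ih =>
    have hbinom : ((m : ℝ) + 1 + 1) * (m + 1 + 1).centralBinom =
        2 * (2 * ((m : ℝ) + 1) + 1) * (m + 1).centralBinom :=
      mod_cast Nat.succ_mul_centralBinom_succ (m + 1)
    have h₁ : ((m + 1).centralBinom : ℝ) ≠ 0 := Nat.cast_ne_zero.2 (Nat.centralBinom_ne_zero _)
    have h₂ : (2 * (m : ℝ) + 3) ≠ 0 := by positivity
    refine mul_left_cancel₀ h₂ ?_
    rw [integral_one_sub_sq_pow_succ, ih, Nat.cast_add_one, mul_assoc 2 ((m : ℝ) + 1 + 1), hbinom]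
    field_simp
    ring

lemma intervalIntegrable_mul_neg_log {f : ℝ → ℝ} (hf : Continuous f) :
    IntervalIntegrable (fun x => f x * -Real.log x) volume 0 1 :=
  intervalIntegral.intervalIntegrable_log'.neg.continuousOn_mul hf.continuousOn

lemma integral_one_sub_sq_pow_succ_mul_neg_log (m : ℕ) :
    (2 * (m : ℝ) + 3) * ∫ x in (0 : ℝ)..1, (1 - x ^ 2) ^ (m + 1) * -Real.log x =
      2 * ((m : ℝ) + 1) * (∫ x in (0 : ℝ)..1, (1 - x ^ 2) ^ m * -Real.log x) +
        ∫ x in (0 : ℝ)..1, (1 - x ^ 2) ^ (m + 1) := by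
  have hderiv (x : ℝ) (hx : x ∈ Ioo (0 : ℝ) 1) :
      HasDerivAt (fun x : ℝ => -(x * Real.log x * (1 - x ^ 2) ^ (m + 1)))
        ((2 * m + 3) * ((1 - x ^ 2) ^ (m + 1) * -Real.log x) -
          (2 * (m + 1) * ((1 - x ^ 2) ^ m * -Real.log x) + (1 - x ^ 2) ^ (m + 1))) x := by
    have hlog := Real.hasDerivAt_mul_log hx.1.ne'
    exact ((hlog.mul (hasDerivAt_one_sub_sq_pow m x)).neg).congr_deriv (by ring)
  have hlog (k : ℕ) := intervalIntegrable_mul_neg_log (f := fun x => (1 - x ^ 2) ^ k) (by fun_prop)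
  have hpow : IntervalIntegrable (fun x : ℝ => (1 - x ^ 2) ^ (m + 1)) volume 0 1 :=
    Continuous.intervalIntegrable (by fun_prop) _ _
  have hright := ((hlog m).const_mul (2 * ((m : ℝ) + 1))).add hpow
  have hcont : Continuous fun x : ℝ => -(x * Real.log x * (1 - x ^ 2) ^ (m + 1)) :=
    (Real.continuous_mul_log.mul (by fun_prop)).neg
  have h := intervalIntegral.integral_eq_sub_of_hasDerivAt_of_le zero_le_one
    hcont.continuousOn hderiv (((hlog (m + 1)).const_mul _).sub hright)
  rw [intervalIntegral.integral_sub ((hlog (m + 1)).const_mul _) hright,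
    intervalIntegral.integral_add ((hlog m).const_mul _) hpow,
    intervalIntegral.integral_const_mul, intervalIntegral.integral_const_mul] at h
  simp only [Real.log_one, mul_zero, zero_mul, neg_zero, sub_self] at h
  exact sub_eq_zero.1 h

/-- The sum `1 + 1/3 + ⋯ + 1/(2n - 1)` of the first `n` odd reciprocals, which is the inner sum of
the double series. -/
noncomputable def oddHarmonic (n : ℕ) : ℝ := ∑ k ∈ Finset.range n, 1 / (2 * (k : ℝ) + 1)

lemma oddHarmonic_nonneg (n : ℕ) : 0 ≤ oddHarmonic n :=
  Finset.sum_nonneg fun k _ => by positivity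

lemma oddHarmonic_succ (n : ℕ) : oddHarmonic (n + 1) = oddHarmonic n + 1 / (2 * n + 1) :=
  Finset.sum_range_succ _ n

lemma integral_one_sub_sq_pow_mul_neg_log (m : ℕ) :
    ∫ x in (0 : ℝ)..1, (1 - x ^ 2) ^ m * -Real.log x =
      (∫ x in (0 : ℝ)..1, (1 - x ^ 2) ^ m) * oddHarmonic (m + 1) := by
  induction m with
  | zero => simp [oddHarmonic]
  | succ m ih =>
    have h : (2 * (m : ℝ) + 3) ≠ 0 := by positivity
    refine mul_left_cancel₀ h ?_
    rw [integral_one_sub_sq_pow_succ_mul_neg_log, ih, ← mul_assoc, ← integral_one_sub_sq_pow_succ,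
      oddHarmonic_succ (m + 1)]
    push_cast
    have h' : 2 * ((m : ℝ) + 1) + 1 = 2 * m + 3 := by ring
    rw [h']
    field_simp

lemma one_sub_sq_mem {x : ℝ} (hx : x ∈ Ioo (0 : ℝ) 1) : 1 - x ^ 2 ∈ Ioo (0 : ℝ) 1 :=
  ⟨sub_pos.2 (pow_lt_one₀ hx.1.le hx.2 two_ne_zero), sub_lt_self 1 (pow_pos hx.1 2)⟩

lemma lintegral_one_sub_sq_pow_mul_neg_log (m : ℕ) :
    ∫⁻ x in Ioo (0 : ℝ) 1, ENNReal.ofReal ((1 - x ^ 2) ^ m * -Real.log x) =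
      ENNReal.ofReal
        (4 ^ (m + 1) / (2 * (m + 1) * (m + 1).centralBinom) * oddHarmonic (m + 1)) := by
  have hint := intervalIntegrable_mul_neg_log (f := fun x => (1 - x ^ 2) ^ m) (by fun_prop)
  rw [setLIntegral_ofReal measurableSet_Ioo
    ((intervalIntegrable_iff_integrableOn_Ioo_of_le zero_le_one).1 hint)
    (fun x hx => mul_nonneg (pow_nonneg (one_sub_sq_mem hx).1.le m) (neg_log_nonneg hx)),
    ← integral_Ioc_eq_integral_Ioo, ← intervalIntegral.integral_of_le zero_le_one,
    integral_one_sub_sq_pow_mul_neg_log, integral_one_sub_sq_pow]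

lemma one_sub_log_nonneg {x : ℝ} (hx : x ∈ Ioo (0 : ℝ) 1) : 0 ≤ 1 - Real.log x := by
  linarith [neg_log_nonneg hx]

lemma lintegral_pow_mul_one_sub_log (m : ℕ) :
    ∫⁻ t in Ioo (0 : ℝ) 1, ENNReal.ofReal (t ^ (2 * m) * (1 - Real.log t)) =
      ENNReal.ofReal (2 * (m + 1) / (2 * m + 1) ^ 2) := by
  have hsplit : (fun t : ℝ => t ^ (2 * m) * (1 - Real.log t)) =
      fun t => t ^ (2 * m) * (-Real.log t) ^ 0 + t ^ (2 * m) * (-Real.log t) ^ 1 := by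
    ext t
    ring
  have h₀ := integrableOn_pow_mul_neg_log_pow (2 * m) 0
  have h₁ := integrableOn_pow_mul_neg_log_pow (2 * m) 1
  rw [setLIntegral_ofReal measurableSet_Ioo (by rw [hsplit]; exact h₀.add h₁)
    fun t ht => mul_nonneg (pow_nonneg ht.1.le _) (one_sub_log_nonneg ht), hsplit,
    integral_add h₀ h₁, integral_pow_mul_neg_log_pow, integral_pow_mul_neg_log_pow]
  push_cast [Nat.factorial]
  congr 1
  field_simp
  ring

/-- The summand of the double series, at `n₁ = n` and `n₂ = k`. -/
noncomputable def summand (n k : ℕ) : ℝ :=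
  (4 : ℝ) ^ n / ((Nat.choose (2 * n) n : ℝ) * (2 * (n : ℝ) - 1) ^ 2 * (2 * (k : ℝ) + 1))

lemma summand_nonneg (n k : ℕ) : 0 ≤ summand n k := by
  unfold summand
  positivity

lemma sum_range_summand (m : ℕ) :
    ∑ k ∈ Finset.range (m + 1), summand (m + 1) k =
      4 ^ (m + 1) / (2 * (m + 1) * (m + 1).centralBinom) * oddHarmonic (m + 1) *
        (2 * (m + 1) / (2 * m + 1) ^ 2) := by
  rw [oddHarmonic, Finset.mul_sum, Finset.sum_mul]
  refine Finset.sum_congr rfl fun k _ => ?_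
  have h₁ : ((m + 1).centralBinom : ℝ) ≠ 0 := Nat.cast_ne_zero.2 (Nat.centralBinom_ne_zero _)
  have h₂ : 2 * ((m : ℝ) + 1) - 1 = 2 * m + 1 := by ring
  rw [summand, ← Nat.centralBinom_eq_two_mul_choose, Nat.cast_add_one, h₂]
  field_simp

lemma tsum_ofReal_subtype_lt {f : ℕ → ℕ → ℝ} (hf : ∀ n k, 0 ≤ f n k) :
    ∑' p : {p : ℕ × ℕ // p.2 < p.1}, ENNReal.ofReal (f p.1.1 p.1.2) =
      ∑' m : ℕ, ENNReal.ofReal (∑ k ∈ Finset.range (m + 1), f (m + 1) k) := by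
  let s : Set (ℕ × ℕ) := {p | p.2 < p.1}
  have hrow (n : ℕ) : ∑' k, s.indicator (fun p => ENNReal.ofReal (f p.1 p.2)) (n, k) =
      ENNReal.ofReal (∑ k ∈ Finset.range n, f n k) := by
    rw [ENNReal.ofReal_sum_of_nonneg fun k _ => hf n k, tsum_eq_sum (s := Finset.range n)]
    · exact Finset.sum_congr rfl fun k hk => indicator_of_mem (s := s) (Finset.mem_range.1 hk) _
    · exact fun k hk => indicator_of_notMem (s := s) (mt Finset.mem_range.2 hk) _
  refine (tsum_subtype s fun p => ENNReal.ofReal (f p.1 p.2)).trans ?_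
  rw [ENNReal.tsum_prod', tsum_eq_zero_add' ENNReal.summable, hrow 0, Finset.range_zero,
    Finset.sum_empty, ENNReal.ofReal_zero, zero_add]
  exact tsum_congr fun m => hrow (m + 1)

/-- The sum of the geometric series `∑ t^(2m) (1 - x²)^m`, by which the double series becomes a
double integral over the unit square. -/
noncomputable def kernel (t x : ℝ) : ℝ := (1 - t ^ 2 * (1 - x ^ 2))⁻¹

lemma measurable_kernel : Measurable fun p : ℝ × ℝ => kernel p.1 p.2 := by
  unfold kernel
  fun_prop

lemma sq_mul_one_sub_sq_mem {t x : ℝ} (ht : t ∈ Ioo (0 : ℝ) 1) (hx : x ∈ Ioo (0 : ℝ) 1) :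
    t ^ 2 * (1 - x ^ 2) ∈ Ioo (0 : ℝ) 1 :=
  ⟨mul_pos (pow_pos ht.1 2) (one_sub_sq_mem hx).1,
    mul_lt_one_of_nonneg_of_lt_one_left (sq_nonneg t) (pow_lt_one₀ ht.1.le ht.2 two_ne_zero)
      (one_sub_sq_mem hx).2.le⟩

lemma kernel_nonneg {t x : ℝ} (ht : t ∈ Ioo (0 : ℝ) 1) (hx : x ∈ Ioo (0 : ℝ) 1) :
    0 ≤ kernel t x :=
  inv_nonneg.2 (sub_nonneg.2 (sq_mul_one_sub_sq_mem ht hx).2.le)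

lemma tsum_ofReal_mul_eq_kernel {t x : ℝ} (ht : t ∈ Ioo (0 : ℝ) 1) (hx : x ∈ Ioo (0 : ℝ) 1) :
    ∑' m : ℕ, ENNReal.ofReal ((1 - x ^ 2) ^ m * -Real.log x) *
      ENNReal.ofReal (t ^ (2 * m) * (1 - Real.log t)) =
        ENNReal.ofReal (-Real.log x * (1 - Real.log t) * kernel t x) := by
  have hq := sq_mul_one_sub_sq_mem ht hx
  have hx' := (one_sub_sq_mem hx).1.le
  have hlogx := neg_log_nonneg hx
  have hlogt := one_sub_log_nonneg ht
  have hgeom := (hasSum_geometric_of_lt_one hq.1.le hq.2).mul_left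
    (-Real.log x * (1 - Real.log t))
  rw [kernel, ← hgeom.tsum_eq, ENNReal.ofReal_tsum_of_nonneg
    (fun m => mul_nonneg (mul_nonneg hlogx hlogt) (pow_nonneg hq.1.le m)) hgeom.summable]
  refine tsum_congr fun m => ?_
  rw [← ENNReal.ofReal_mul (mul_nonneg (pow_nonneg hx' m) hlogx), mul_pow, pow_mul]
  congr 1
  ring

lemma tsum_summand_eq_lintegral :
    ∑' p : {p : ℕ × ℕ // p.2 < p.1}, ENNReal.ofReal (summand p.1.1 p.1.2) =
      ∫⁻ t in Ioo (0 : ℝ) 1, ∫⁻ x in Ioo (0 : ℝ) 1,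
        ENNReal.ofReal (-Real.log x * (1 - Real.log t) * kernel t x) := by
  have hinner (t : ℝ) (ht : t ∈ Ioo (0 : ℝ) 1) :
      ∫⁻ x in Ioo (0 : ℝ) 1, ENNReal.ofReal (-Real.log x * (1 - Real.log t) * kernel t x) =
        ∑' m : ℕ, ENNReal.ofReal (4 ^ (m + 1) / (2 * (m + 1) * (m + 1).centralBinom) *
          oddHarmonic (m + 1)) * ENNReal.ofReal (t ^ (2 * m) * (1 - Real.log t)) := by
    rw [setLIntegral_congr_fun measurableSet_Ioo
      fun x hx => (tsum_ofReal_mul_eq_kernel ht hx).symm, lintegral_tsum fun m => by fun_prop]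
    refine tsum_congr fun m => ?_
    rw [lintegral_mul_const _ (by fun_prop), lintegral_one_sub_sq_pow_mul_neg_log]
  rw [tsum_ofReal_subtype_lt summand_nonneg, setLIntegral_congr_fun measurableSet_Ioo hinner,
    lintegral_tsum fun m => by fun_prop]
  refine tsum_congr fun m => ?_
  rw [lintegral_const_mul _ (by fun_prop), lintegral_pow_mul_one_sub_log, sum_range_summand,
    ENNReal.ofReal_mul (mul_nonneg (by positivity) (oddHarmonic_nonneg _))]

lemma lintegral_kernel_add :
    (∫⁻ t in Ioo (0 : ℝ) 1, ∫⁻ x in Ioo (0 : ℝ) 1,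
        ENNReal.ofReal (-Real.log x * (1 - Real.log t) * kernel t x)) +
      (∫⁻ t in Ioo (0 : ℝ) 1, ∫⁻ x in Ioo (0 : ℝ) 1,
        ENNReal.ofReal (-Real.log t * (1 - Real.log t) * kernel t x)) =
      ∫⁻ t in Ioo (0 : ℝ) 1, ∫⁻ x in Ioo (0 : ℝ) 1,
        ENNReal.ofReal (-Real.log (t * x) * (1 - Real.log t) * kernel t x) := by
  have hmeas := measurable_kernel
  rw [← lintegral_add_left (Measurable.lintegral_prod_right (by fun_prop))]
  refine setLIntegral_congr_fun measurableSet_Ioo fun t ht => ?_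
  have hmeas_t : Measurable (kernel t) := hmeas.comp (measurable_prodMk_left (x := t))
  rw [← lintegral_add_left (by fun_prop)]
  refine setLIntegral_congr_fun measurableSet_Ioo fun x hx => ?_
  have hk := kernel_nonneg ht hx
  have hlogx := neg_log_nonneg hx
  have hlogt := neg_log_nonneg ht
  have hlogt' := one_sub_log_nonneg ht
  rw [← ENNReal.ofReal_add (by positivity) (by positivity), Real.log_mul ht.1.ne' hx.1.ne']
  congr 1
  ring

lemma image_inv_Ioo_zero_one : (fun y : ℝ => y⁻¹) '' Ioo 0 1 = Ioi 1 := by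
  ext t
  refine ⟨?_, fun ht => ⟨t⁻¹, ⟨?_, inv_lt_one_of_one_lt₀ ht⟩, inv_inv t⟩⟩
  · rintro ⟨u, hu, rfl⟩
    exact (one_lt_inv₀ hu.1).2 hu.2
  · exact inv_pos.2 (zero_lt_one.trans ht)

lemma hasDerivWithinAt_inv_Ioo {y : ℝ} (hy : y ∈ Ioo (0 : ℝ) 1) :
    HasDerivWithinAt (fun y : ℝ => y⁻¹) (-(y ^ 2)⁻¹) (Ioo 0 1) y :=
  (hasDerivAt_inv hy.1.ne').hasDerivWithinAt

lemma abs_neg_inv_sq_smul_div (g : ℝ → ℝ) {y : ℝ} (hy : y ∈ Ioo (0 : ℝ) 1) :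
    |-(y ^ 2)⁻¹| • (g y⁻¹ / (1 + y⁻¹ ^ 2)) = g y⁻¹ / (1 + y ^ 2) := by
  have hy₀ := hy.1.ne'
  rw [abs_neg, abs_of_nonneg (by positivity), smul_eq_mul]
  field_simp
  ring

lemma integrableOn_Ioi_one_div_one_add_sq_iff (g : ℝ → ℝ) :
    IntegrableOn (fun y => g y / (1 + y ^ 2)) (Ioi 1) ↔
      IntegrableOn (fun y => g y⁻¹ / (1 + y ^ 2)) (Ioo 0 1) := by
  rw [← image_inv_Ioo_zero_one, integrableOn_image_iff_integrableOn_abs_deriv_smul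
    measurableSet_Ioo (fun y hy => hasDerivWithinAt_inv_Ioo hy) inv_injective.injOn]
  exact integrableOn_congr_fun (fun y hy => abs_neg_inv_sq_smul_div g hy) measurableSet_Ioo

lemma integral_Ioi_one_div_one_add_sq (g : ℝ → ℝ) :
    ∫ y in Ioi (1 : ℝ), g y / (1 + y ^ 2) = ∫ y in Ioo (0 : ℝ) 1, g y⁻¹ / (1 + y ^ 2) := by
  rw [← image_inv_Ioo_zero_one, integral_image_eq_integral_abs_deriv_smul
    measurableSet_Ioo (fun y hy => hasDerivWithinAt_inv_Ioo hy) inv_injective.injOn]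
  exact setIntegral_congr_fun measurableSet_Ioo fun y hy => abs_neg_inv_sq_smul_div g hy

lemma integrableOn_Ioi_zero_div_one_add_sq_iff (g : ℝ → ℝ) :
    IntegrableOn (fun y => g y / (1 + y ^ 2)) (Ioi 0) ↔
      IntegrableOn (fun y => g y / (1 + y ^ 2)) (Ioo 0 1) ∧
        IntegrableOn (fun y => g y⁻¹ / (1 + y ^ 2)) (Ioo 0 1) := by
  rw [← Ioc_union_Ioi_eq_Ioi (zero_le_one' ℝ), integrableOn_union,
    integrableOn_Ioc_iff_integrableOn_Ioo, integrableOn_Ioi_one_div_one_add_sq_iff]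

lemma integral_Ioi_zero_div_one_add_sq {g : ℝ → ℝ}
    (hg : IntegrableOn (fun y => g y / (1 + y ^ 2)) (Ioi 0)) :
    ∫ y in Ioi (0 : ℝ), g y / (1 + y ^ 2) =
      (∫ y in Ioo (0 : ℝ) 1, g y / (1 + y ^ 2)) + ∫ y in Ioo (0 : ℝ) 1, g y⁻¹ / (1 + y ^ 2) := by
  have h := (integrableOn_Ioi_zero_div_one_add_sq_iff g).1 hg
  rw [← integral_Ioi_one_div_one_add_sq, ← integral_Ioc_eq_integral_Ioo,
    ← Ioc_union_Ioi_eq_Ioi (zero_le_one' ℝ)]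
  exact setIntegral_union Ioc_disjoint_Ioi_same measurableSet_Ioi
    ((integrableOn_Ioc_iff_integrableOn_Ioo (by simp)).2 h.1)
    ((integrableOn_Ioi_one_div_one_add_sq_iff g).2 h.2)

lemma integrableOn_log_sq_div_one_add_sq :
    IntegrableOn (fun y : ℝ => Real.log y ^ 2 / (1 + y ^ 2)) (Ioi 0) := by
  rw [integrableOn_Ioi_zero_div_one_add_sq_iff fun y => Real.log y ^ 2]
  simp only [Real.log_inv, neg_sq, and_self]
  simpa only [neg_sq] using integrableOn_neg_log_pow_div_one_add_sq 2

lemma integral_log_sq_div_one_add_sq :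
    ∫ y in Ioi (0 : ℝ), Real.log y ^ 2 / (1 + y ^ 2) = π ^ 3 / 8 := by
  have h := integral_neg_log_pow_div_one_add_sq two_pos
  simp only [neg_sq] at h
  rw [integral_Ioi_zero_div_one_add_sq integrableOn_log_sq_div_one_add_sq]
  simp only [Real.log_inv, neg_sq]
  rw [h, dirichletBeta_three]
  push_cast [Nat.factorial]
  ring

lemma integrableOn_log_div_one_add_sq :
    IntegrableOn (fun y : ℝ => Real.log y / (1 + y ^ 2)) (Ioi 0) := by
  rw [integrableOn_Ioi_zero_div_one_add_sq_iff]
  have h := integrableOn_neg_log_pow_div_one_add_sq 1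
  simp only [pow_one] at h
  refine ⟨h.neg.congr_fun (fun y _ => ?_) measurableSet_Ioo, by simpa only [Real.log_inv] using h⟩
  simp only [Pi.neg_apply, neg_div, neg_neg]

lemma integral_log_div_one_add_sq :
    ∫ y in Ioi (0 : ℝ), Real.log y / (1 + y ^ 2) = 0 := by
  rw [integral_Ioi_zero_div_one_add_sq integrableOn_log_div_one_add_sq]
  simp only [Real.log_inv, neg_div, integral_neg, add_neg_cancel]

/-- The function `v log v / (1 + v²)`, whose primitive `logRatioPrimitive` makes
`(1 - log t) / (t (1 + y² - t²))` integrable in `t` without dilogarithms. -/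
noncomputable def logRatio (v : ℝ) : ℝ := v * Real.log v / (1 + v ^ 2)

/-- The primitive of `logRatio` vanishing at `0`. -/
noncomputable def logRatioPrimitive (y : ℝ) : ℝ := ∫ v in (0 : ℝ)..y, logRatio v

lemma continuous_logRatio : Continuous logRatio :=
  Real.continuous_mul_log.div (by fun_prop) fun v => by positivity

lemma hasDerivAt_logRatioPrimitive (y : ℝ) :
    HasDerivAt logRatioPrimitive (logRatio y) y :=
  (continuous_logRatio.integral_hasStrictDerivAt 0 y).hasDerivAt

lemma integral_mul_logRatio_mul {y : ℝ} (hy : y ≠ 0) :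
    ∫ r in Ioo (0 : ℝ) 1, y * logRatio (y * r) = logRatioPrimitive y := by
  rw [← integral_Ioc_eq_integral_Ioo, ← intervalIntegral.integral_of_le zero_le_one,
    intervalIntegral.integral_const_mul, intervalIntegral.integral_comp_mul_left _ hy, mul_zero,
    mul_one, smul_eq_mul, mul_inv_cancel_left₀ hy, logRatioPrimitive]

lemma abs_log_le_add_inv {x : ℝ} (hx : 0 < x) : |Real.log x| ≤ x + x⁻¹ := by
  have hinv := Real.log_le_self (inv_pos.2 hx).le
  rw [Real.log_inv] at hinv
  exact abs_le'.2 ⟨(Real.log_le_self hx.le).trans (le_add_of_nonneg_right (inv_pos.2 hx).le),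
    hinv.trans (le_add_of_nonneg_left hx.le)⟩

lemma abs_logRatio_sq_le {x : ℝ} (hx : 0 < x) : |logRatio (x ^ 2)| ≤ 4 * x⁻¹ := by
  have hlog : |Real.log (x ^ 2)| ≤ 2 * (x + x⁻¹) := by
    rw [Real.log_pow, abs_mul, Nat.cast_ofNat, abs_two]
    exact mul_le_mul_of_nonneg_left (abs_log_le_add_inv hx) two_pos.le
  calc |logRatio (x ^ 2)| = x ^ 2 * |Real.log (x ^ 2)| / (1 + (x ^ 2) ^ 2) := by
        rw [logRatio, abs_div, abs_mul, abs_of_pos (pow_pos hx 2),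
          abs_of_pos (by positivity : 0 < 1 + (x ^ 2) ^ 2)]
    _ ≤ x ^ 2 * (2 * (x + x⁻¹)) / (1 + (x ^ 2) ^ 2) := by gcongr
    _ ≤ 4 * x⁻¹ := by
        rw [div_le_iff₀ (by positivity)]
        field_simp
        nlinarith [sq_nonneg (x ^ 2 - 1)]

lemma integrableOn_abs_log_mul_sqrt_div_one_add_sq :
    IntegrableOn (fun y : ℝ => |Real.log y| * √y / (1 + y ^ 2)) (Ioi 0) := by
  have hpow {s : ℝ} (hs : -1 < s) :
      IntegrableOn (fun y : ℝ => y ^ s * (-Real.log y) ^ 1 / (1 + y ^ 2)) (Ioo 0 1) :=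
    integrableOn_div_one_add_sq (integrableOn_rpow_mul_neg_log_pow hs 1)
  rw [integrableOn_Ioi_zero_div_one_add_sq_iff fun y => |Real.log y| * √y]
  refine ⟨(hpow (s := 1 / 2) (by norm_num)).congr_fun (fun y hy => ?_) measurableSet_Ioo,
    (hpow (s := -(1 / 2)) (by norm_num)).congr_fun (fun y hy => ?_) measurableSet_Ioo⟩
  · dsimp only
    rw [← abs_neg, abs_of_nonneg (neg_log_nonneg hy), Real.sqrt_eq_rpow, pow_one, mul_comm]
  · dsimp only
    rw [Real.log_inv, abs_of_nonneg (neg_log_nonneg hy), Real.sqrt_inv, Real.sqrt_eq_rpow,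
      Real.rpow_neg hy.1.le, pow_one, mul_comm]

lemma abs_log_div_mul_logRatio_le {y r : ℝ} (hy : 0 < y) (hr : 0 < r) :
    ‖Real.log y / (1 + y ^ 2) * (y * logRatio (y * r))‖ ≤
      4 * (|Real.log y| * √y / (1 + y ^ 2) * r ^ (-(1 / 2) : ℝ)) := by
  have hratio := abs_logRatio_sq_le (Real.sqrt_pos.2 (mul_pos hy hr))
  rw [Real.sq_sqrt (mul_pos hy hr).le, Real.sqrt_mul hy.le] at hratio
  calc ‖Real.log y / (1 + y ^ 2) * (y * logRatio (y * r))‖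
      = |Real.log y| / (1 + y ^ 2) * (y * |logRatio (y * r)|) := by
        rw [Real.norm_eq_abs, abs_mul, abs_div, abs_mul, abs_of_pos hy,
          abs_of_pos (by positivity : 0 < 1 + y ^ 2)]
    _ ≤ |Real.log y| / (1 + y ^ 2) * (y * (4 * (√y * √r)⁻¹)) := by gcongr
    _ = 4 * (|Real.log y| * (y / √y) / (1 + y ^ 2) * (√r)⁻¹) := by
        rw [mul_inv]
        ring
    _ = 4 * (|Real.log y| * √y / (1 + y ^ 2) * r ^ (-(1 / 2) : ℝ)) := by
        rw [Real.div_sqrt, Real.rpow_neg hr.le, ← Real.sqrt_eq_rpow]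

lemma integrable_log_div_mul_logRatio :
    Integrable (Function.uncurry fun y r : ℝ => Real.log y / (1 + y ^ 2) * (y * logRatio (y * r)))
      ((volume.restrict (Ioi 0)).prod (volume.restrict (Ioo 0 1))) := by
  have hr : IntegrableOn (fun r : ℝ => r ^ (-(1 / 2) : ℝ)) (Ioo 0 1) := by
    simpa only [pow_zero, mul_one] using
      integrableOn_rpow_mul_neg_log_pow (s := -(1 / 2)) (by norm_num) 0
  refine ((integrableOn_abs_log_mul_sqrt_div_one_add_sq.mul_prod hr).const_mul 4).mono'
    (Measurable.aestronglyMeasurable ?_) ?_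
  · have := continuous_logRatio.measurable
    unfold Function.uncurry
    fun_prop
  · rw [Measure.prod_restrict]
    filter_upwards [ae_restrict_mem (measurableSet_Ioi.prod measurableSet_Ioo)] with z hz
    exact abs_log_div_mul_logRatio_le hz.1 hz.2.1

-- Partial fractions in `y²`, using `log (y r) = log y + log r`.
lemma log_div_mul_logRatio_eq {y r : ℝ} (hy : 0 < y) (hr : r ∈ Ioo (0 : ℝ) 1) :
    Real.log y / (1 + y ^ 2) * (y * logRatio (y * r)) =
      r / (1 - r ^ 2) *
        ((Real.log (r * y) ^ 2 / (1 + (r * y) ^ 2) -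
            Real.log r * (Real.log (r * y) / (1 + (r * y) ^ 2))) -
          (Real.log y ^ 2 / (1 + y ^ 2) + Real.log r * (Real.log y / (1 + y ^ 2)))) := by
  have hr' := (one_sub_sq_mem hr).1.ne'
  rw [logRatio, mul_comm y r, Real.log_mul hr.1.ne' hy.ne']
  field_simp
  ring

lemma integral_log_div_mul_logRatio {r : ℝ} (hr : r ∈ Ioo (0 : ℝ) 1) :
    ∫ y in Ioi (0 : ℝ), Real.log y / (1 + y ^ 2) * (y * logRatio (y * r)) =
      π ^ 3 / 8 * (1 + r)⁻¹ := by
  have hsq := integrableOn_log_sq_div_one_add_sq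
  have hlog := integrableOn_log_div_one_add_sq.const_mul (Real.log r)
  have hscaled : IntegrableOn (fun y => Real.log (r * y) ^ 2 / (1 + (r * y) ^ 2) -
      Real.log r * (Real.log (r * y) / (1 + (r * y) ^ 2))) (Ioi 0) := by
    rw [integrableOn_Ioi_comp_mul_left_iff (fun z => Real.log z ^ 2 / (1 + z ^ 2) -
      Real.log r * (Real.log z / (1 + z ^ 2))) 0 hr.1, mul_zero]
    exact hsq.sub hlog
  have hsum : IntegrableOn (fun y => Real.log y ^ 2 / (1 + y ^ 2) +
      Real.log r * (Real.log y / (1 + y ^ 2))) (Ioi 0) := hsq.add hlog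
  rw [setIntegral_congr_fun measurableSet_Ioi fun y hy => log_div_mul_logRatio_eq hy hr,
    integral_const_mul, integral_sub hscaled hsum,
    integral_comp_mul_left_Ioi (fun z => Real.log z ^ 2 / (1 + z ^ 2) -
      Real.log r * (Real.log z / (1 + z ^ 2))) 0 hr.1, mul_zero, integral_sub hsq hlog,
    integral_add hsq hlog, integral_const_mul, integral_log_sq_div_one_add_sq,
    integral_log_div_one_add_sq]
  have hfactor : 1 - r ^ 2 = (1 - r) * (1 + r) := by ring
  have hr₀ := hr.1
  have hr₁ : 1 - r ≠ 0 := (sub_pos.2 hr.2).ne'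
  rw [hfactor, smul_eq_mul]
  field_simp
  ring

lemma integral_inv_one_add : ∫ r in Ioo (0 : ℝ) 1, (1 + r)⁻¹ = Real.log 2 := by
  rw [← integral_Ioc_eq_integral_Ioo, ← intervalIntegral.integral_of_le zero_le_one,
    intervalIntegral.integral_comp_add_left (fun x => x⁻¹), integral_inv_of_pos (by norm_num)
    (by norm_num)]
  norm_num

lemma integral_mul_logRatioPrimitive_eq {y : ℝ} (hy : 0 < y) :
    ∫ r in Ioo (0 : ℝ) 1, Real.log y / (1 + y ^ 2) * (y * logRatio (y * r)) =
      Real.log y * logRatioPrimitive y / (1 + y ^ 2) := by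
  rw [integral_const_mul, integral_mul_logRatio_mul hy.ne', div_mul_eq_mul_div]

lemma integrableOn_log_mul_logRatioPrimitive :
    IntegrableOn (fun y => Real.log y * logRatioPrimitive y / (1 + y ^ 2)) (Ioi 0) :=
  IntegrableOn.congr_fun integrable_log_div_mul_logRatio.integral_prod_left
    (fun _ hy => integral_mul_logRatioPrimitive_eq hy) measurableSet_Ioi

lemma integral_log_mul_logRatioPrimitive :
    ∫ y in Ioi (0 : ℝ), Real.log y * logRatioPrimitive y / (1 + y ^ 2) =
      π ^ 3 / 8 * Real.log 2 := by
  rw [← setIntegral_congr_fun measurableSet_Ioi fun y hy => integral_mul_logRatioPrimitive_eq hy,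
    integral_integral_swap integrable_log_div_mul_logRatio,
    setIntegral_congr_fun measurableSet_Ioo fun r hr => integral_log_div_mul_logRatio hr,
    integral_const_mul, integral_inv_one_add]

lemma lintegral_Ioo_mul_comp_mul {t : ℝ} (ht : 0 < t) (f : ℝ → ENNReal) :
    ∫⁻ x in Ioo (0 : ℝ) 1, ENNReal.ofReal t * f (t * x) = ∫⁻ y in Ioo 0 t, f y := by
  have himage : (fun x => t * x) '' Ioo (0 : ℝ) 1 = Ioo 0 t := by
    rw [image_mul_left_Ioo ht, mul_zero, mul_one]
  have hderiv (x : ℝ) : HasDerivWithinAt (fun x => t * x) t (Ioo 0 1) x := by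
    simpa only [mul_one] using ((hasDerivAt_id' x).const_mul t).hasDerivWithinAt
  rw [← himage, lintegral_image_eq_lintegral_abs_deriv_mul measurableSet_Ioo
    (fun x _ => hderiv x) (mul_right_injective₀ ht.ne').injOn, abs_of_pos ht]

lemma lintegral_Ioo_lintegral_Ioo_swap {f : ℝ → ℝ → ENNReal}
    (hf : Measurable fun p : ℝ × ℝ => f p.1 p.2) (a b : ℝ) :
    ∫⁻ t in Ioo a b, ∫⁻ y in Ioo a t, f t y = ∫⁻ y in Ioo a b, ∫⁻ t in Ioo y b, f t y := by
  let s : Set (ℝ × ℝ) := {p | p.2 < p.1}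
  let g (t y : ℝ) : ENNReal := s.indicator (fun p => f p.1 p.2) (t, y)
  have hs : MeasurableSet s := measurableSet_lt measurable_snd measurable_fst
  have hleft (t : ℝ) (ht : t ∈ Ioo a b) : ∫⁻ y in Ioo a t, f t y = ∫⁻ y in Ioo a b, g t y := by
    have hset : Ioo a t = Iio t ∩ Ioo a b := by
      rw [inter_comm, Ioo_inter_Iio, min_eq_right ht.2.le]
    rw [hset, ← setLIntegral_indicator measurableSet_Iio]
    rfl
  have hright (y : ℝ) (hy : y ∈ Ioo a b) : ∫⁻ t in Ioo y b, f t y = ∫⁻ t in Ioo a b, g t y := by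
    have hset : Ioo y b = Ioi y ∩ Ioo a b := by
      rw [inter_comm, Ioo_inter_Ioi, max_eq_right hy.1.le]
    rw [hset, ← setLIntegral_indicator measurableSet_Ioi]
    rfl
  rw [setLIntegral_congr_fun measurableSet_Ioo hleft, setLIntegral_congr_fun measurableSet_Ioo
    hright, lintegral_lintegral_swap (f := g) (hf.indicator hs).aemeasurable]

/-- The integrand of the double integral over the triangle `y < t` obtained by putting `y = t x`. -/
noncomputable def triangleDensity (t y : ℝ) : ℝ :=
  -Real.log y * (1 - Real.log t) / (t * (1 + y ^ 2 - t ^ 2))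

lemma measurable_triangleDensity : Measurable fun p : ℝ × ℝ => triangleDensity p.1 p.2 := by
  unfold triangleDensity
  fun_prop

lemma lintegral_log_mul_kernel_eq {t : ℝ} (ht : t ∈ Ioo (0 : ℝ) 1) :
    ∫⁻ x in Ioo (0 : ℝ) 1,
        ENNReal.ofReal (-Real.log (t * x) * (1 - Real.log t) * kernel t x) =
      ∫⁻ y in Ioo 0 t, ENNReal.ofReal (triangleDensity t y) := by
  rw [← lintegral_Ioo_mul_comp_mul ht.1 fun y => ENNReal.ofReal (triangleDensity t y)]
  refine setLIntegral_congr_fun measurableSet_Ioo fun x _ => ?_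
  have hden : 1 + (t * x) ^ 2 - t ^ 2 = 1 - t ^ 2 * (1 - x ^ 2) := by ring
  have ht₀ := ht.1.ne'
  rw [← ENNReal.ofReal_mul ht.1.le, triangleDensity, kernel, hden, mul_div_assoc',
    mul_div_mul_left _ _ ht₀, div_eq_mul_inv]

/-- The primitive in `t` of `(1 - log t) / (t (1 + y² - t²))`. -/
noncomputable def trianglePrimitive (y t : ℝ) : ℝ :=
  (Real.log t - Real.log t ^ 2 - Real.log (1 + y ^ 2 - t ^ 2) / 2 +
    Real.log t * Real.log (1 + y ^ 2 - t ^ 2) / 2 +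
      logRatioPrimitive (√(1 + y ^ 2 - t ^ 2) / t)) / (1 + y ^ 2)

lemma one_add_sq_sub_sq_pos {y t : ℝ} (hy : 0 < y) (ht : t ∈ Icc (0 : ℝ) 1) :
    0 < 1 + y ^ 2 - t ^ 2 := by
  linarith [pow_le_one₀ (n := 2) ht.1 ht.2, pow_pos hy 2]

lemma hasDerivAt_one_add_sq_sub_sq (y t : ℝ) :
    HasDerivAt (fun t : ℝ => 1 + y ^ 2 - t ^ 2) (-(2 * t)) t := by
  simpa using (hasDerivAt_pow 2 t).const_sub (1 + y ^ 2)

lemma hasDerivAt_logRatioPrimitive_sqrt_div {y t : ℝ} (hy : 0 < y) (ht : t ∈ Ioc (0 : ℝ) 1) :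
    HasDerivAt (fun t => logRatioPrimitive (√(1 + y ^ 2 - t ^ 2) / t))
      ((Real.log t - Real.log (1 + y ^ 2 - t ^ 2) / 2) / t) t := by
  have hpos := one_add_sq_sub_sq_pos hy (Ioc_subset_Icc_self ht)
  have ht₀ := ht.1
  have hsqrt₀ := Real.sqrt_pos.2 hpos
  have hsqrt := (hasDerivAt_one_add_sq_sub_sq y t).sqrt hpos.ne'
  refine ((hasDerivAt_logRatioPrimitive _).comp t
    (hsqrt.fun_div (hasDerivAt_id' t) ht₀.ne')).congr_deriv ?_
  have hlog : Real.log (√(1 + y ^ 2 - t ^ 2) / t) =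
      Real.log (1 + y ^ 2 - t ^ 2) / 2 - Real.log t := by
    rw [Real.log_div hsqrt₀.ne' ht₀.ne', Real.log_sqrt hpos.le]
  have hsq := Real.sq_sqrt hpos.le
  rw [logRatio, hlog, div_pow, hsq]
  field_simp
  rw [hsq]
  ring

lemma hasDerivAt_trianglePrimitive {y t : ℝ} (hy : 0 < y) (ht : t ∈ Ioc (0 : ℝ) 1) :
    HasDerivAt (trianglePrimitive y) ((1 - Real.log t) / (t * (1 + y ^ 2 - t ^ 2))) t := by
  have hpos := (one_add_sq_sub_sq_pos hy (Ioc_subset_Icc_self ht)).ne'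
  have ht₀ := ht.1.ne'
  have hlog := Real.hasDerivAt_log ht₀
  have hlog' := (hasDerivAt_one_add_sq_sub_sq y t).log hpos
  refine (((((hlog.sub (hlog.fun_pow 2)).sub (hlog'.div_const 2)).add
    ((hlog.mul hlog').div_const 2)).add
      (hasDerivAt_logRatioPrimitive_sqrt_div hy ht)).div_const (1 + y ^ 2)).congr_deriv ?_
  have hb : 1 + y ^ 2 ≠ 0 := by positivity
  push_cast
  field_simp
  ring

/-- The integral of `triangleDensity` over `y < t < 1`. -/
noncomputable def triangleMarginal (y : ℝ) : ℝ :=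
  2 * ((-Real.log y) ^ 2 / (1 + y ^ 2)) + (-Real.log y) ^ 3 / (1 + y ^ 2) -
    (Real.log y * logRatioPrimitive y / (1 + y ^ 2) +
      Real.log y⁻¹ * logRatioPrimitive y⁻¹ / (1 + y ^ 2))

lemma neg_log_mul_trianglePrimitive_sub {y : ℝ} (hy : 0 < y) :
    -Real.log y * trianglePrimitive y 1 - -Real.log y * trianglePrimitive y y =
      triangleMarginal y := by
  have h₁ : 1 + y ^ 2 - 1 ^ 2 = y ^ 2 := by ring
  have hy' : 1 + y ^ 2 - y ^ 2 = 1 := by ring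
  rw [trianglePrimitive, trianglePrimitive, triangleMarginal, h₁, hy', Real.sqrt_sq hy.le,
    Real.sqrt_one, Real.log_pow, Real.log_one, Real.log_inv, one_div, div_one]
  push_cast
  ring

lemma triangleDensity_nonneg {t y : ℝ} (hy : y ∈ Ioo (0 : ℝ) 1) (ht : t ∈ Ioo (0 : ℝ) 1) :
    0 ≤ triangleDensity t y :=
  div_nonneg (mul_nonneg (neg_log_nonneg hy) (one_sub_log_nonneg ht))
    (mul_nonneg ht.1.le (one_add_sq_sub_sq_pos hy.1 (Ioo_subset_Icc_self ht)).le)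

lemma lintegral_triangleDensity {y : ℝ} (hy : y ∈ Ioo (0 : ℝ) 1) :
    ∫⁻ t in Ioo y 1, ENNReal.ofReal (triangleDensity t y) =
      ENNReal.ofReal (triangleMarginal y) := by
  have hderiv (t : ℝ) (ht : t ∈ Ioc (0 : ℝ) 1) :
      HasDerivAt (fun t => -Real.log y * trianglePrimitive y t) (triangleDensity t y) t :=
    ((hasDerivAt_trianglePrimitive hy.1 ht).const_mul _).congr_deriv (mul_div_assoc ..).symm
  rw [← neg_log_mul_trianglePrimitive_sub hy.1]
  exact lintegral_Ioo_of_hasDerivAt_of_nonneg hy.2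
    (fun t ht => hderiv t ⟨hy.1.trans ht.1, ht.2.le⟩)
    (fun t ht => triangleDensity_nonneg hy ⟨hy.1.trans ht.1, ht.2⟩)
    (hderiv y ⟨hy.1, hy.2.le⟩).continuousAt.continuousWithinAt
    (hderiv 1 ⟨one_pos, le_rfl⟩).continuousAt.continuousWithinAt

lemma trianglePrimitive_le {y : ℝ} (hy : y ∈ Ioo (0 : ℝ) 1) :
    trianglePrimitive y y ≤ trianglePrimitive y 1 := by
  have hderiv (t : ℝ) (ht : t ∈ Icc y 1) :=
    hasDerivAt_trianglePrimitive hy.1 ⟨hy.1.trans_le ht.1, ht.2⟩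
  refine monotoneOn_of_hasDerivWithinAt_nonneg (convex_Icc y 1)
    (fun t ht => (hderiv t ht).continuousAt.continuousWithinAt)
    (fun t ht => (hderiv t (interior_subset ht)).hasDerivWithinAt) (fun t ht => ?_)
    (left_mem_Icc.2 hy.2.le) (right_mem_Icc.2 hy.2.le) hy.2.le
  rw [interior_Icc] at ht
  have ht' : t ∈ Ioo (0 : ℝ) 1 := ⟨hy.1.trans ht.1, ht.2⟩
  exact div_nonneg (one_sub_log_nonneg ht')
    (mul_nonneg ht'.1.le (one_add_sq_sub_sq_pos hy.1 (Ioo_subset_Icc_self ht')).le)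

lemma triangleMarginal_nonneg {y : ℝ} (hy : y ∈ Ioo (0 : ℝ) 1) : 0 ≤ triangleMarginal y := by
  rw [← neg_log_mul_trianglePrimitive_sub hy.1, ← mul_sub]
  exact mul_nonneg (neg_log_nonneg hy) (sub_nonneg.2 (trianglePrimitive_le hy))

lemma integrableOn_triangleMarginal_and_integral :
    IntegrableOn triangleMarginal (Ioo 0 1) ∧
    ∫ y in Ioo (0 : ℝ) 1, triangleMarginal y =
      4 * dirichletBeta 3 + 6 * dirichletBeta 4 - π ^ 3 / 8 * Real.log 2 := by
  have hsq := (integrableOn_neg_log_pow_div_one_add_sq 2).const_mul 2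
  have hcube := integrableOn_neg_log_pow_div_one_add_sq 3
  have hfold := integrableOn_log_mul_logRatioPrimitive
  obtain ⟨hlog, hlog_inv⟩ := (integrableOn_Ioi_zero_div_one_add_sq_iff
    fun y => Real.log y * logRatioPrimitive y).1 hfold
  have hvalue := (integral_Ioi_zero_div_one_add_sq hfold).symm.trans
    integral_log_mul_logRatioPrimitive
  have hsum : IntegrableOn (fun y : ℝ => 2 * ((-Real.log y) ^ 2 / (1 + y ^ 2)) +
    (-Real.log y) ^ 3 / (1 + y ^ 2)) (Ioo 0 1) := hsq.add hcube
  have hfolded : IntegrableOn (fun y => Real.log y * logRatioPrimitive y / (1 + y ^ 2) +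
    Real.log y⁻¹ * logRatioPrimitive y⁻¹ / (1 + y ^ 2)) (Ioo 0 1) := hlog.add hlog_inv
  refine ⟨hsum.sub hfolded, ?_⟩
  unfold triangleMarginal
  rw [integral_sub hsum hfolded, integral_add hsq hcube, integral_add hlog hlog_inv,
    hvalue, integral_const_mul, integral_neg_log_pow_div_one_add_sq two_pos,
    integral_neg_log_pow_div_one_add_sq three_pos]
  push_cast [Nat.factorial]
  ring

lemma lintegral_log_mul_kernel :
    ∫⁻ t in Ioo (0 : ℝ) 1, ∫⁻ x in Ioo (0 : ℝ) 1,
        ENNReal.ofReal (-Real.log (t * x) * (1 - Real.log t) * kernel t x) =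
      ∫⁻ y in Ioo (0 : ℝ) 1, ENNReal.ofReal (triangleMarginal y) := by
  rw [setLIntegral_congr_fun measurableSet_Ioo fun t ht => lintegral_log_mul_kernel_eq ht,
    lintegral_Ioo_lintegral_Ioo_swap measurable_triangleDensity.ennreal_ofReal,
    setLIntegral_congr_fun measurableSet_Ioo fun y hy => lintegral_triangleDensity hy]

/-! ### The integral of arctan u ^ 3 / u -/

lemma tendsto_integral_mul_cos_two_mul {f : ℝ → ℝ} (hf : Integrable f) :
    Tendsto (fun N : ℕ => ∫ x, f x * Real.cos (2 * N * x)) atTop (𝓝 0) := by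
  have hfreq : Tendsto (fun N : ℕ => (N : ℝ) / π) atTop (cocompact ℝ) :=
    (tendsto_natCast_atTop_atTop.atTop_div_const Real.pi_pos).mono_right atTop_le_cocompact
  have hlim := (Complex.continuous_re.tendsto 0).comp
    ((Real.tendsto_integral_exp_smul_cocompact fun x => (f x : ℂ)).comp hfreq)
  rw [Complex.zero_re] at hlim
  refine hlim.congr fun N => ?_
  have hf' : Integrable fun x => (f x : ℂ) := hf.ofReal
  have hre := Complex.reCLM.integral_comp_comm
    ((Real.fourierIntegral_convergent_iff ((N : ℝ) / π)).2 hf')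
  have hinner (x : ℝ) : inner ℝ x ((N : ℝ) / π) = x * (N / π) := by
    rw [RCLike.inner_apply, conj_trivial, mul_comm]
  simp only [hinner] at hre
  refine hre.symm.trans (integral_congr_ae (.of_forall fun x => ?_))
  have hangle : 2 * π * -(x * ((N : ℝ) / π)) = -(2 * N * x) := by field_simp
  dsimp only [Complex.reCLM_apply]
  rw [Circle.smul_def, smul_eq_mul, Real.fourierChar_apply, Complex.re_mul_ofReal,
    Complex.exp_ofReal_mul_I_re, hangle, Real.cos_neg, mul_comm]

lemma sum_two_mul_sin_mul_sin (N : ℕ) (x : ℝ) :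
    ∑ j ∈ Finset.range N, 2 * Real.sin ((2 * j + 1) * x) * Real.sin x =
      1 - Real.cos (2 * N * x) := by
  induction N with
  | zero => simp
  | succ n ih =>
    have hadd : 2 * ((n + 1 : ℕ) : ℝ) * x = (2 * n + 1) * x + x := by
      push_cast
      ring
    have hsub : 2 * (n : ℝ) * x = (2 * n + 1) * x - x := by ring
    rw [Finset.sum_range_succ, ih, hadd, hsub, Real.cos_add, Real.cos_sub]
    ring

lemma sin_pos_of_mem_Ioo_zero_pi_div_two {x : ℝ} (hx : x ∈ Ioo 0 (π / 2)) : 0 < Real.sin x :=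
  Real.sin_pos_of_pos_of_lt_pi hx.1 (hx.2.trans (half_lt_self Real.pi_pos))

lemma hasDerivAt_two_mul_arctan (u : ℝ) :
    HasDerivAt (fun u => 2 * Real.arctan u) (2 / (1 + u ^ 2)) u :=
  ((Real.hasDerivAt_arctan u).const_mul 2).congr_deriv (mul_one_div _ _)

-- Riemann–Lebesgue applied to the Dirichlet-type identity `sum_two_mul_sin_mul_sin`.
lemma tendsto_sum_integral_mul_sin {f : ℝ → ℝ} (hf : Continuous f)
    (hint : IntegrableOn (fun x => f x / Real.sin x) (Ioo 0 (π / 2))) :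
    Tendsto (fun N : ℕ => ∑ j ∈ Finset.range N,
        2 * ∫ x in (0 : ℝ)..(π / 2), f x * Real.sin ((2 * j + 1) * x)) atTop
      (𝓝 (∫ x in Ioo 0 (π / 2), f x / Real.sin x)) := by
  have hcos (N : ℕ) :
      IntegrableOn (fun x => f x / Real.sin x * Real.cos (2 * N * x)) (Ioo 0 (π / 2)) :=
    Integrable.mul_bdd (c := 1) hint (by fun_prop)
      (.of_forall fun x => Real.abs_cos_le_one (2 * N * x))
  have hpartial (N : ℕ) : ∑ j ∈ Finset.range N,
        2 * ∫ x in (0 : ℝ)..(π / 2), f x * Real.sin ((2 * j + 1) * x) =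
      (∫ x in Ioo 0 (π / 2), f x / Real.sin x) -
        ∫ x in Ioo 0 (π / 2), f x / Real.sin x * Real.cos (2 * N * x) := by
    simp only [← intervalIntegral.integral_const_mul]
    rw [← integral_sub hint (hcos N), ← intervalIntegral.integral_finsetSum
      fun j _ => Continuous.intervalIntegrable (by fun_prop) _ _,
      intervalIntegral.integral_of_le (by positivity), integral_Ioc_eq_integral_Ioo]
    refine setIntegral_congr_fun measurableSet_Ioo fun x hx => ?_
    have hsin := (sin_pos_of_mem_Ioo_zero_pi_div_two hx).ne'
    rw [← mul_one_sub, ← sum_two_mul_sin_mul_sin, Finset.mul_sum]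
    refine Finset.sum_congr rfl fun j _ => ?_
    field_simp
  have hRL := tendsto_integral_mul_cos_two_mul (hint.integrable_indicator measurableSet_Ioo)
  have hset (N : ℕ) : ∫ x, (Ioo 0 (π / 2)).indicator (fun x => f x / Real.sin x) x *
        Real.cos (2 * N * x) =
      ∫ x in Ioo 0 (π / 2), f x / Real.sin x * Real.cos (2 * N * x) := by
    rw [← integral_indicator measurableSet_Ioo]
    exact integral_congr_ae (.of_forall fun x => (indicator_mul_left _ _
      fun x => Real.cos (2 * N * x)).symm)
  simpa only [hpartial, hset, sub_zero] using hRL.const_sub (∫ x in Ioo 0 (π / 2), f x / Real.sin x)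

lemma image_two_mul_arctan : (fun u => 2 * Real.arctan u) '' Ioo 0 1 = Ioo 0 (π / 2) := by
  ext x
  refine ⟨?_, fun hx => ⟨Real.tan (x / 2), ?_, ?_⟩⟩
  · rintro ⟨u, hu, rfl⟩
    have hlt := Real.arctan_strictMono hu.2
    rw [Real.arctan_one] at hlt
    exact ⟨mul_pos two_pos (Real.arctan_pos.2 hu.1), by dsimp only; linarith⟩
  all_goals
    have harctan : Real.arctan (Real.tan (x / 2)) = x / 2 :=
      Real.arctan_tan (by linarith [hx.1, Real.pi_pos]) (by linarith [hx.2, Real.pi_pos])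
  · rw [mem_Ioo, ← Real.arctan_pos, ← Real.arctan_strictMono.lt_iff_lt (b := 1), harctan,
      Real.arctan_one]
    exact ⟨half_pos hx.1, by linarith [hx.2]⟩
  · dsimp only
    rw [harctan, mul_div_cancel₀ x two_ne_zero]

lemma injective_two_mul_arctan : Function.Injective fun u => 2 * Real.arctan u :=
  (mul_right_injective₀ two_ne_zero).comp Real.arctan_injective

lemma sin_two_mul_arctan (u : ℝ) : Real.sin (2 * Real.arctan u) = 2 * u / (1 + u ^ 2) := by
  have hpos : 0 < 1 + u ^ 2 := by positivity
  have hsq := Real.sq_sqrt hpos.le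
  rw [Real.sin_two_mul, Real.sin_arctan, Real.cos_arctan, mul_assoc, div_mul_div_comm,
    ← sq, hsq, mul_one, mul_div_assoc]

lemma continuous_arctan_pow_three_div : Continuous fun u : ℝ => Real.arctan u ^ 3 / u := by
  have hslope (u : ℝ) : Real.arctan u ^ 3 / u = Real.arctan u ^ 2 * dslope Real.arctan 0 u := by
    obtain rfl | hu := eq_or_ne u 0
    · simp
    · rw [dslope_of_ne _ hu, slope_def_field, Real.arctan_zero]
      ring
  simp only [hslope]
  exact (Real.continuous_arctan.pow 2).mul
    (continuousOn_univ.1 ((continuousOn_dslope univ_mem).2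
      ⟨Real.continuous_arctan.continuousOn, Real.differentiableAt_arctan 0⟩))

lemma abs_smul_two_mul_arctan_pow_div_sin {u : ℝ} :
    |2 / (1 + u ^ 2)| • ((2 * Real.arctan u) ^ 3 / Real.sin (2 * Real.arctan u)) =
      8 * (Real.arctan u ^ 3 / u) := by
  rw [sin_two_mul_arctan, abs_of_pos (by positivity), smul_eq_mul]
  obtain rfl | hu := eq_or_ne u 0
  · simp
  · field_simp
    ring

lemma integrableOn_pow_three_div_sin :
    IntegrableOn (fun x => x ^ 3 / Real.sin x) (Ioo 0 (π / 2)) := by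
  rw [← image_two_mul_arctan, integrableOn_image_iff_integrableOn_abs_deriv_smul measurableSet_Ioo
    (fun u _ => (hasDerivAt_two_mul_arctan u).hasDerivWithinAt) injective_two_mul_arctan.injOn]
  simp only [abs_smul_two_mul_arctan_pow_div_sin]
  exact (continuous_arctan_pow_three_div.integrableOn_Icc.mono_set Ioo_subset_Icc_self).const_mul 8

lemma integral_pow_three_div_sin_eq :
    ∫ x in Ioo 0 (π / 2), x ^ 3 / Real.sin x =
      8 * ∫ u in (0 : ℝ)..1, Real.arctan u ^ 3 / u := by
  rw [← image_two_mul_arctan, integral_image_eq_integral_abs_deriv_smul measurableSet_Ioo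
    (fun u _ => (hasDerivAt_two_mul_arctan u).hasDerivWithinAt) injective_two_mul_arctan.injOn]
  simp only [abs_smul_two_mul_arctan_pow_div_sin]
  rw [integral_const_mul, ← integral_Ioc_eq_integral_Ioo,
    ← intervalIntegral.integral_of_le zero_le_one]

lemma hasDerivAt_pow_three_mul_sin_primitive {m : ℝ} (hm : m ≠ 0) (x : ℝ) :
    HasDerivAt (fun x => -(x ^ 3 * Real.cos (m * x)) / m + 3 * (x ^ 2 * Real.sin (m * x)) / m ^ 2 +
      6 * (x * Real.cos (m * x)) / m ^ 3 - 6 * Real.sin (m * x) / m ^ 4)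
      (x ^ 3 * Real.sin (m * x)) x := by
  have hlin : HasDerivAt (fun x => m * x) m x := by
    simpa only [mul_one] using (hasDerivAt_id' x).const_mul m
  have hsin := hlin.sin
  have hcos := hlin.cos
  refine (((((hasDerivAt_pow 3 x).mul hcos).neg.div_const m).add
    ((((hasDerivAt_pow 2 x).mul hsin).const_mul 3).div_const (m ^ 2))).add
    ((((hasDerivAt_id' x).mul hcos).const_mul 6).div_const (m ^ 3)) |>.sub
    ((hsin.const_mul 6).div_const (m ^ 4))).congr_deriv ?_
  push_cast
  field_simp
  ring

lemma integral_pow_three_mul_sin (j : ℕ) :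
    ∫ x in (0 : ℝ)..(π / 2), x ^ 3 * Real.sin ((2 * j + 1) * x) =
      3 * π ^ 2 / 4 * ((-1) ^ j / (2 * (j : ℝ) + 1) ^ 2) -
        6 * ((-1) ^ j / (2 * (j : ℝ) + 1) ^ 4) := by
  have hangle : (2 * (j : ℝ) + 1) * (π / 2) = π / 2 + j * π := by ring
  have hm : 2 * (j : ℝ) + 1 ≠ 0 := by positivity
  rw [intervalIntegral.integral_eq_sub_of_hasDerivAt
    (fun x _ => hasDerivAt_pow_three_mul_sin_primitive hm x)
    (Continuous.intervalIntegrable (by fun_prop) _ _), hangle, Real.sin_add_nat_mul_pi,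
    Real.cos_add_nat_mul_pi, Real.cos_pi_div_two, Real.sin_pi_div_two,
    mul_zero (2 * (j : ℝ) + 1), Real.sin_zero]
  ring

lemma integral_arctan_pow_three_div :
    ∫ u in (0 : ℝ)..1, Real.arctan u ^ 3 / u =
      3 * π ^ 2 / 16 * dirichletBeta 2 - 3 / 2 * dirichletBeta 4 := by
  have hpartial := tendsto_sum_integral_mul_sin (continuous_pow 3) integrableOn_pow_three_div_sin
  have hsum {n : ℕ} (hn : 1 < n) := (summable_dirichletBeta hn).hasSum
  have hterms := (((hsum one_lt_two).mul_left (3 * π ^ 2 / 4)).sub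
    ((hsum (n := 4) (by norm_num)).mul_left 6)).mul_left 2
  simp only [integral_pow_three_mul_sin, integral_pow_three_div_sin_eq] at hpartial
  have h := tendsto_nhds_unique hpartial hterms.tendsto_sum_nat
  change _ = 2 * (3 * π ^ 2 / 4 * dirichletBeta 2 - 6 * dirichletBeta 4) at h
  linarith

/-! ### Reduction to an arctangent integral -/

lemma hasDerivAt_two_mul_div_one_add_sq (u : ℝ) :
    HasDerivAt (fun u : ℝ => 2 * u / (1 + u ^ 2)) (2 * (1 - u ^ 2) / (1 + u ^ 2) ^ 2) u := by
  have hden : HasDerivAt (fun x : ℝ => 1 + x ^ 2) (2 * u) u := by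
    simpa using (hasDerivAt_pow 2 u).const_add 1
  refine (((hasDerivAt_id u).const_mul 2).div hden (by positivity)).congr_deriv ?_
  simp only [id_eq]
  ring

lemma injOn_two_mul_div_one_add_sq :
    InjOn (fun u : ℝ => 2 * u / (1 + u ^ 2)) (Ioo 0 1) := by
  intro u hu v hv h
  simp only at h
  rw [div_eq_div_iff (by positivity) (by positivity)] at h
  have hfactor : (u - v) * (1 - u * v) = 0 := by linear_combination h / 2
  have huv : u * v < 1 := mul_lt_one_of_nonneg_of_lt_one_left hu.1.le hu.2 hv.2.le
  exact sub_eq_zero.1 ((mul_eq_zero.1 hfactor).resolve_right (sub_pos.2 huv).ne')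

lemma two_mul_div_one_add_sq_mem {u : ℝ} (hu : u ∈ Ioo (0 : ℝ) 1) :
    2 * u / (1 + u ^ 2) ∈ Ioo (0 : ℝ) 1 := by
  have hpos := hu.1
  refine ⟨by positivity, ?_⟩
  rw [div_lt_one (by positivity)]
  nlinarith [hu.2]

lemma image_two_mul_div_one_add_sq :
    (fun u : ℝ => 2 * u / (1 + u ^ 2)) '' Ioo 0 1 = Ioo 0 1 := by
  refine subset_antisymm (image_subset_iff.2 fun u hu => two_mul_div_one_add_sq_mem hu) ?_
  have hcont : Continuous fun u : ℝ => 2 * u / (1 + u ^ 2) :=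
    continuous_iff_continuousAt.2 fun u => (hasDerivAt_two_mul_div_one_add_sq u).continuousAt
  have h := intermediate_value_Ioo zero_le_one hcont.continuousOn
  norm_num at h
  exact h

lemma lintegral_kernel_two_mul_div_one_add_sq {u : ℝ} (hu : u ∈ Ioo (0 : ℝ) 1) :
    ∫⁻ x in Ioo (0 : ℝ) 1, ENNReal.ofReal (kernel (2 * u / (1 + u ^ 2)) x) =
      ENNReal.ofReal ((1 + u ^ 2) ^ 2 / (u * (1 - u ^ 2)) * Real.arctan u) := by
  have hu₀ := hu.1
  have hu₁ := (one_sub_sq_mem hu).1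
  have hderiv (x : ℝ) : HasDerivAt
      (fun x => (1 + u ^ 2) ^ 2 / (2 * u * (1 - u ^ 2)) * Real.arctan (2 * u / (1 - u ^ 2) * x))
      (kernel (2 * u / (1 + u ^ 2)) x) x := by
    refine ((((hasDerivAt_id x).const_mul _).arctan).const_mul _).congr_deriv ?_
    have hsplit : 1 - (2 * u / (1 + u ^ 2)) ^ 2 * (1 - x ^ 2) =
        ((1 - u ^ 2) ^ 2 + (2 * u * x) ^ 2) / (1 + u ^ 2) ^ 2 := by
      field_simp
      ring
    rw [kernel, hsplit]
    simp only [id_eq]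
    field_simp
  rw [lintegral_Ioo_of_hasDerivAt_of_nonneg zero_lt_one (fun x _ => hderiv x)
    (fun x hx => kernel_nonneg (two_mul_div_one_add_sq_mem hu) hx)
    (hderiv 0).continuousAt.continuousWithinAt.tendsto
    (hderiv 1).continuousAt.continuousWithinAt.tendsto]
  rw [mul_one, mul_zero, Real.arctan_zero, mul_zero, sub_zero,
    ← Real.two_mul_arctan (by linarith) hu.2]
  congr 1
  field_simp

/-- Under `t = 2 u / (1 + u ^ 2)` the part of the double integral that carries `-log t` becomes
twice the integral of this function over `(0, 1)`. -/
noncomputable def arctanLogIntegrand (u : ℝ) : ℝ :=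
  Real.arctan u / u * (Real.log (2 * u / (1 + u ^ 2)) ^ 2 - Real.log (2 * u / (1 + u ^ 2)))

lemma arctanLogIntegrand_nonneg {u : ℝ} (hu : u ∈ Ioo (0 : ℝ) 1) : 0 ≤ arctanLogIntegrand u := by
  have hlog := neg_log_nonneg (two_mul_div_one_add_sq_mem hu)
  exact mul_nonneg (div_nonneg (Real.arctan_nonneg.2 hu.1.le) hu.1.le) (by nlinarith)

lemma lintegral_neg_log_mul_kernel :
    ∫⁻ t in Ioo (0 : ℝ) 1, ∫⁻ x in Ioo (0 : ℝ) 1,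
      ENNReal.ofReal (-Real.log t * (1 - Real.log t) * kernel t x) =
        ∫⁻ u in Ioo (0 : ℝ) 1, ENNReal.ofReal (2 * arctanLogIntegrand u) := by
  conv_lhs => rw [← image_two_mul_div_one_add_sq]
  rw [lintegral_image_eq_lintegral_abs_deriv_mul measurableSet_Ioo
    (fun u _ => (hasDerivAt_two_mul_div_one_add_sq u).hasDerivWithinAt)
    injOn_two_mul_div_one_add_sq]
  refine setLIntegral_congr_fun measurableSet_Ioo fun u hu => ?_
  have ht := two_mul_div_one_add_sq_mem hu
  have hcoef := mul_nonneg (neg_log_nonneg ht) (one_sub_log_nonneg ht)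
  have hu₀ := hu.1
  have hu₁ := (one_sub_sq_mem hu).1
  simp only [ENNReal.ofReal_mul hcoef]
  rw [lintegral_const_mul' _ _ ENNReal.ofReal_ne_top, image_two_mul_div_one_add_sq,
    lintegral_kernel_two_mul_div_one_add_sq hu,
    ← ENNReal.ofReal_mul hcoef, ← ENNReal.ofReal_mul (abs_nonneg _), abs_of_nonneg (by positivity)]
  congr 1
  unfold arctanLogIntegrand
  field_simp
  ring

/-! ### Logarithms along the imaginary axis -/

/-- The logarithm `log (i u)`, for `0 < u`; abbreviated to `τ`. -/
noncomputable def logMulI (u : ℝ) : ℂ := Real.log u + π / 2 * I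

/-- The logarithm `-log (1 + i u) = Li₁ (-i u)`; abbreviated to `ℓ`. -/
noncomputable def negLogOneAddMulI (u : ℝ) : ℂ := -Complex.log (1 + u * I)

/-- The point `1 / (1 + i u)`, abbreviated to `ρ`; the polylogarithms at `-i u`, `ρ u` and
`1 - ρ u` are the building blocks of the primitives. -/
noncomputable def invOneAddMulI (u : ℝ) : ℂ := (1 + u * I)⁻¹

local notation "τ" => logMulI

local notation "ℓ" => negLogOneAddMulI

local notation "ρ" => invOneAddMulI

lemma one_add_mul_I_ne_zero (u : ℝ) : (1 + u * I : ℂ) ≠ 0 := fun h => by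
  simpa using congrArg re h

lemma norm_one_add_mul_I (u : ℝ) : ‖(1 + u * I : ℂ)‖ = √(1 + u ^ 2) := by
  simpa using norm_add_mul_I 1 u

lemma negLogOneAddMulI_eq (u : ℝ) : ℓ u = -(Real.log (1 + u ^ 2) / 2 : ℝ) - Real.arctan u * I := by
  have hre : (Complex.log (1 + u * I)).re = Real.log (1 + u ^ 2) / 2 := by
    rw [Complex.log_re, norm_one_add_mul_I, Real.log_sqrt (by positivity)]
  have him : (Complex.log (1 + u * I)).im = Real.arctan u := by
    rw [Complex.log_im, Complex.arg_of_re_nonneg (by simp), norm_one_add_mul_I,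
      Real.arctan_eq_arcsin]
    simp
  rw [negLogOneAddMulI, ← Complex.re_add_im (Complex.log _), hre, him]
  ring

lemma one_sub_invOneAddMulI (u : ℝ) : 1 - ρ u = u * I * ρ u := by
  have h := one_add_mul_I_ne_zero u
  unfold invOneAddMulI
  field_simp
  ring

lemma norm_invOneAddMulI (u : ℝ) : ‖ρ u‖ = (√(1 + u ^ 2))⁻¹ := by
  rw [invOneAddMulI, norm_inv, norm_one_add_mul_I]

lemma norm_invOneAddMulI_lt_one {u : ℝ} (hu : 0 < u) : ‖ρ u‖ < 1 := by
  rw [norm_invOneAddMulI]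
  exact inv_lt_one_of_one_lt₀ (Real.lt_sqrt_of_sq_lt (by nlinarith))

lemma norm_one_sub_invOneAddMulI_lt_one (u : ℝ) : ‖1 - ρ u‖ < 1 := by
  rw [one_sub_invOneAddMulI, norm_mul, norm_invOneAddMulI, ← div_eq_mul_inv,
    div_lt_one (by positivity)]
  refine Real.lt_sqrt_of_sq_lt ?_
  simp

lemma norm_neg_mul_I {u : ℝ} (hu : 0 ≤ u) : ‖-(u * I : ℂ)‖ = u := by
  simpa using hu

lemma polylog_one_neg_mul_I {u : ℝ} (hu : u ∈ Ioo (0 : ℝ) 1) : polylog 1 (-(u * I)) = ℓ u := by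
  rw [polylog_one_left ((norm_neg_mul_I hu.1.le).trans_lt hu.2), sub_neg_eq_add, negLogOneAddMulI]

lemma polylog_one_one_sub_invOneAddMulI (u : ℝ) : polylog 1 (1 - ρ u) = -ℓ u := by
  have harg : (1 + u * I : ℂ).arg ≠ π := fun h => by
    have := (Complex.arg_eq_pi_iff.1 h).1
    norm_num at this
  rw [polylog_one_left (norm_one_sub_invOneAddMulI_lt_one u), sub_sub_cancel, invOneAddMulI,
    Complex.log_inv _ harg, negLogOneAddMulI]

lemma polylog_one_invOneAddMulI {u : ℝ} (hu : 0 < u) : polylog 1 (ρ u) = -(τ u + ℓ u) := by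
  have hexp : 1 - ρ u = Complex.exp (τ u + ℓ u) := by
    rw [one_sub_invOneAddMulI, logMulI, negLogOneAddMulI, Complex.exp_add, Complex.exp_add,
      Complex.exp_neg, Complex.exp_log (one_add_mul_I_ne_zero u), ← Complex.ofReal_exp,
      Real.exp_log hu, Complex.exp_pi_div_two_mul_I, invOneAddMulI]
  have him : (τ u + ℓ u).im = π / 2 - Real.arctan u := by
    rw [logMulI, negLogOneAddMulI_eq]
    have hτ : (Real.log u + π / 2 * I : ℂ).im = π / 2 := by simp [← Complex.ofReal_ofNat]
    rw [Complex.add_im, hτ]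
    simp only [sub_im, neg_im, ofReal_im, neg_zero, mul_im, I_im, ofReal_re, mul_one, I_re,
      mul_zero, zero_sub, add_zero]
    ring
  rw [polylog_one_left (norm_invOneAddMulI_lt_one hu), hexp, Complex.log_exp]
  · linarith [Real.arctan_lt_pi_div_two u, pi_pos]
  · linarith [Real.arctan_pos.2 hu, pi_pos]

lemma hasDerivAt_logMulI {u : ℝ} (hu : 0 < u) : HasDerivAt τ (1 / u : ℂ) u :=
  ((Real.hasDerivAt_log hu.ne').ofReal_comp.add_const _).congr_deriv (by simp)

lemma hasDerivAt_one_add_mul_I (u : ℝ) : HasDerivAt (fun u : ℝ => 1 + u * I) I u := by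
  simpa using (((hasDerivAt_id u).ofReal_comp).mul_const I).const_add 1

lemma hasDerivAt_negLogOneAddMulI (u : ℝ) : HasDerivAt ℓ (-(I * ρ u)) u :=
  ((hasDerivAt_one_add_mul_I u).clog_real (Or.inl (by simp))).neg

lemma hasDerivAt_invOneAddMulI (u : ℝ) : HasDerivAt ρ (-(I * ρ u ^ 2)) u :=
  ((hasDerivAt_one_add_mul_I u).inv (one_add_mul_I_ne_zero u)).congr_deriv (by
    rw [invOneAddMulI, inv_pow, div_eq_mul_inv, neg_mul])

lemma hasDerivAt_polylog_neg_mul_I (n : ℕ) {u : ℝ} (hu : u ∈ Ioo (0 : ℝ) 1) :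
    HasDerivAt (fun u : ℝ => polylog (n + 1) (-(u * I))) (polylog n (-(u * I)) * (1 / u)) u := by
  have hu₀ : (u : ℂ) ≠ 0 := ofReal_ne_zero.2 hu.1.ne'
  have harg : HasDerivAt (fun u : ℝ => -(u * I)) (-I) u := by
    simpa using (((hasDerivAt_id u).ofReal_comp).mul_const I).fun_neg
  refine (hasDerivAt_polylog_comp n harg ((norm_neg_mul_I hu.1.le).trans_lt hu.2)
    (neg_ne_zero.2 (mul_ne_zero hu₀ I_ne_zero))).congr_deriv ?_
  rw [neg_div_neg_eq, div_mul_cancel_right₀ I_ne_zero, one_div]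

lemma hasDerivAt_polylog_invOneAddMulI (n : ℕ) {u : ℝ} (hu : 0 < u) :
    HasDerivAt (fun u => polylog (n + 1) (ρ u)) (polylog n (ρ u) * -(I * ρ u)) u := by
  have hρ : ρ u ≠ 0 := inv_ne_zero (one_add_mul_I_ne_zero u)
  refine (hasDerivAt_polylog_comp n (hasDerivAt_invOneAddMulI u) (norm_invOneAddMulI_lt_one hu)
    hρ).congr_deriv ?_
  field_simp

lemma hasDerivAt_polylog_one_sub_invOneAddMulI (n : ℕ) {u : ℝ} (hu : 0 < u) :
    HasDerivAt (fun u => polylog (n + 1) (1 - ρ u))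
      (polylog n (1 - ρ u) * (1 / u - I * ρ u)) u := by
  have hu₀ : (u : ℂ) ≠ 0 := ofReal_ne_zero.2 hu.ne'
  have hρ : ρ u ≠ 0 := inv_ne_zero (one_add_mul_I_ne_zero u)
  have hne : 1 - ρ u ≠ 0 := by
    rw [one_sub_invOneAddMulI]
    exact mul_ne_zero (mul_ne_zero hu₀ I_ne_zero) hρ
  refine (hasDerivAt_polylog_comp n ((hasDerivAt_invOneAddMulI u).const_sub 1)
    (norm_one_sub_invOneAddMulI_lt_one u) hne).congr_deriv ?_
  congr 1
  rw [div_eq_iff hne, neg_neg]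
  have hinv : 1 / (u : ℂ) * (1 - ρ u) = I * ρ u := by
    rw [one_sub_invOneAddMulI]
    field_simp
  linear_combination -hinv

/-- A primitive of `τ * ℓ / u`. -/
noncomputable def logPrimitive₁₁ (u : ℝ) : ℂ :=
  τ u * polylog 2 (-(u * I)) - polylog 3 (-(u * I))

/-- A primitive of `τ ^ 2 * ℓ / u`. -/
noncomputable def logPrimitive₂₁ (u : ℝ) : ℂ :=
  τ u ^ 2 * polylog 2 (-(u * I)) - 2 * (τ u * polylog 3 (-(u * I))) + 2 * polylog 4 (-(u * I))

/-- A primitive of `ℓ ^ 2 / u`. -/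
noncomputable def logPrimitive₀₂ (u : ℝ) : ℂ :=
  (τ u + ℓ u) * ℓ u ^ 2 + 2 * (ℓ u * polylog 2 (ρ u)) - 2 * polylog 3 (ρ u) - ℓ u ^ 3 / 3

/-- A primitive of `ℓ ^ 3 / u`. -/
noncomputable def logPrimitive₀₃ (u : ℝ) : ℂ :=
  (τ u + ℓ u) * ℓ u ^ 3 + 3 * (ℓ u ^ 2 * polylog 2 (ρ u)) - 6 * (ℓ u * polylog 3 (ρ u)) +
    6 * polylog 4 (ρ u) - ℓ u ^ 4 / 4

/-- A primitive of `(τ + ℓ) ^ 3` with respect to `ℓ`. -/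
noncomputable def cubePrimitive (u : ℝ) : ℂ :=
  (τ u + ℓ u) ^ 3 * ℓ u + 3 * ((τ u + ℓ u) ^ 2 * polylog 2 (1 - ρ u)) -
    6 * ((τ u + ℓ u) * polylog 3 (1 - ρ u)) + 6 * polylog 4 (1 - ρ u)

lemma hasDerivAt_cubePrimitive {u : ℝ} (hu : 0 < u) :
    HasDerivAt cubePrimitive ((τ u + ℓ u) ^ 3 * -(I * ρ u)) u := by
  have hℓ := hasDerivAt_negLogOneAddMulI u
  have hα := (hasDerivAt_logMulI hu).fun_add hℓ
  have h₂ := hasDerivAt_polylog_one_sub_invOneAddMulI 1 hu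
  have h₃ := hasDerivAt_polylog_one_sub_invOneAddMulI 2 hu
  have h₄ := hasDerivAt_polylog_one_sub_invOneAddMulI 3 hu
  refine (((((hα.fun_pow 3).fun_mul hℓ).fun_add (((hα.fun_pow 2).fun_mul h₂).const_mul 3)).fun_sub
    ((hα.fun_mul h₃).const_mul 6)).fun_add (h₄.const_mul 6)).congr_deriv ?_
  rw [polylog_one_one_sub_invOneAddMulI]
  push_cast
  ring

/-- The shift `log 2 - i π / 2`, for which `τ + 2 * ℓ + logShift` is
`log (2 * u / (1 + u ^ 2)) - 2 * i * arctan u`. -/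
noncomputable def logShift : ℂ := Real.log 2 - π / 2 * I

local notation "κ" => logShift

/-- A function whose imaginary part is a primitive of `arctanLogIntegrand`, up to a multiple of
`arctan u ^ 3 / u`. -/
noncomputable def arctanLogPrimitive (u : ℝ) : ℂ :=
  logPrimitive₂₁ u - 2 / 3 * logPrimitive₀₃ u + 2 / 3 * cubePrimitive u -
      2 / 3 * (τ u ^ 3 * ℓ u + 3 / 2 * (τ u ^ 2 * ℓ u ^ 2) + τ u * ℓ u ^ 3 + ℓ u ^ 4 / 4) +
    (1 - 2 * κ) * (logPrimitive₁₁ u + logPrimitive₀₂ u) + (κ - κ ^ 2) * polylog 2 (-(u * I))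

lemma hasDerivAt_logPrimitive₁₁ {u : ℝ} (hu : u ∈ Ioo (0 : ℝ) 1) :
    HasDerivAt logPrimitive₁₁ (τ u * ℓ u * (1 / u)) u := by
  have h₂ := hasDerivAt_polylog_neg_mul_I 1 hu
  have h₃ := hasDerivAt_polylog_neg_mul_I 2 hu
  refine (((hasDerivAt_logMulI hu.1).fun_mul h₂).fun_sub h₃).congr_deriv ?_
  rw [polylog_one_neg_mul_I hu]
  ring

lemma hasDerivAt_logPrimitive₂₁ {u : ℝ} (hu : u ∈ Ioo (0 : ℝ) 1) :
    HasDerivAt logPrimitive₂₁ (τ u ^ 2 * ℓ u * (1 / u)) u := by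
  have hτ := hasDerivAt_logMulI hu.1
  have h₂ := hasDerivAt_polylog_neg_mul_I 1 hu
  have h₃ := hasDerivAt_polylog_neg_mul_I 2 hu
  have h₄ := hasDerivAt_polylog_neg_mul_I 3 hu
  refine ((((hτ.fun_pow 2).fun_mul h₂).fun_sub ((hτ.fun_mul h₃).const_mul 2)).fun_add
    (h₄.const_mul 2)).congr_deriv ?_
  rw [polylog_one_neg_mul_I hu]
  push_cast
  ring

lemma hasDerivAt_logPrimitive₀₂ {u : ℝ} (hu : 0 < u) :
    HasDerivAt logPrimitive₀₂ (ℓ u ^ 2 * (1 / u)) u := by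
  have hℓ := hasDerivAt_negLogOneAddMulI u
  have hα := (hasDerivAt_logMulI hu).fun_add hℓ
  have h₂ := hasDerivAt_polylog_invOneAddMulI 1 hu
  have h₃ := hasDerivAt_polylog_invOneAddMulI 2 hu
  refine ((((hα.fun_mul (hℓ.fun_pow 2)).fun_add ((hℓ.fun_mul h₂).const_mul 2)).fun_sub
    (h₃.const_mul 2)).fun_sub ((hℓ.fun_pow 3).div_const 3)).congr_deriv ?_
  rw [polylog_one_invOneAddMulI hu]
  push_cast
  ring

lemma hasDerivAt_logPrimitive₀₃ {u : ℝ} (hu : 0 < u) :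
    HasDerivAt logPrimitive₀₃ (ℓ u ^ 3 * (1 / u)) u := by
  have hℓ := hasDerivAt_negLogOneAddMulI u
  have hα := (hasDerivAt_logMulI hu).fun_add hℓ
  have h₂ := hasDerivAt_polylog_invOneAddMulI 1 hu
  have h₃ := hasDerivAt_polylog_invOneAddMulI 2 hu
  have h₄ := hasDerivAt_polylog_invOneAddMulI 3 hu
  refine (((((hα.fun_mul (hℓ.fun_pow 3)).fun_add (((hℓ.fun_pow 2).fun_mul h₂).const_mul 3)).fun_sub
    ((hℓ.fun_mul h₃).const_mul 6)).fun_add (h₄.const_mul 6)).fun_sub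
    ((hℓ.fun_pow 4).div_const 4)).congr_deriv ?_
  rw [polylog_one_invOneAddMulI hu]
  push_cast
  ring

lemma hasDerivAt_arctanLogPrimitive {u : ℝ} (hu : u ∈ Ioo (0 : ℝ) 1) :
    HasDerivAt arctanLogPrimitive ((-(τ u ^ 2 * ℓ u) - 2 * (τ u * ℓ u ^ 2) - 4 / 3 * ℓ u ^ 3 +
      (1 - 2 * κ) * (τ u * ℓ u + ℓ u ^ 2) + (κ - κ ^ 2) * ℓ u) * (1 / u)) u := by
  have hτ := hasDerivAt_logMulI hu.1
  have hℓ := hasDerivAt_negLogOneAddMulI u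
  have hpoly := ((((hτ.fun_pow 3).fun_mul hℓ).fun_add
    (((hτ.fun_pow 2).fun_mul (hℓ.fun_pow 2)).const_mul (3 / 2))).fun_add
    (hτ.fun_mul (hℓ.fun_pow 3))).fun_add ((hℓ.fun_pow 4).div_const 4)
  have hcubic := (((hasDerivAt_logPrimitive₂₁ hu).fun_sub
    ((hasDerivAt_logPrimitive₀₃ hu.1).const_mul (2 / 3))).fun_add
    ((hasDerivAt_cubePrimitive hu.1).const_mul (2 / 3))).fun_sub (hpoly.const_mul (2 / 3))
  have hquadratic := ((hasDerivAt_logPrimitive₁₁ hu).fun_add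
    (hasDerivAt_logPrimitive₀₂ hu.1)).const_mul (1 - 2 * κ)
  have hlinear := (hasDerivAt_polylog_neg_mul_I 1 hu).const_mul (κ - κ ^ 2)
  refine ((hcubic.fun_add hquadratic).fun_add hlinear).congr_deriv ?_
  rw [polylog_one_neg_mul_I hu]
  push_cast
  ring

lemma logMulI_add_logShift {u : ℝ} (hu : 0 < u) : τ u + κ = (Real.log (2 * u) : ℝ) := by
  rw [Real.log_mul two_ne_zero hu.ne', logMulI, logShift]
  push_cast
  ring

lemma logMulI_add_two_mul_add_logShift {u : ℝ} (hu : 0 < u) :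
    τ u + 2 * ℓ u + κ =
      (Real.log (2 * u / (1 + u ^ 2)) : ℝ) - (2 * Real.arctan u : ℝ) * I := by
  rw [Real.log_div (by positivity) (by positivity), ofReal_sub, ← logMulI_add_logShift hu,
    negLogOneAddMulI_eq]
  push_cast
  ring

lemma hasDerivAt_arctanLogPrimitive_im {u : ℝ} (hu : u ∈ Ioo (0 : ℝ) 1) :
    HasDerivAt (fun u => (arctanLogPrimitive u).im)
      (arctanLogIntegrand u - 4 / 3 * (Real.arctan u ^ 3 / u)) u := by
  -- Since `τ + κ` is real, only the powers of `τ + 2 * ℓ + κ` have an imaginary part.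
  have hderiv : HasDerivAt arctanLogPrimitive
      ((-((τ u + 2 * ℓ u + κ) ^ 3 - (τ u + κ) ^ 3) / 6 +
        ((τ u + 2 * ℓ u + κ) ^ 2 - (τ u + κ) ^ 2) / 4) / u) u :=
    (hasDerivAt_arctanLogPrimitive hu).congr_deriv (by ring)
  rw [logMulI_add_two_mul_add_logShift hu.1, logMulI_add_logShift hu.1] at hderiv
  set s := Real.log (2 * u / (1 + u ^ 2)) 
  set x := Real.log (2 * u)
  set a := Real.arctan u 
  have hsplit : (-(((s : ℂ) - (2 * a : ℝ) * I) ^ 3 - x ^ 3) / 6 +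
      ((s - (2 * a : ℝ) * I) ^ 2 - x ^ 2) / 4) / u =
        (((-(s ^ 3 - x ^ 3) + 12 * s * a ^ 2) / 6 + (s ^ 2 - x ^ 2 - 4 * a ^ 2) / 4) / u : ℝ) +
          (a * (s ^ 2 - s) / u - 4 / 3 * (a ^ 3 / u) : ℝ) * I := by
    push_cast
    linear_combination ((2 * a) ^ 3 * I / (6 * u) - s * a ^ 2 * 2 / u + a ^ 2 / u : ℂ) * I_sq
  refine (Complex.imCLM.hasFDerivAt.comp_hasDerivAt u hderiv).congr_deriv ?_
  rw [hsplit, imCLM_apply, ← mk_eq_add_mul_I, arctanLogIntegrand]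
  ring

lemma tendsto_pow_mul_of_isBigO_log {f g : ℝ → ℂ} (hg : g =O[𝓝[>] 0] Real.log)
    (hf : f =O[𝓝[>] 0] fun u : ℝ => u) (k : ℕ) :
    Tendsto (fun u => g u ^ k * f u) (𝓝[>] 0) (𝓝 0) := by
  have hlog : (fun u => Real.log u ^ k) =o[𝓝[>] 0] fun u : ℝ => u ^ (-1 : ℝ) := by
    refine Asymptotics.isLittleO_norm_left.1 ?_
    simpa only [Real.rpow_natCast, norm_pow, Real.norm_eq_abs] using
      isLittleO_abs_log_rpow_rpow_nhdsGT_zero k neg_one_lt_zero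
  have hone : (fun u : ℝ => u ^ (-1 : ℝ) * u) =ᶠ[𝓝[>] 0] fun _ => (1 : ℝ) := by
    filter_upwards [self_mem_nhdsWithin] with u hu
    rw [Real.rpow_neg_one, inv_mul_cancel₀ (ne_of_gt hu)]
  exact (Asymptotics.isLittleO_one_iff ℝ).1
    ((((hg.pow k).trans_isLittleO hlog).mul_isBigO hf).congr' .rfl hone)

lemma const_isBigO_log (c : ℂ) : (fun _ => c) =O[𝓝[>] 0] Real.log :=
  (Asymptotics.isLittleO_const_left.2
    (.inr (tendsto_abs_atBot_atTop.comp Real.tendsto_log_nhdsGT_zero))).isBigO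

lemma logMulI_isBigO_log : τ =O[𝓝[>] 0] Real.log :=
  .add (Asymptotics.isBigO_of_le _ fun _ => (norm_real _).le) (const_isBigO_log _)

lemma negLogOneAddMulI_zero : ℓ 0 = 0 := by simp [negLogOneAddMulI]

lemma invOneAddMulI_zero : ρ 0 = 1 := by simp [invOneAddMulI]

lemma negLogOneAddMulI_isBigO : ℓ =O[𝓝[>] 0] fun u : ℝ => u := by
  simpa only [negLogOneAddMulI_zero, sub_zero] using
    (hasDerivAt_negLogOneAddMulI 0).isBigO_sub.mono nhdsWithin_le_nhds

lemma polylog_comp_isBigO {n : ℕ} (hn : 1 < n) {f : ℝ → ℂ} {f' : ℂ} (hf : HasDerivAt f f' 0)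
    (hf₀ : f 0 = 0) : (fun u => polylog n (f u)) =O[𝓝[>] 0] fun u : ℝ => u := by
  have hf_isBigO : f =O[𝓝 0] fun u : ℝ => u := by
    simpa only [hf₀, sub_zero] using hf.isBigO_sub
  have hlim : Tendsto f (𝓝 0) (𝓝 0) := hf₀ ▸ hf.continuousAt.tendsto
  exact (((polylog_isBigO hn).comp_tendsto hlim).trans hf_isBigO).mono nhdsWithin_le_nhds

lemma polylog_neg_mul_I_isBigO {n : ℕ} (hn : 1 < n) :
    (fun u : ℝ => polylog n (-(u * I))) =O[𝓝[>] 0] fun u : ℝ => u :=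
  polylog_comp_isBigO hn (((hasDerivAt_id 0).ofReal_comp).mul_const I).fun_neg (by simp)

lemma polylog_one_sub_invOneAddMulI_isBigO {n : ℕ} (hn : 1 < n) :
    (fun u : ℝ => polylog n (1 - ρ u)) =O[𝓝[>] 0] fun u : ℝ => u :=
  polylog_comp_isBigO hn ((hasDerivAt_invOneAddMulI 0).const_sub 1)
    (by rw [invOneAddMulI_zero, sub_self])

lemma tendsto_zero_of_isBigO_id {f : ℝ → ℂ} (hf : f =O[𝓝[>] 0] fun u : ℝ => u) :
    Tendsto f (𝓝[>] 0) (𝓝 0) :=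
  hf.trans_tendsto (tendsto_nhdsWithin_of_tendsto_nhds tendsto_id)

lemma tendsto_negLogOneAddMulI : Tendsto ℓ (𝓝[>] 0) (𝓝 0) :=
  tendsto_zero_of_isBigO_id negLogOneAddMulI_isBigO

lemma tendsto_polylog_neg_mul_I {n : ℕ} (hn : 1 < n) :
    Tendsto (fun u : ℝ => polylog n (-(u * I))) (𝓝[>] 0) (𝓝 0) :=
  tendsto_zero_of_isBigO_id (polylog_neg_mul_I_isBigO hn)

lemma tendsto_polylog_one_sub_invOneAddMulI {n : ℕ} (hn : 1 < n) :
    Tendsto (fun u : ℝ => polylog n (1 - ρ u)) (𝓝[>] 0) (𝓝 0) :=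
  tendsto_zero_of_isBigO_id (polylog_one_sub_invOneAddMulI_isBigO hn)

lemma logMulI_add_negLogOneAddMulI_isBigO_log : (fun u => τ u + ℓ u) =O[𝓝[>] 0] Real.log :=
  logMulI_isBigO_log.add
    ((tendsto_negLogOneAddMulI.isBigO_one ℂ).trans (const_isBigO_log 1))

lemma tendsto_logMulI_pow_mul_pow (j k : ℕ) :
    Tendsto (fun u => τ u ^ j * ℓ u ^ (k + 1)) (𝓝[>] 0) (𝓝 0) := by
  have h := (tendsto_pow_mul_of_isBigO_log logMulI_isBigO_log negLogOneAddMulI_isBigO j).mul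
    (tendsto_negLogOneAddMulI.pow k)
  rw [zero_mul] at h
  exact h.congr fun u => by ring

lemma tendsto_polylog_invOneAddMulI {n : ℕ} (hn : 1 < n) :
    Tendsto (fun u => polylog n (ρ u)) (𝓝[>] 0) (𝓝 (polylog n 1)) := by
  have hρ : Tendsto ρ (𝓝[>] 0) (𝓝[Metric.closedBall 0 1] 1) := by
    refine tendsto_nhdsWithin_iff.2 ⟨?_, ?_⟩
    · rw [← invOneAddMulI_zero]
      exact (hasDerivAt_invOneAddMulI 0).continuousAt.continuousWithinAt
    · filter_upwards [self_mem_nhdsWithin] with u hu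
      exact mem_closedBall_zero_iff.2 (norm_invOneAddMulI_lt_one hu).le
  exact (continuousOn_polylog hn 1 (by simp)).tendsto.comp hρ

lemma tendsto_logPrimitive₁₁ : Tendsto logPrimitive₁₁ (𝓝[>] 0) (𝓝 0) := by
  have hlim {n : ℕ} (hn : 1 < n) := tendsto_pow_mul_of_isBigO_log logMulI_isBigO_log
    (polylog_neg_mul_I_isBigO hn)
  have h := (hlim one_lt_two 1).sub (tendsto_polylog_neg_mul_I (n := 3) (by simp))
  simpa only [pow_one, sub_zero] using! h

lemma tendsto_logPrimitive₂₁ : Tendsto logPrimitive₂₁ (𝓝[>] 0) (𝓝 0) := by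
  have hlim {n : ℕ} (hn : 1 < n) := tendsto_pow_mul_of_isBigO_log logMulI_isBigO_log
    (polylog_neg_mul_I_isBigO hn)
  have h := ((hlim one_lt_two 2).sub ((hlim (n := 3) (by simp) 1).const_mul 2)).add
    ((tendsto_polylog_neg_mul_I (n := 4) (by simp)).const_mul 2)
  simpa only [pow_one, mul_zero, sub_zero, add_zero] using! h

lemma tendsto_cubePrimitive : Tendsto cubePrimitive (𝓝[>] 0) (𝓝 0) := by
  have hlim {f : ℝ → ℂ} (hf : f =O[𝓝[>] 0] fun u : ℝ => u) :=
    tendsto_pow_mul_of_isBigO_log logMulI_add_negLogOneAddMulI_isBigO_log hf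
  have hpolylog {n : ℕ} (hn : 1 < n) := hlim (polylog_one_sub_invOneAddMulI_isBigO hn)
  have h := (((hlim negLogOneAddMulI_isBigO 3).add ((hpolylog one_lt_two 2).const_mul 3)).sub
    ((hpolylog (n := 3) (by simp) 1).const_mul 6)).add
    ((tendsto_polylog_one_sub_invOneAddMulI (n := 4) (by simp)).const_mul 6)
  simpa only [pow_one, mul_zero, sub_zero, add_zero] using! h

lemma tendsto_logPrimitive₀₂ :
    Tendsto logPrimitive₀₂ (𝓝[>] 0) (𝓝 (-2 * polylog 3 1)) := by
  have hℓ := tendsto_negLogOneAddMulI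
  have h := (((tendsto_logMulI_pow_mul_pow 1 1).add (hℓ.pow 3)).add
    ((hℓ.mul (tendsto_polylog_invOneAddMulI one_lt_two)).const_mul 2)).sub
    ((tendsto_polylog_invOneAddMulI (n := 3) (by simp)).const_mul 2) |>.sub ((hℓ.pow 3).div_const 3)
  convert h using 2
  · simp only [logPrimitive₀₂]
    ring
  · ring

lemma tendsto_logPrimitive₀₃ :
    Tendsto logPrimitive₀₃ (𝓝[>] 0) (𝓝 (6 * polylog 4 1)) := by
  have hℓ := tendsto_negLogOneAddMulI
  have h := ((((tendsto_logMulI_pow_mul_pow 1 2).add (hℓ.pow 4)).add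
    (((hℓ.pow 2).mul (tendsto_polylog_invOneAddMulI one_lt_two)).const_mul 3)).sub
    ((hℓ.mul (tendsto_polylog_invOneAddMulI (n := 3) (by simp))).const_mul 6)).add
    ((tendsto_polylog_invOneAddMulI (n := 4) (by simp)).const_mul 6) |>.sub
    ((hℓ.pow 4).div_const 4)
  convert h using 2
  · simp only [logPrimitive₀₃]
    ring
  · ring

lemma tendsto_arctanLogPrimitive : Tendsto arctanLogPrimitive (𝓝[>] 0)
    (𝓝 (-4 * polylog 4 1 - 2 * (1 - 2 * κ) * polylog 3 1)) := by
  have hpoly := (((tendsto_logMulI_pow_mul_pow 3 0).add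
    ((tendsto_logMulI_pow_mul_pow 2 1).const_mul (3 / 2))).add
    (tendsto_logMulI_pow_mul_pow 1 2)).add ((tendsto_negLogOneAddMulI.pow 4).div_const 4)
  have h := (((tendsto_logPrimitive₂₁.sub (tendsto_logPrimitive₀₃.const_mul (2 / 3))).add
    (tendsto_cubePrimitive.const_mul (2 / 3))).sub (hpoly.const_mul (2 / 3))).add
    ((tendsto_logPrimitive₁₁.add tendsto_logPrimitive₀₂).const_mul (1 - 2 * κ)) |>.add
    ((tendsto_polylog_neg_mul_I one_lt_two).const_mul (κ - κ ^ 2))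
  convert h using 2
  · simp only [arctanLogPrimitive]
    ring
  · ring

/-! ### Boundary values at 1 -/

lemma continuousOn_logMulI : ContinuousOn τ (Ioc 0 1) := fun _ hu =>
  (hasDerivAt_logMulI hu.1).continuousAt.continuousWithinAt

lemma continuous_negLogOneAddMulI : Continuous ℓ :=
  continuous_iff_continuousAt.2 fun u => (hasDerivAt_negLogOneAddMulI u).continuousAt

lemma continuousOn_polylog_neg_mul_I {n : ℕ} (hn : 1 < n) :
    ContinuousOn (fun u : ℝ => polylog n (-(u * I))) (Ioc 0 1) :=
  (continuousOn_polylog hn).comp (by fun_prop) fun _ hu =>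
    mem_closedBall_zero_iff.2 ((norm_neg_mul_I hu.1.le).trans_le hu.2)

lemma continuousOn_logPrimitive₁₁ : ContinuousOn logPrimitive₁₁ (Ioc 0 1) :=
  (continuousOn_logMulI.mul (continuousOn_polylog_neg_mul_I one_lt_two)).sub
    (continuousOn_polylog_neg_mul_I (by simp))

lemma continuousOn_logPrimitive₂₁ : ContinuousOn logPrimitive₂₁ (Ioc 0 1) :=
  have hτ := continuousOn_logMulI
  have hV {n : ℕ} (hn : 1 < n) := continuousOn_polylog_neg_mul_I hn
  (((hτ.pow 2).mul (hV one_lt_two)).sub ((hτ.mul (hV (by simp))).const_mul 2)).add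
    ((hV (by simp)).const_mul 2)

lemma continuousOn_arctanLogPrimitive : ContinuousOn arctanLogPrimitive (Ioc 0 1) := by
  have hτ := continuousOn_logMulI
  have hℓ : ContinuousOn ℓ (Ioc 0 1) := continuous_negLogOneAddMulI.continuousOn
  have h₀₂ : ContinuousOn logPrimitive₀₂ (Ioc 0 1) := fun _ hu =>
    (hasDerivAt_logPrimitive₀₂ hu.1).continuousAt.continuousWithinAt
  have h₀₃ : ContinuousOn logPrimitive₀₃ (Ioc 0 1) := fun _ hu =>
    (hasDerivAt_logPrimitive₀₃ hu.1).continuousAt.continuousWithinAt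
  have hcube : ContinuousOn cubePrimitive (Ioc 0 1) := fun _ hu =>
    (hasDerivAt_cubePrimitive hu.1).continuousAt.continuousWithinAt
  have h₁₁ := continuousOn_logPrimitive₁₁
  have h₂₁ := continuousOn_logPrimitive₂₁
  have h₂ := continuousOn_polylog_neg_mul_I one_lt_two
  unfold arctanLogPrimitive
  fun_prop

lemma polylog_two_landen {u : ℝ} (hu : u ∈ Ioc (0 : ℝ) 1) :
    polylog 2 (-(u * I)) + polylog 2 (1 - ρ u) + ℓ u ^ 2 / 2 = 0 := by
  have hA {u : ℝ} (hu : 0 < u) := hasDerivAt_polylog_one_sub_invOneAddMulI 1 hu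
  have hℓ := hasDerivAt_negLogOneAddMulI
  refine eq_of_hasDerivAt_zero_of_tendsto
    (f := fun u : ℝ => polylog 2 (-(u * I)) + polylog 2 (1 - ρ u) + ℓ u ^ 2 / 2)
    (((continuousOn_polylog_neg_mul_I one_lt_two).add fun u hu =>
      (hA hu.1).continuousAt.continuousWithinAt).add
      ((continuous_negLogOneAddMulI.pow 2).div_const 2).continuousOn) (fun u hu => ?_) ?_ hu
  · refine (((hasDerivAt_polylog_neg_mul_I 1 hu).fun_add (hA hu.1)).fun_add
      (((hℓ u).fun_pow 2).div_const 2)).congr_deriv ?_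
    rw [polylog_one_neg_mul_I hu, polylog_one_one_sub_invOneAddMulI]
    push_cast
    ring
  · have h := ((tendsto_polylog_neg_mul_I one_lt_two).add
      (tendsto_polylog_one_sub_invOneAddMulI one_lt_two)).add
      ((tendsto_negLogOneAddMulI.pow 2).div_const 2)
    simpa using h

lemma polylog_two_reflection {u : ℝ} (hu : u ∈ Ioc (0 : ℝ) 1) :
    polylog 2 (1 - ρ u) + polylog 2 (ρ u) + (τ u + ℓ u) * ℓ u = polylog 2 1 := by
  have hderiv (u : ℝ) (hu : 0 < u) : HasDerivAt
      (fun u => polylog 2 (1 - ρ u) + polylog 2 (ρ u) + (τ u + ℓ u) * ℓ u) 0 u := by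
    have hℓ := hasDerivAt_negLogOneAddMulI u
    refine (((hasDerivAt_polylog_one_sub_invOneAddMulI 1 hu).fun_add
      (hasDerivAt_polylog_invOneAddMulI 1 hu)).fun_add
      (((hasDerivAt_logMulI hu).fun_add hℓ).fun_mul hℓ)).congr_deriv ?_
    rw [polylog_one_one_sub_invOneAddMulI, polylog_one_invOneAddMulI hu]
    ring
  refine eq_of_hasDerivAt_zero_of_tendsto
    (fun u hu => (hderiv u hu.1).continuousAt.continuousWithinAt) (fun u hu => hderiv u hu.1) ?_ hu
  have h := ((tendsto_polylog_one_sub_invOneAddMulI one_lt_two).add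
    (tendsto_polylog_invOneAddMulI one_lt_two)).add (tendsto_pow_mul_of_isBigO_log
      logMulI_add_negLogOneAddMulI_isBigO_log negLogOneAddMulI_isBigO 1)
  simpa using h

lemma polylog_three_landen {u : ℝ} (hu : u ∈ Ioc (0 : ℝ) 1) :
    polylog 3 (1 - ρ u) + polylog 3 (ρ u) + polylog 3 (-(u * I)) + (τ u + ℓ u) * ℓ u ^ 2 / 2 -
      polylog 2 1 * ℓ u - ℓ u ^ 3 / 6 = polylog 3 1 := by
  have hA {u : ℝ} (hu : 0 < u) := hasDerivAt_polylog_one_sub_invOneAddMulI 2 hu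
  have hC {u : ℝ} (hu : 0 < u) := hasDerivAt_polylog_invOneAddMulI 2 hu
  have hℓ := hasDerivAt_negLogOneAddMulI
  have hcont := continuous_negLogOneAddMulI
  refine eq_of_hasDerivAt_zero_of_tendsto (f := fun u : ℝ => polylog 3 (1 - ρ u) +
    polylog 3 (ρ u) + polylog 3 (-(u * I)) + (τ u + ℓ u) * ℓ u ^ 2 / 2 -
      polylog 2 1 * ℓ u - ℓ u ^ 3 / 6) ?_ (fun u hu => ?_) ?_ hu
  · have hτ := continuousOn_logMulI
    have hA' : ContinuousOn (fun u => polylog 3 (1 - ρ u)) (Ioc 0 1) := fun _ hu =>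
      (hA hu.1).continuousAt.continuousWithinAt
    have hC' : ContinuousOn (fun u => polylog 3 (ρ u)) (Ioc 0 1) := fun _ hu =>
      (hC hu.1).continuousAt.continuousWithinAt
    have hV := continuousOn_polylog_neg_mul_I (n := 3) (by simp)
    fun_prop
  · refine ((((((hA hu.1).fun_add (hC hu.1)).fun_add (hasDerivAt_polylog_neg_mul_I 2 hu)).fun_add
      ((((hasDerivAt_logMulI hu.1).fun_add (hℓ u)).fun_mul ((hℓ u).fun_pow 2)).div_const
        2)).fun_sub ((hℓ u).const_mul (polylog 2 1))).fun_sub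
      (((hℓ u).fun_pow 3).div_const 6)).congr_deriv ?_
    have hlanden := polylog_two_landen (Ioo_subset_Ioc_self hu)
    have hreflection := polylog_two_reflection (Ioo_subset_Ioc_self hu)
    push_cast
    linear_combination (1 / u : ℂ) * hlanden - I * ρ u * hreflection
  · have hα := tendsto_pow_mul_of_isBigO_log logMulI_add_negLogOneAddMulI_isBigO_log
      negLogOneAddMulI_isBigO 1
    have hℓ := tendsto_negLogOneAddMulI
    have h := (((((tendsto_polylog_one_sub_invOneAddMulI (n := 3) (by simp)).add
      (tendsto_polylog_invOneAddMulI (n := 3) (by simp))).add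
      (tendsto_polylog_neg_mul_I (n := 3) (by simp))).add ((hα.mul hℓ).div_const 2)).sub
      (hℓ.const_mul (polylog 2 1))).sub ((hℓ.pow 3).div_const 6)
    convert h using 2
    · ring
    · ring

lemma logMulI_one : τ 1 = π / 2 * I := by simp [logMulI]

lemma negLogOneAddMulI_one : ℓ 1 = -(Real.log 2 / 2) - π / 4 * I := by
  rw [negLogOneAddMulI_eq, Real.arctan_one]
  norm_num

lemma one_sub_invOneAddMulI_one : 1 - ρ 1 = (1 + I) / 2 := by
  rw [invOneAddMulI, ofReal_one, one_mul, inv_eq_of_mul_eq_one_right (b := (1 - I) / 2)]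
  · ring
  · linear_combination -I_sq / 2

lemma polylog_invOneAddMulI_one (n : ℕ) :
    polylog n (ρ 1) = (starRingEnd ℂ) (polylog n ((1 + I) / 2)) := by
  have hconj : ρ 1 = (starRingEnd ℂ) ((1 + I) / 2) := by
    rw [← sub_sub_cancel 1 (ρ 1), one_sub_invOneAddMulI_one]
    simp only [map_div₀, map_add, map_one, conj_I, map_ofNat]
    ring
  rw [hconj, polylog_conj]

lemma polylog_two_half_one_add_I_im :
    (polylog 2 ((1 + I) / 2)).im = dirichletBeta 2 - π * Real.log 2 / 8 := by
  have h := congrArg im (polylog_two_landen (right_mem_Ioc.2 one_pos))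
  rw [ofReal_one, one_mul, one_sub_invOneAddMulI_one, negLogOneAddMulI_one] at h
  simp only [pow_succ, pow_zero, ← ofReal_ofNat, add_im, sub_re, sub_im, neg_re, neg_im, mul_re,
    mul_im, div_ofReal_re, div_ofReal_im, ofReal_re, ofReal_im, I_re, I_im, one_re, one_im, zero_im,
    polylog_neg_I_im one_lt_two] at h
  linear_combination h

lemma polylog_two_half_one_add_I_re :
    (polylog 2 ((1 + I) / 2)).re = 5 * π ^ 2 / 96 - Real.log 2 ^ 2 / 8 := by
  have h := congrArg re (polylog_two_reflection (right_mem_Ioc.2 one_pos))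
  rw [one_sub_invOneAddMulI_one, polylog_invOneAddMulI_one, logMulI_one, negLogOneAddMulI_one,
    polylog_two_one] at h
  simp only [pow_succ, pow_zero, ← ofReal_ofNat, add_re, add_im, sub_re, sub_im,
    neg_re, neg_im, mul_re, mul_im, div_ofReal_re, div_ofReal_im, ofReal_re, ofReal_im, I_re, I_im,
    conj_re] at h
  linear_combination h / 2

lemma polylog_three_half_one_add_I_re :
    2 * (polylog 3 ((1 + I) / 2)).re + (polylog 3 (-I)).re =
      (polylog 3 1).re + Real.log 2 ^ 3 / 24 - 5 * π ^ 2 * Real.log 2 / 96 := by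
  have h := congrArg re (polylog_three_landen (right_mem_Ioc.2 one_pos))
  rw [ofReal_one, one_mul, one_sub_invOneAddMulI_one, polylog_invOneAddMulI_one, logMulI_one,
    negLogOneAddMulI_one, polylog_two_one] at h
  simp only [pow_succ, pow_zero, ← ofReal_ofNat, add_re, add_im, sub_re, sub_im,
    neg_re, neg_im, mul_re, mul_im, div_ofReal_re, div_ofReal_im, ofReal_re, ofReal_im, I_re, I_im,
    one_re, one_im, conj_re] at h
  linear_combination h

lemma arctanLogPrimitive_one_im_sub :
    (arctanLogPrimitive 1).im -
        (-4 * polylog 4 1 - 2 * (1 - 2 * κ) * polylog 3 1).im +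
        4 / 3 * (3 * π ^ 2 / 16 * dirichletBeta 2 - 3 / 2 * dirichletBeta 4) =
      8 * (polylog 4 ((1 + I) / 2)).im + 2 * (polylog 3 ((1 + I) / 2)).im - 4 * dirichletBeta 4 +
        π * Real.log 2 ^ 3 / 24 + π ^ 3 * Real.log 2 / 32 - π ^ 3 / 64 -
        π * Real.log 2 ^ 2 / 16 := by
  have h₄ : (polylog 4 1).im = 0 := by rw [polylog_one_right, ofReal_im]
  have h₃ : (polylog 3 1).im = 0 := by rw [polylog_one_right, ofReal_im]
  unfold arctanLogPrimitive logPrimitive₂₁ logPrimitive₁₁ logPrimitive₀₂ logPrimitive₀₃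
    cubePrimitive logShift
  rw [ofReal_one, one_mul, one_sub_invOneAddMulI_one, polylog_invOneAddMulI_one,
    polylog_invOneAddMulI_one, polylog_invOneAddMulI_one, logMulI_one, negLogOneAddMulI_one]
  simp only [pow_succ, pow_zero, ← ofReal_ofNat, add_re, add_im, sub_re, sub_im,
    neg_re, neg_im, mul_re, mul_im, div_ofReal_re, div_ofReal_im, ofReal_re, ofReal_im, I_re, I_im,
    one_re, one_im, conj_re, conj_im, polylog_neg_I_im, Nat.one_lt_ofNat, h₃, h₄]
  linear_combination -2 * π * polylog_three_half_one_add_I_re -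
    (π * Real.log 2 + π / 2) * polylog_two_half_one_add_I_re +
    (Real.log 2 - Real.log 2 ^ 2 - 3 * π ^ 2 / 4) * polylog_two_half_one_add_I_im +
    (1 - 2 * Real.log 2) * dirichletBeta_three

lemma integrableOn_arctanLogIntegrand_and_integral :
    IntegrableOn arctanLogIntegrand (Ioo 0 1) ∧
    ∫ u in Ioo (0 : ℝ) 1, arctanLogIntegrand u =
      8 * (polylog 4 ((1 + I) / 2)).im + 2 * (polylog 3 ((1 + I) / 2)).im - 4 * dirichletBeta 4 +
        π * Real.log 2 ^ 3 / 24 + π ^ 3 * Real.log 2 / 32 - π ^ 3 / 64 -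
        π * Real.log 2 ^ 2 / 16 := by
  have hcubic (u : ℝ) : HasDerivAt (fun u : ℝ => ∫ v in (0 : ℝ)..u, Real.arctan v ^ 3 / v)
      (Real.arctan u ^ 3 / u) u := 
    (continuous_arctan_pow_three_div.integral_hasStrictDerivAt 0 u).hasDerivAt
  have hderiv (u : ℝ) (hu : u ∈ Ioo (0 : ℝ) 1) : HasDerivAt (fun u => (arctanLogPrimitive u).im +
      4 / 3 * ∫ v in (0 : ℝ)..u, Real.arctan v ^ 3 / v) (arctanLogIntegrand u) u :=
    ((hasDerivAt_arctanLogPrimitive_im hu).add ((hcubic u).const_mul (4 / 3))).congr_deriv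
      (by ring)
  have hzero := (continuous_im.tendsto _ |>.comp tendsto_arctanLogPrimitive).add
    (((hcubic 0).continuousAt.tendsto.mono_left nhdsWithin_le_nhds).const_mul (4 / 3))
  have hone := (continuous_im.tendsto _ |>.comp
    ((continuousOn_arctanLogPrimitive 1 (right_mem_Ioc.2 one_pos)).tendsto.mono_left
      (nhdsWithin_le_of_mem (Ioc_mem_nhdsLT one_pos)))).add
    (((hcubic 1).continuousAt.tendsto.mono_left nhdsWithin_le_nhds).const_mul (4 / 3))
  have hint := integrableOn_Ioo_of_hasDerivAt_of_nonneg hderiv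
    (fun u hu => arctanLogIntegrand_nonneg hu) hzero hone
  refine ⟨hint, ?_⟩
  rw [integral_Ioo_of_hasDerivAt_of_tendsto one_pos hderiv hint hzero hone,
    integral_arctan_pow_three_div, intervalIntegral.integral_same, ← arctanLogPrimitive_one_im_sub]
  ring

lemma tsum_summand_eq_integral_sub_integral :
    ∑' p : {p : ℕ × ℕ // p.2 < p.1}, summand p.1.1 p.1.2 =
      (∫ y in Ioo (0 : ℝ) 1, triangleMarginal y) -
        2 * ∫ u in Ioo (0 : ℝ) 1, arctanLogIntegrand u := by
  obtain ⟨hmarginal, -⟩ := integrableOn_triangleMarginal_and_integral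
  have harctan := integrableOn_arctanLogIntegrand_and_integral.1.const_mul 2
  have hmarginal_nonneg (y : ℝ) (hy : y ∈ Ioo (0 : ℝ) 1) := triangleMarginal_nonneg hy
  have harctan_nonneg (u : ℝ) (hu : u ∈ Ioo (0 : ℝ) 1) : 0 ≤ 2 * arctanLogIntegrand u :=
    mul_nonneg zero_le_two (arctanLogIntegrand_nonneg hu)
  have hadd := lintegral_kernel_add
  rw [← tsum_summand_eq_lintegral, lintegral_neg_log_mul_kernel, lintegral_log_mul_kernel,
    setLIntegral_ofReal measurableSet_Ioo harctan harctan_nonneg,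
    setLIntegral_ofReal measurableSet_Ioo hmarginal hmarginal_nonneg] at hadd
  have hfinite : ∑' p : {p : ℕ × ℕ // p.2 < p.1}, ENNReal.ofReal (summand p.1.1 p.1.2) ≠ ⊤ :=
    ne_top_of_le_ne_top ENNReal.ofReal_ne_top (le_self_add.trans hadd.le)
  have hreal := congrArg ENNReal.toReal hadd
  rw [ENNReal.toReal_add hfinite ENNReal.ofReal_ne_top,
    ENNReal.tsum_toReal_eq fun _ => ENNReal.ofReal_ne_top,
    ENNReal.toReal_ofReal (setIntegral_nonneg measurableSet_Ioo harctan_nonneg),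
    ENNReal.toReal_ofReal (setIntegral_nonneg measurableSet_Ioo hmarginal_nonneg),
    integral_const_mul] at hreal
  simp only [ENNReal.toReal_ofReal (summand_nonneg _ _)] at hreal
  exact eq_sub_of_add_eq hreal

end CentralBinomialSum

open CentralBinomialSum

/-- `∑_{n₁ > n₂ ≥ 0} 4^{n₁}/(binom(2n₁,n₁)(2n₁−1)²(2n₂+1))
  = 14β(4) − 16 Im Li₄((1+i)/2) − π log³2/12 − 3π³ log2/16
    + π log²2/8 + 5π³/32 − 4 Im Li₃((1+i)/2)`. -/
theorem stmt13 :
    (∑' p : {p : ℕ × ℕ // p.2 < p.1},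
      (4 : ℝ) ^ p.1.1 /
        ((Nat.choose (2 * p.1.1) p.1.1 : ℝ) * (2 * (p.1.1 : ℝ) - 1) ^ 2 *
          (2 * (p.1.2 : ℝ) + 1))) =
    14 * (∑' k : ℕ, (-1 : ℝ) ^ k / (2 * (k : ℝ) + 1) ^ 4) -
      16 * (∑' n : ℕ, ((1 + Complex.I) / 2) ^ (n + 1) / ((n : ℂ) + 1) ^ 4).im -
      π * Real.log 2 ^ 3 / 12 - 3 * π ^ 3 * Real.log 2 / 16 +
      π * Real.log 2 ^ 2 / 8 + 5 * π ^ 3 / 32 -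
      4 * (∑' n : ℕ, ((1 + Complex.I) / 2) ^ (n + 1) / ((n : ℂ) + 1) ^ 3).im := by
  have hsum := tsum_summand_eq_integral_sub_integral
  rw [integrableOn_triangleMarginal_and_integral.2, integrableOn_arctanLogIntegrand_and_integral.2,
    dirichletBeta_three] at hsum
  unfold summand dirichletBeta polylog at hsum
  linear_combination hsum
end

section
/- We have ∑_{n₁ ≥ n₂ ≥ 1} 4^{n₁} / (binom(2n₁, n₁) · (2n₁+1)² · (2n₂−1)) = 3π³/16 − 8 · Im(∑_{n=1}^∞ ((1+i)/2)^n / n³) + (π (log 2)²)/4, where the double sum is over integers n₁ ≥ n₂ ≥ 1. -/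
open Real Complex

/-!
Integration by parts and Wallis' formula give
`∫ x cos²ⁿ x sin x = 4ⁿ / (binom(2n, n) (2n + 1)²)` over `[0, π/2]`. Summing a geometric series and
the series of `artanh (cos x)` under the integral sign therefore turns the double sum into
`-∫ x cot x log tan (x/2)`.

After `x = 2θ` the integrand becomes `-4θ cot 2θ log tan θ` on `[0, π/4]`. Completing the square in
`log tan θ` and `log (2 cos θ)` writes it as `log² (2 sin 2θ)` plus an exact derivative built from
`Ti₂(tan θ)`, `Im F(i tan θ)` and `Im F(e^{2iθ})`, where `F` is a primitive of `log² (1 + w) / w`.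
The parallelogram identity for `log (2 sin θ)` and `log (2 cos θ)` reduces `∫ log² (2 sin 2θ)` to
`∫ log² tan θ = π³/16`. In the boundary value `F(i)`, Landen's identity evaluates
`Li₂((1 + i)⁻¹)`, and `(1 + i)⁻¹` being the conjugate of `(1 + i)/2` brings in `Li₃((1 + i)/2)`.
-/

section

open Filter Topology Set MeasureTheory

/-! ### Polylogarithms of nonnegative integer order -/

/-- The polylogarithm `Liₛ(z) = ∑_{n ≥ 1} zⁿ / nˢ` of nonnegative integer order, defined by its
power series; it has the junk value `0` wherever that series does not converge. -/
noncomputable def polylog (s : ℕ) (z : ℂ) : ℂ := ∑' n : ℕ, z ^ (n + 1) / ((n : ℂ) + 1) ^ s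

lemma norm_natCast_add_one (n : ℕ) : ‖(n : ℂ) + 1‖ = n + 1 := by
  exact_mod_cast Complex.norm_natCast (n + 1)

lemma hasDerivAt_polylog_add_one (s : ℕ) {z : ℂ} (hz : ‖z‖ < 1) :
    HasDerivAt (polylog (s + 1)) (∑' n : ℕ, z ^ n / ((n : ℂ) + 1) ^ s) z := by
  obtain ⟨r, hzr, hr1⟩ := exists_between hz
  have hr0 : 0 < r := (norm_nonneg z).trans_lt hzr
  refine hasDerivAt_tsum_of_isPreconnected (t := Metric.ball 0 r) (y₀ := 0)
    (g := fun (n : ℕ) y => y ^ (n + 1) / ((n : ℂ) + 1) ^ (s + 1))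
    (g' := fun n y => y ^ n / ((n : ℂ) + 1) ^ s)
    (summable_geometric_of_lt_one hr0.le hr1) Metric.isOpen_ball
    (convex_ball (0 : ℂ) r).isPreconnected (fun n y _ => ?_) (fun n y hy => ?_)
    (Metric.mem_ball_self hr0) ?_ (by simpa using hzr)
  · have hn : (n : ℂ) + 1 ≠ 0 := by exact_mod_cast n.succ_ne_zero
    refine ((hasDerivAt_pow (n + 1) y).div_const _).congr_deriv ?_
    rw [Nat.add_sub_cancel]
    push_cast
    field_simp
    ring
  · rw [norm_div, norm_pow, norm_pow, norm_natCast_add_one]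
    exact (div_le_self (by positivity) (one_le_pow₀ (by simp))).trans
      (pow_le_pow_left₀ (norm_nonneg y) (mem_ball_zero_iff.1 hy).le n)
  · simp [summable_zero]

lemma hasDerivAt_polylog_add_one_of_ne_zero (s : ℕ) {z : ℂ} (hz : ‖z‖ < 1) (hz₀ : z ≠ 0) :
    HasDerivAt (polylog (s + 1)) (polylog s z / z) z := by
  refine (hasDerivAt_polylog_add_one s hz).congr_deriv ?_
  rw [polylog, ← tsum_div_const]
  refine tsum_congr fun n => ?_
  field_simp
  exact (pow_succ z n).symm

lemma polylog_one {z : ℂ} (hz : ‖z‖ < 1) : polylog 1 z = -Complex.log (1 - z) := by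
  simpa [polylog] using (Complex.hasSum_taylorSeries_neg_log' hz).tsum_eq

lemma hasDerivAt_polylog_two {z : ℂ} (hz : ‖z‖ < 1) (hz₀ : z ≠ 0) :
    HasDerivAt (polylog 2) (-Complex.log (1 - z) / z) z :=
  polylog_one hz ▸ hasDerivAt_polylog_add_one_of_ne_zero 1 hz hz₀

@[simp]
lemma polylog_zero (s : ℕ) : polylog s 0 = 0 := by
  simp [polylog]

lemma polylog_conj (s : ℕ) (z : ℂ) :
    polylog s ((starRingEnd ℂ) z) = (starRingEnd ℂ) (polylog s z) := by
  simp [polylog, Complex.conj_tsum]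

lemma polylog_ofReal_im (s : ℕ) (x : ℝ) : (polylog s x).im = 0 := by
  rw [← Complex.conj_eq_iff_im, ← polylog_conj, Complex.conj_ofReal]

section

variable {s : ℕ}

lemma summable_one_div_nat_add_one_sq : Summable fun n : ℕ => 1 / ((n : ℝ) + 1) ^ 2 := by
  exact_mod_cast (summable_nat_add_iff 1).2 (Real.summable_one_div_nat_pow.2 one_lt_two)

lemma norm_polylog_term_le (hs : 2 ≤ s) {z : ℂ} (hz : ‖z‖ ≤ 1) (n : ℕ) :
    ‖z ^ (n + 1) / ((n : ℂ) + 1) ^ s‖ ≤ 1 / ((n : ℝ) + 1) ^ 2 := by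
  rw [norm_div, norm_pow, norm_pow, norm_natCast_add_one]
  exact div_le_div₀ one_pos.le (pow_le_one₀ (norm_nonneg z) hz) (by positivity)
    (pow_le_pow_right₀ (by simp) hs)

lemma hasSum_polylog (hs : 2 ≤ s) {z : ℂ} (hz : ‖z‖ ≤ 1) :
    HasSum (fun n : ℕ => z ^ (n + 1) / ((n : ℂ) + 1) ^ s) (polylog s z) :=
  (Summable.of_norm_bounded summable_one_div_nat_add_one_sq
    (norm_polylog_term_le hs hz)).hasSum

lemma continuousOn_polylog (hs : 2 ≤ s) : ContinuousOn (polylog s) (Metric.closedBall 0 1) :=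
  continuousOn_tsum (fun n => by fun_prop) summable_one_div_nat_add_one_sq
    fun n _ hz => norm_polylog_term_le hs (mem_closedBall_zero_iff.1 hz) n

lemma exp_pow_div_natCast_add_one_pow (x : ℝ) (n : ℕ) :
    Complex.exp ((2 * π * x : ℝ) * Complex.I) ^ (n + 1) / ((n : ℂ) + 1) ^ s =
      Complex.exp ((2 * π * (n + 1 : ℕ) * x : ℝ) * Complex.I) /
        ((((n + 1 : ℕ) : ℝ) ^ s : ℝ) : ℂ) := by
  rw [← Complex.exp_nat_mul]
  congr 2 <;> push_cast <;> ring

lemma hasSum_re_polylog_exp (hs : 2 ≤ s) (x : ℝ) :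
    HasSum (fun n : ℕ => 1 / (n : ℝ) ^ s * Real.cos (2 * π * n * x))
      (polylog s (Complex.exp ((2 * π * x : ℝ) * Complex.I))).re := by
  have hs₀ : s ≠ 0 := by omega
  have hsum := Complex.hasSum_re
    (hasSum_polylog hs (Complex.norm_exp_ofReal_mul_I (2 * π * x)).le)
  simp_rw [exp_pow_div_natCast_add_one_pow, Complex.div_ofReal_re,
    Complex.exp_ofReal_mul_I_re] at hsum
  rw [← hasSum_nat_add_iff' 1]
  simpa [hs₀, div_eq_inv_mul] using hsum

lemma hasSum_im_polylog_exp (hs : 2 ≤ s) (x : ℝ) :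
    HasSum (fun n : ℕ => 1 / (n : ℝ) ^ s * Real.sin (2 * π * n * x))
      (polylog s (Complex.exp ((2 * π * x : ℝ) * Complex.I))).im := by
  have hsum := Complex.hasSum_im
    (hasSum_polylog hs (Complex.norm_exp_ofReal_mul_I (2 * π * x)).le)
  simp_rw [exp_pow_div_natCast_add_one_pow, Complex.div_ofReal_im,
    Complex.exp_ofReal_mul_I_im] at hsum
  rw [← hasSum_nat_add_iff' 1]
  simpa [div_eq_inv_mul] using hsum

end

lemma exp_two_pi_mul_quarter_mul_I :
    Complex.exp ((2 * π * (1 / 4) : ℝ) * Complex.I) = Complex.I := by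
  convert Complex.exp_pi_div_two_mul_I using 3
  push_cast
  ring

lemma polylog_two_I_re : (polylog 2 Complex.I).re = -(π ^ 2 / 48) := by
  have hsum := hasSum_re_polylog_exp le_rfl (1 / 4)
  rw [exp_two_pi_mul_quarter_mul_I] at hsum
  rw [hsum.unique (hasSum_one_div_nat_pow_mul_cos one_ne_zero (by norm_num))]
  change _ * bernoulliFun (2 * 1) (1 / 4) = _
  rw [mul_one, bernoulliFun_two, Nat.factorial_two]
  push_cast
  ring

lemma polylog_three_I_im : (polylog 3 Complex.I).im = π ^ 3 / 32 := by
  have hsum := hasSum_im_polylog_exp (s := 3) (by norm_num) (1 / 4)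
  rw [exp_two_pi_mul_quarter_mul_I] at hsum
  refine hsum.unique (hasSum_L_function_mod_four_eval_three.congr_fun fun n => ?_)
  ring_nf

lemma hasDerivAt_comp_ofReal_curve {f : ℂ → ℂ} {v : ℝ → ℂ} {f' v' : ℂ} {x : ℝ}
    (hf : HasDerivAt f f' (v x)) (hv : HasDerivAt v v' x) :
    HasDerivAt (fun y => f (v y)) (f' * v') x :=
  (HasDerivAt.scomp x hf hv).congr_deriv (by simp [mul_comm])

/-! ### Landen's identity -/

lemma norm_div_sub_one_le_one {z : ℂ} (hz : z.re ≤ 1 / 2) : ‖z / (z - 1)‖ ≤ 1 := by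
  rw [norm_div]
  refine div_le_one_of_le₀ ?_ (norm_nonneg _)
  rw [← sq_le_sq₀ (norm_nonneg _) (norm_nonneg _), Complex.sq_norm, Complex.sq_norm,
    Complex.normSq_apply, Complex.normSq_apply, Complex.sub_re, Complex.sub_im, Complex.one_re,
    Complex.one_im]
  linarith

lemma norm_div_sub_one_lt_one {z : ℂ} (hz : z.re < 1 / 2) : ‖z / (z - 1)‖ < 1 := by
  have hne : z - 1 ≠ 0 := fun h => by
    rw [sub_eq_zero.1 h, Complex.one_re] at hz
    norm_num at hz
  rw [norm_div, div_lt_one (norm_pos_iff.2 hne), ← sq_lt_sq₀ (norm_nonneg _) (norm_nonneg _),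
    Complex.sq_norm, Complex.sq_norm, Complex.normSq_apply, Complex.normSq_apply, Complex.sub_re,
    Complex.sub_im, Complex.one_re, Complex.one_im]
  linarith

lemma one_sub_mem_slitPlane {z : ℂ} (hz : z.re ≤ 1 / 2) : 1 - z ∈ Complex.slitPlane := by
  left
  rw [Complex.sub_re, Complex.one_re]
  linarith

lemma hasDerivAt_polylog_two_landen {z : ℂ} (hz : ‖z‖ < 1) (hre : z.re < 1 / 2) (hz₀ : z ≠ 0) :
    HasDerivAt (fun w => polylog 2 w + polylog 2 (w / (w - 1)) + Complex.log (1 - w) ^ 2 / 2)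
      0 z := by
  have hslit := one_sub_mem_slitPlane hre.le
  have hne : z - 1 ≠ 0 := by
    rw [← neg_sub]
    exact neg_ne_zero.2 (Complex.slitPlane_ne_zero hslit)
  have hlog : Complex.log (1 - z / (z - 1)) = -Complex.log (1 - z) := by
    rw [← Complex.log_inv _ (Complex.mem_slitPlane_iff_arg.1 hslit).1]
    congr 1
    refine eq_inv_of_mul_eq_one_left ?_
    field_simp
    ring
  have hdiv : HasDerivAt (fun w : ℂ => w / (w - 1)) (-1 / (z - 1) ^ 2) z :=
    ((hasDerivAt_id z).div ((hasDerivAt_id z).sub_const 1) hne).congr_deriv (by simp)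
  have hlog' := (((hasDerivAt_id z).const_sub 1).clog hslit).pow 2 |>.div_const 2
  refine (((hasDerivAt_polylog_two hz hz₀).add
    ((hasDerivAt_polylog_two (norm_div_sub_one_lt_one hre) (div_ne_zero hz₀ hne)).comp z
      hdiv)).add hlog').congr_deriv ?_
  have hne' := Complex.slitPlane_ne_zero hslit
  simp only [id, hlog]
  field_simp
  ring

lemma polylog_two_add_polylog_two_div_sub_one {z : ℂ} (hz : ‖z‖ ≤ 1) (hre : z.re ≤ 1 / 2) :
    polylog 2 z + polylog 2 (z / (z - 1)) = -(Complex.log (1 - z) ^ 2 / 2) := by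
  rcases eq_or_ne z 0 with rfl | hz₀
  · simp
  have hre_le {t : ℝ} (ht : t ∈ Icc (0 : ℝ) 1) : (t * z).re ≤ 1 / 2 := by
    rw [Complex.re_ofReal_mul]
    nlinarith [ht.1, ht.2]
  have hnorm_le {t : ℝ} (ht : t ∈ Icc (0 : ℝ) 1) : ‖t * z‖ ≤ 1 := by
    rw [norm_mul, Complex.norm_of_nonneg ht.1]
    exact mul_le_one₀ ht.2 (norm_nonneg z) hz
  set f : ℂ → ℂ := fun w => polylog 2 w + polylog 2 (w / (w - 1)) + Complex.log (1 - w) ^ 2 / 2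
  have hcont : ContinuousOn (fun t : ℝ => f (t * z)) (Icc 0 1) := by
    have hLi := continuousOn_polylog (le_refl 2)
    refine ((hLi.comp (by fun_prop) fun t ht => ?_).add
      (hLi.comp (ContinuousOn.div (by fun_prop) (by fun_prop) fun t ht => ?_) fun t ht => ?_)).add
      (((ContinuousOn.clog (by fun_prop) fun t ht => ?_).pow 2).div_const 2)
    · exact mem_closedBall_zero_iff.2 (hnorm_le ht)
    · rw [← neg_sub]
      exact neg_ne_zero.2 (Complex.slitPlane_ne_zero (one_sub_mem_slitPlane (hre_le ht)))
    · exact mem_closedBall_zero_iff.2 (norm_div_sub_one_le_one (hre_le ht))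
    · exact one_sub_mem_slitPlane (hre_le ht)
  have hderiv : ∀ t ∈ Ioo (0 : ℝ) 1, HasDerivAt (fun t : ℝ => f (t * z)) 0 t := fun t ht => by
    have hnorm : ‖t * z‖ < 1 := by
      rw [norm_mul, Complex.norm_of_nonneg ht.1.le]
      exact mul_lt_one_of_nonneg_of_lt_one_left ht.1.le ht.2 hz
    have hre' : (t * z).re < 1 / 2 := by
      rw [Complex.re_ofReal_mul]
      nlinarith [ht.1, ht.2]
    have hne : (t : ℂ) * z ≠ 0 := mul_ne_zero (Complex.ofReal_ne_zero.2 ht.1.ne') hz₀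
    exact (hasDerivAt_comp_ofReal_curve (v := fun t : ℝ => t * z)
      (hasDerivAt_polylog_two_landen hnorm hre' hne)
      ((hasDerivAt_id t).ofReal_comp.mul_const z)).congr_deriv (zero_mul _)
  have hconst := intervalIntegral.integral_eq_sub_of_hasDerivAt_of_le zero_le_one hcont hderiv
    (by simp)
  have hf : f z = 0 := by simpa [f, eq_comm] using hconst
  exact eq_neg_of_add_eq_zero_left hf

/-! ### A primitive of `log² (1 + w) / w` -/

/-- An explicit primitive, through polylogarithms, of `w ↦ log² (1 + w) / w` on the closed right
half-plane punctured at `0`. -/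
noncomputable def logSqPrimitive (w : ℂ) : ℂ :=
  Complex.log w * Complex.log (1 + w) ^ 2 - 2 / 3 * Complex.log (1 + w) ^ 3 -
    2 * Complex.log (1 + w) * polylog 2 (1 + w)⁻¹ - 2 * polylog 3 (1 + w)⁻¹

lemma one_add_mem_slitPlane {w : ℂ} (hre : 0 ≤ w.re) : 1 + w ∈ Complex.slitPlane := by
  left
  rw [Complex.add_re, Complex.one_re]
  linarith

lemma mem_slitPlane_of_re_nonneg {w : ℂ} (hre : 0 ≤ w.re) (hw : w ≠ 0) :
    w ∈ Complex.slitPlane :=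
  Complex.mem_slitPlane_iff_not_le_zero.2 fun h => by
    obtain ⟨h₁, h₂⟩ := Complex.le_def.1 h
    exact hw (Complex.ext (le_antisymm h₁ hre) h₂)

lemma log_one_sub_one_add_inv {w : ℂ} (hre : 0 ≤ w.re) (hw : w ≠ 0) :
    Complex.log (1 - (1 + w)⁻¹) = Complex.log w - Complex.log (1 + w) := by
  have hslit := one_add_mem_slitPlane hre
  have hne := Complex.slitPlane_ne_zero hslit
  have harg := abs_le.1 (Complex.abs_arg_le_pi_div_two_iff.2 hre)
  have hpos : 0 < (1 + w).re := by
    rw [Complex.add_re, Complex.one_re]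
    linarith
  have harg' := abs_lt.1 (Complex.abs_arg_lt_pi_div_two_iff.2 (Or.inl hpos))
  have hpi := (Complex.mem_slitPlane_iff_arg.1 hslit).1
  rw [sub_eq_add_neg (Complex.log w), ← Complex.log_inv _ hpi,
    ← (Complex.log_mul_eq_add_log_iff hw (inv_ne_zero hne)).2]
  · congr 1
    field_simp
    ring
  · rw [Complex.arg_inv, if_neg hpi]
    constructor <;> linarith

lemma norm_one_add_inv_le_one {w : ℂ} (hre : 0 ≤ w.re) : ‖(1 + w)⁻¹‖ ≤ 1 := by
  rw [norm_inv]
  refine inv_le_one_of_one_le₀ (le_trans ?_ (Complex.re_le_norm (1 + w)))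
  rw [Complex.add_re, Complex.one_re]
  linarith

lemma norm_one_add_inv_lt_one {w : ℂ} (hre : 0 ≤ w.re) (hw : w ≠ 0) : ‖(1 + w)⁻¹‖ < 1 := by
  rw [norm_inv]
  refine inv_lt_one_of_one_lt₀ ((one_lt_sq_iff₀ (norm_nonneg _)).1 ?_)
  have hpos := Complex.normSq_pos.2 hw
  rw [Complex.normSq_apply] at hpos
  rw [Complex.sq_norm, Complex.normSq_apply, Complex.add_re, Complex.add_im, Complex.one_re,
    Complex.one_im]
  linarith

lemma hasDerivAt_logSqPrimitive {w : ℂ} (hre : 0 ≤ w.re) (hw : w ≠ 0) :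
    HasDerivAt logSqPrimitive (Complex.log (1 + w) ^ 2 / w) w := by
  have hslit := one_add_mem_slitPlane hre
  have hne := Complex.slitPlane_ne_zero hslit
  have hnorm := norm_one_add_inv_lt_one hre hw
  have hadd := (hasDerivAt_id w).const_add 1
  have hinv := hadd.fun_inv hne
  have hL := hadd.clog hslit
  have hLi₂ := (hasDerivAt_polylog_two hnorm (inv_ne_zero hne)).comp w hinv
  have hLi₃ :=
    (hasDerivAt_polylog_add_one_of_ne_zero 2 hnorm (inv_ne_zero hne)).comp w hinv
  refine (((((Complex.hasDerivAt_log (mem_slitPlane_of_re_nonneg hre hw)).mul (hL.pow 2)).sub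
    ((hL.pow 3).const_mul (2 / 3))).sub ((hL.const_mul 2).mul hLi₂)).sub
    (hLi₃.const_mul 2)).congr_deriv ?_
  simp only [id, Function.comp_apply, Pi.pow_apply, log_one_sub_one_add_inv hre hw]
  field_simp
  ring

lemma logSqPrimitive_ofReal_im {x : ℝ} (hx : 0 ≤ x) : (logSqPrimitive x).im = 0 := by
  have hlog : Complex.log x = Real.log x := (Complex.ofReal_log hx).symm
  have hlog' : Complex.log (1 + x) = Real.log (1 + x) := by
    rw [Complex.ofReal_log (by linarith)]
    push_cast
    rfl
  have hinv : (1 + x : ℂ)⁻¹ = ((1 + x)⁻¹ : ℝ) := by push_cast; rfl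
  rw [logSqPrimitive, hlog, hlog', hinv]
  simp [← Complex.ofReal_pow, -Complex.ofReal_inv, polylog_ofReal_im, Complex.mul_im]

lemma log_one_add_ofReal_mul_I (u : ℝ) :
    Complex.log (1 + u * Complex.I) =
      (Real.log (1 + u ^ 2) / 2 : ℝ) + (Real.arctan u : ℝ) * Complex.I := by
  have hnorm : ‖1 + u * Complex.I‖ ^ 2 = 1 + u ^ 2 := by
    simp only [Complex.sq_norm, Complex.normSq_apply, Complex.add_re, Complex.one_re,
      Complex.re_ofReal_mul, Complex.I_re, mul_zero, add_zero, Complex.add_im, Complex.one_im,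
      Complex.im_ofReal_mul, Complex.I_im, mul_one, zero_add]
    ring
  apply Complex.ext
  · simp [-Complex.ofReal_arctan, Complex.log_re, ← hnorm]
  · rw [Complex.log_im, Complex.arg_of_re_nonneg (by simp)]
    simp [-Complex.ofReal_arctan, Real.arctan_eq_arcsin, ← hnorm]

lemma logSqPrimitive_I_im :
    (logSqPrimitive Complex.I).im = -(3 * π ^ 3 / 64) - π * Real.log 2 ^ 2 / 16 +
      (polylog 2 Complex.I).im * Real.log 2 + 2 * (polylog 3 ((1 + Complex.I) / 2)).im := by
  have hlog : Complex.log (1 + Complex.I) =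
      (Real.log 2 / 2 : ℝ) + (π / 4 : ℝ) * Complex.I := by
    simpa [one_add_one_eq_two] using log_one_add_ofReal_mul_I 1
  have hlog' : Complex.log (1 - Complex.I) =
      (Real.log 2 / 2 : ℝ) - (π / 4 : ℝ) * Complex.I := by
    simpa [one_add_one_eq_two, sub_eq_add_neg] using log_one_add_ofReal_mul_I (-1)
  have hne : 1 + Complex.I ≠ 0 := fun h => by simpa using congrArg Complex.re h
  have hinv : (1 + Complex.I)⁻¹ = Complex.I / (Complex.I - 1) := by
    have hne' : Complex.I - 1 ≠ 0 := fun h => by simpa using congrArg Complex.re h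
    field_simp
    linear_combination -Complex.I_sq
  have hconj : (1 + Complex.I)⁻¹ = (starRingEnd ℂ) ((1 + Complex.I) / 2) := by
    rw [map_div₀, map_add, map_one, Complex.conj_I, map_ofNat]
    field_simp
    linear_combination Complex.I_sq
  have hLi₂ : polylog 2 (1 + Complex.I)⁻¹ =
      -(Complex.log (1 - Complex.I) ^ 2 / 2) - polylog 2 Complex.I := by
    rw [hinv, ← polylog_two_add_polylog_two_div_sub_one (by simp) (by simp)]
    ring
  have hLi₃ : (polylog 3 (1 + Complex.I)⁻¹).im = -(polylog 3 ((1 + Complex.I) / 2)).im := by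
    rw [hconj, polylog_conj, Complex.conj_im]
  rw [logSqPrimitive, hLi₂, hlog, hlog', Complex.log_I]
  simp only [Complex.ofReal_div, Complex.ofReal_ofNat, pow_succ, pow_zero, one_mul, Complex.sub_im,
    Complex.sub_re, Complex.mul_im, Complex.mul_re, Complex.add_im, Complex.add_re, Complex.neg_im,
    Complex.neg_re, Complex.div_ofNat_re, Complex.div_ofNat_im, Complex.re_ofNat, Complex.im_ofNat,
    Complex.ofReal_re, Complex.ofReal_im, Complex.I_re, Complex.I_im, hLi₃, polylog_two_I_re]
  ring

/-! ### The inverse tangent integral -/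

lemma hasDerivAt_im {f : ℝ → ℂ} {f' : ℂ} {x : ℝ} (hf : HasDerivAt f f' x) :
    HasDerivAt (fun y => (f y).im) f'.im x :=
  Complex.imCLM.hasFDerivAt.comp_hasDerivAt x hf

/-- The inverse tangent integral `Tiₛ(u) = Im Liₛ(iu)`, which for `s = 1` is `arctan`. Its value
`Ti₂(1)` is Catalan's constant. -/
noncomputable def invTanIntegral (s : ℕ) (u : ℝ) : ℝ := (polylog s (u * Complex.I)).im

lemma invTanIntegral_one {u : ℝ} (hu : |u| < 1) : invTanIntegral 1 u = Real.arctan u := by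
  have harg : 1 - u * Complex.I = 1 + (-u : ℝ) * Complex.I := by
    push_cast
    ring
  rw [invTanIntegral, polylog_one (by simpa using hu), harg, log_one_add_ofReal_mul_I,
    Real.arctan_neg]
  simp [-Complex.ofReal_arctan]

@[simp]
lemma invTanIntegral_zero (s : ℕ) : invTanIntegral s 0 = 0 := by
  simp [invTanIntegral]

lemma hasDerivAt_ofReal_mul_I (u : ℝ) : HasDerivAt (fun x : ℝ => (x * Complex.I : ℂ)) Complex.I u :=
  ((hasDerivAt_id u).ofReal_comp.mul_const Complex.I).congr_deriv (by simp)

lemma differentiableAt_invTanIntegral_add_one (s : ℕ) {u : ℝ} (hu : |u| < 1) :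
    DifferentiableAt ℝ (invTanIntegral (s + 1)) u :=
  (hasDerivAt_im (hasDerivAt_comp_ofReal_curve
    (hasDerivAt_polylog_add_one s (by simpa using hu))
    (hasDerivAt_ofReal_mul_I u))).differentiableAt

lemma hasDerivAt_invTanIntegral_add_one (s : ℕ) {u : ℝ} (hu : |u| < 1) (hu₀ : u ≠ 0) :
    HasDerivAt (invTanIntegral (s + 1)) (invTanIntegral s u / u) u := by
  refine (hasDerivAt_im (hasDerivAt_comp_ofReal_curve
    (hasDerivAt_polylog_add_one_of_ne_zero s (by simpa using hu) (by simpa using hu₀))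
    (hasDerivAt_ofReal_mul_I u))).congr_deriv ?_
  rw [div_mul_eq_mul_div, mul_div_mul_right _ _ Complex.I_ne_zero, Complex.div_ofReal_im,
    invTanIntegral]

lemma continuousOn_invTanIntegral {s : ℕ} (hs : 2 ≤ s) :
    ContinuousOn (invTanIntegral s) (Icc (-1) 1) :=
  Complex.continuous_im.comp_continuousOn <| (continuousOn_polylog hs).comp (by fun_prop)
    fun _ hu => mem_closedBall_zero_iff.2 (by simpa using abs_le.2 hu)

/-! ### Log-tangent and log-sine integrals -/

lemma tendsto_log_pow_mul_nhdsNE_zero (n : ℕ) :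
    Tendsto (fun u : ℝ => Real.log u ^ n * u) (𝓝[≠] 0) (𝓝 0) := by
  have hlim := (isLittleO_abs_log_rpow_rpow_nhdsGT_zero n neg_one_lt_zero).tendsto_div_nhds_zero
  refine tendsto_zero_iff_abs_tendsto_zero _ |>.2 ((hlim.comp tendsto_abs_nhdsNE_zero).congr
    fun u => ?_)
  simp [Real.rpow_neg_one, abs_mul]

lemma continuousOn_log_pow_smul {E : Type*} [NormedAddCommGroup E] [NormedSpace ℝ E] {f : ℝ → E}
    {S : Set ℝ} (n : ℕ) (hf : ContinuousOn f S) (hd : DifferentiableAt ℝ f 0) (hf₀ : f 0 = 0) :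
    ContinuousOn (fun u => Real.log u ^ n • f u) S := by
  intro u hu
  rcases eq_or_ne u 0 with rfl | hu₀
  · refine ContinuousAt.continuousWithinAt (continuousAt_iff_punctured_nhds.2 ?_)
    have hO : f =O[𝓝[≠] 0] fun u => u := by
      simpa [hf₀] using hd.isBigO_sub.mono nhdsWithin_le_nhds
    simpa [hf₀] using (((Asymptotics.isBigO_refl (fun u => Real.log u ^ n) _).smul hO).trans_tendsto
      (tendsto_log_pow_mul_nhdsNE_zero n))
  · exact ((Real.continuousAt_log hu₀).continuousWithinAt.pow n).smul (hf u hu)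

lemma hasDerivAt_comp_tan {g : ℝ → ℝ} {a θ : ℝ} (hs : Real.sin θ ≠ 0) (hc : Real.cos θ ≠ 0)
    (hg : HasDerivAt g (a / Real.tan θ) (Real.tan θ)) :
    HasDerivAt (fun x => g (Real.tan x)) (a / (Real.sin θ * Real.cos θ)) θ := by
  refine (hg.comp θ (Real.hasDerivAt_tan hc)).congr_deriv ?_
  rw [Real.tan_eq_sin_div_cos]
  field_simp

lemma hasDerivAt_log_tan {θ : ℝ} (hs : Real.sin θ ≠ 0) (hc : Real.cos θ ≠ 0) :
    HasDerivAt (fun x => Real.log (Real.tan x)) (1 / (Real.sin θ * Real.cos θ)) θ :=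
  hasDerivAt_comp_tan hs hc <| by
    simpa using Real.hasDerivAt_log (x := Real.tan θ) (by simp [Real.tan_eq_sin_div_cos, hs, hc])

lemma hasDerivAt_log_two_mul_cos {θ : ℝ} (hc : Real.cos θ ≠ 0) :
    HasDerivAt (fun x => Real.log (2 * Real.cos x)) (-Real.tan θ) θ := by
  refine (((Real.hasDerivAt_cos θ).const_mul 2).log (by simpa using hc)).congr_deriv ?_
  rw [Real.tan_eq_sin_div_cos]
  field_simp

lemma log_one_add_exp_two_mul_I {θ : ℝ} (hθ : θ ∈ Ioo (-(π / 2)) (π / 2)) :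
    Complex.log (1 + Complex.exp ((2 * θ : ℝ) * Complex.I)) =
      Real.log (2 * Real.cos θ) + θ * Complex.I := by
  have hfactor : 1 + Complex.exp ((2 * θ : ℝ) * Complex.I) =
      (2 * Real.cos θ : ℝ) * Complex.exp (θ * Complex.I) := by
    push_cast
    rw [Complex.two_cos, add_mul, ← Complex.exp_add, ← Complex.exp_add]
    ring_nf
    simp [add_comm]
  have him : (θ * Complex.I : ℂ).im = θ := by simp
  rw [hfactor, Complex.log_ofReal_mul (mul_pos two_pos (Real.cos_pos_of_mem_Ioo hθ))
    (Complex.exp_ne_zero _), Complex.log_exp (by linarith [hθ.1, Real.pi_pos])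
    (by linarith [hθ.2, Real.pi_pos])]

lemma sin_ne_zero_of_mem_Ioo {θ : ℝ} (hθ : θ ∈ Ioo 0 (π / 2)) : Real.sin θ ≠ 0 :=
  (Real.sin_pos_of_pos_of_lt_pi hθ.1 (by linarith [hθ.2, Real.pi_pos])).ne'

lemma cos_ne_zero_of_mem_Ioo {θ : ℝ} (hθ : θ ∈ Ioo 0 (π / 2)) : Real.cos θ ≠ 0 :=
  (Real.cos_pos_of_mem_Ioo ⟨by linarith [hθ.1, Real.pi_pos], hθ.2⟩).ne'

lemma log_two_sin_eq {θ : ℝ} (hθ : θ ∈ Ioo 0 (π / 2)) :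
    Real.log (2 * Real.sin θ) = Real.log (Real.tan θ) + Real.log (2 * Real.cos θ) := by
  have hs := sin_ne_zero_of_mem_Ioo hθ
  have hc := cos_ne_zero_of_mem_Ioo hθ
  rw [← Real.log_mul (by simp [Real.tan_eq_sin_div_cos, hs, hc]) (by simpa using hc),
    Real.tan_eq_sin_div_cos]
  congr 1
  field_simp

lemma log_two_sin_two_mul_eq {θ : ℝ} (hθ : θ ∈ Ioo 0 (π / 2)) :
    Real.log (2 * Real.sin (2 * θ)) =
      Real.log (Real.tan θ) + 2 * Real.log (2 * Real.cos θ) := by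
  have hs := sin_ne_zero_of_mem_Ioo hθ
  have hc := cos_ne_zero_of_mem_Ioo hθ
  have hsin : 2 * Real.sin (2 * θ) = (2 * Real.sin θ) * (2 * Real.cos θ) := by
    rw [Real.sin_two_mul]
    ring
  rw [hsin, Real.log_mul (by simpa using hs) (by simpa using hc), log_two_sin_eq hθ]
  ring

lemma cos_pos_of_mem_Icc {θ : ℝ} (hθ : θ ∈ Icc 0 (π / 4)) : 0 < Real.cos θ :=
  Real.cos_pos_of_mem_Ioo ⟨by linarith [hθ.1, Real.pi_pos], by linarith [hθ.2, Real.pi_pos]⟩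

lemma tan_mem_Icc {θ : ℝ} (hθ : θ ∈ Icc 0 (π / 4)) : Real.tan θ ∈ Icc 0 1 := by
  have hlt : θ < π / 2 := by linarith [hθ.2, Real.pi_pos]
  refine ⟨Real.tan_nonneg_of_nonneg_of_le_pi_div_two hθ.1 hlt.le, ?_⟩
  rw [← Real.tan_pi_div_four]
  exact Real.strictMonoOn_tan.monotoneOn ⟨by linarith [hθ.1, Real.pi_pos], hlt⟩
    ⟨by linarith [Real.pi_pos], by linarith [Real.pi_pos]⟩ hθ.2

lemma abs_tan_lt_one {θ : ℝ} (hθ : θ ∈ Ioo 0 (π / 4)) : |Real.tan θ| < 1 := by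
  have hpos := Real.tan_pos_of_pos_of_lt_pi_div_two hθ.1 (by linarith [hθ.2, Real.pi_pos])
  rw [abs_of_pos hpos, ← Real.tan_pi_div_four]
  exact Real.tan_lt_tan_of_lt_of_lt_pi_div_two (by linarith [hθ.1, Real.pi_pos])
    (by linarith [Real.pi_pos]) hθ.2

lemma continuousOn_tan_Icc : ContinuousOn Real.tan (Icc 0 (π / 4)) :=
  Real.continuousOn_tan.mono fun _ hθ => (cos_pos_of_mem_Icc hθ).ne'

lemma continuousOn_log_two_mul_cos :
    ContinuousOn (fun θ => Real.log (2 * Real.cos θ)) (Icc 0 (π / 4)) :=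
  ContinuousOn.log (by fun_prop) fun _ hθ => (mul_pos two_pos (cos_pos_of_mem_Icc hθ)).ne'

lemma continuousOn_invTanIntegral_Icc {s : ℕ} (hs : 2 ≤ s) :
    ContinuousOn (invTanIntegral s) (Icc 0 1) :=
  (continuousOn_invTanIntegral hs).mono (Icc_subset_Icc_left (by norm_num))

lemma continuousOn_log_tan_pow_mul (n : ℕ) {f : ℝ → ℝ} (hf : ContinuousOn f (Icc 0 1))
    (hd : DifferentiableAt ℝ f 0) (hf₀ : f 0 = 0) :
    ContinuousOn (fun θ => Real.log (Real.tan θ) ^ n * f (Real.tan θ)) (Icc 0 (π / 4)) :=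
  (continuousOn_log_pow_smul n hf hd hf₀).comp continuousOn_tan_Icc fun _ => tan_mem_Icc

lemma hasDerivAt_invTanIntegral_tan (s : ℕ) {θ : ℝ} (hθ : θ ∈ Ioo 0 (π / 4)) :
    HasDerivAt (fun x => invTanIntegral (s + 1) (Real.tan x))
      (invTanIntegral s (Real.tan θ) / (Real.sin θ * Real.cos θ)) θ := by
  have hθ' : θ ∈ Ioo 0 (π / 2) := ⟨hθ.1, by linarith [hθ.2, Real.pi_pos]⟩
  exact hasDerivAt_comp_tan (sin_ne_zero_of_mem_Ioo hθ') (cos_ne_zero_of_mem_Ioo hθ')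
    (hasDerivAt_invTanIntegral_add_one s (abs_tan_lt_one hθ)
      (Real.tan_pos_of_pos_of_lt_pi_div_two hθ'.1 hθ'.2).ne')

lemma invTanIntegral_one_tan {θ : ℝ} (hθ : θ ∈ Ioo 0 (π / 4)) :
    invTanIntegral 1 (Real.tan θ) = θ := by
  rw [invTanIntegral_one (abs_tan_lt_one hθ),
    Real.arctan_tan (by linarith [hθ.1, Real.pi_pos]) (by linarith [hθ.2, Real.pi_pos])]

/-- A primitive of `log² tan θ` on `(0, π/4)`. -/
noncomputable def logTanSqPrimitive (θ : ℝ) : ℝ :=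
  θ * Real.log (Real.tan θ) ^ 2 - 2 * Real.log (Real.tan θ) * invTanIntegral 2 (Real.tan θ) +
    2 * invTanIntegral 3 (Real.tan θ)

lemma continuousOn_logTanSqPrimitive : ContinuousOn logTanSqPrimitive (Icc 0 (π / 4)) := by
  have hLi₂ := continuousOn_log_tan_pow_mul 1 (continuousOn_invTanIntegral_Icc le_rfl)
    (differentiableAt_invTanIntegral_add_one 1 (by simp)) (by simp)
  have hLi₃ := (continuousOn_invTanIntegral_Icc (s := 3) (by simp)).comp continuousOn_tan_Icc
    fun _ => tan_mem_Icc
  have harctan := continuousOn_log_tan_pow_mul 2 Real.continuous_arctan.continuousOn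
    (Real.differentiableAt_arctan 0) Real.arctan_zero
  refine ((harctan.sub (hLi₂.const_mul 2)).add (hLi₃.const_mul 2)).congr fun θ hθ => ?_
  simp only [logTanSqPrimitive, Function.comp_apply, Pi.add_apply, Pi.sub_apply]
  rw [Real.arctan_tan (by linarith [hθ.1, Real.pi_pos]) (by linarith [hθ.2, Real.pi_pos])]
  ring

lemma hasDerivAt_logTanSqPrimitive {θ : ℝ} (hθ : θ ∈ Ioo 0 (π / 4)) :
    HasDerivAt logTanSqPrimitive (Real.log (Real.tan θ) ^ 2) θ := by
  have hθ' : θ ∈ Ioo 0 (π / 2) := ⟨hθ.1, by linarith [hθ.2, Real.pi_pos]⟩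
  have ht := hasDerivAt_log_tan (sin_ne_zero_of_mem_Ioo hθ') (cos_ne_zero_of_mem_Ioo hθ')
  refine ((((hasDerivAt_id θ).mul (ht.pow 2)).sub
    ((ht.const_mul 2).mul (hasDerivAt_invTanIntegral_tan 1 hθ))).add
    ((hasDerivAt_invTanIntegral_tan 2 hθ).const_mul 2)).congr_deriv ?_
  simp only [id, Pi.pow_apply, invTanIntegral_one_tan hθ]
  push_cast
  ring

lemma intervalIntegrable_sq_log_tan :
    IntervalIntegrable (fun θ => Real.log (Real.tan θ) ^ 2) volume 0 (π / 4) :=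
  (intervalIntegrable_iff_integrableOn_Ioc_of_le (by positivity)).2 <|
    intervalIntegral.integrableOn_deriv_of_nonneg continuousOn_logTanSqPrimitive
      (fun _ => hasDerivAt_logTanSqPrimitive) fun _ _ => sq_nonneg _

lemma integral_sq_log_tan : ∫ θ in (0 : ℝ)..(π / 4), Real.log (Real.tan θ) ^ 2 = π ^ 3 / 16 := by
  rw [intervalIntegral.integral_eq_sub_of_hasDerivAt_of_le (by positivity)
    continuousOn_logTanSqPrimitive (fun _ => hasDerivAt_logTanSqPrimitive)
    intervalIntegrable_sq_log_tan]
  have hTi₃ : invTanIntegral 3 1 = π ^ 3 / 32 := by simp [invTanIntegral, polylog_three_I_im]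
  simp only [logTanSqPrimitive, Real.tan_pi_div_four, Real.log_one, Real.tan_zero,
    invTanIntegral_zero, hTi₃]
  ring

lemma intervalIntegrable_sq_log_tan_add {g : ℝ → ℝ} (hg : ContinuousOn g (Icc 0 (π / 4))) :
    IntervalIntegrable (fun θ => (Real.log (Real.tan θ) + g θ) ^ 2) volume 0 (π / 4) := by
  have hle : (0 : ℝ) ≤ π / 4 := by positivity
  have hmeas : AEStronglyMeasurable (fun θ => Real.log (Real.tan θ))
      (volume.restrict (Ioc 0 (π / 4))) := by
    refine ContinuousOn.aestronglyMeasurable (continuousOn_tan_Icc.mono Ioc_subset_Icc_self |>.log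
      fun θ hθ => ?_) measurableSet_Ioc
    exact (Real.tan_pos_of_pos_of_lt_pi_div_two hθ.1 (by linarith [hθ.2, Real.pi_pos])).ne'
  have htan : MemLp (fun θ => Real.log (Real.tan θ)) 2 (volume.restrict (Ioc 0 (π / 4))) :=
    (memLp_two_iff_integrable_sq hmeas).2
      ((intervalIntegrable_iff_integrableOn_Ioc_of_le hle).1 intervalIntegrable_sq_log_tan)
  have hg₂ : MemLp g 2 (volume.restrict (Ioc 0 (π / 4))) :=
    (memLp_two_iff_integrable_sq
      ((hg.mono Ioc_subset_Icc_self).aestronglyMeasurable measurableSet_Ioc)).2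
      ((hg.pow 2).integrableOn_Icc.mono_set Ioc_subset_Icc_self)
  exact (intervalIntegrable_iff_integrableOn_Ioc_of_le hle).2 (htan.add hg₂).integrable_sq

lemma integral_sq_log_two_sin_two_mul_eq_half :
    ∫ θ in (0 : ℝ)..(π / 4), Real.log (2 * Real.sin (2 * θ)) ^ 2 =
      1 / 2 * ∫ θ in (0 : ℝ)..(π / 4),
        (Real.log (2 * Real.sin θ) ^ 2 + Real.log (2 * Real.cos θ) ^ 2) := by
  have hle : (0 : ℝ) ≤ π / 4 := by positivity
  have hsin : IntervalIntegrable (fun θ => Real.log (2 * Real.sin θ) ^ 2) volume 0 (π / 4) :=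
    (intervalIntegrable_sq_log_tan_add continuousOn_log_two_mul_cos).congr_uIoo fun θ hθ => by
      rw [uIoo_of_le hle] at hθ
      simp only [log_two_sin_eq ⟨hθ.1, by linarith [hθ.2, Real.pi_pos]⟩]
  have hcos : ContinuousOn (fun θ => Real.log (2 * Real.cos θ) ^ 2) (uIcc 0 (π / 4)) := by
    rw [uIcc_of_le hle]
    exact continuousOn_log_two_mul_cos.pow 2
  have hquarter : π / 2 - π / 4 = π / 4 := by ring
  have hsin' : IntervalIntegrable (fun θ => Real.log (2 * Real.sin θ) ^ 2) volume
      (π / 4) (π / 2) := by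
    simpa [Real.cos_pi_div_two_sub, hquarter] using
      (hcos.intervalIntegrable.comp_sub_left (π / 2)).symm
  rw [intervalIntegral.integral_comp_mul_left (fun x => Real.log (2 * Real.sin x) ^ 2) two_ne_zero,
    show 2 * (π / 4) = π / 2 by ring, mul_zero,
    ← intervalIntegral.integral_add_adjacent_intervals hsin hsin',
    intervalIntegral.integral_add hsin hcos.intervalIntegrable]
  have hfold := intervalIntegral.integral_comp_sub_left (a := 0) (b := π / 4)
    (fun x => Real.log (2 * Real.sin x) ^ 2) (π / 2)
  simp only [Real.sin_pi_div_two_sub, sub_zero, hquarter] at hfold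
  rw [hfold, smul_eq_mul, one_div]

lemma intervalIntegrable_sq_log_two_sin_two_mul :
    IntervalIntegrable (fun θ => Real.log (2 * Real.sin (2 * θ)) ^ 2) volume 0 (π / 4) :=
  (intervalIntegrable_sq_log_tan_add (continuousOn_log_two_mul_cos.const_mul 2)).congr_uIoo
    fun θ hθ => by
      rw [uIoo_of_le (by positivity)] at hθ
      simp only [log_two_sin_two_mul_eq ⟨hθ.1, by linarith [hθ.2, Real.pi_pos]⟩]

lemma integral_sq_log_two_sin_two_mul :
    ∫ θ in (0 : ℝ)..(π / 4), Real.log (2 * Real.sin (2 * θ)) ^ 2 = π ^ 3 / 48 := by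
  have hle : (0 : ℝ) ≤ π / 4 := by positivity
  have hparallelogram : EqOn
      (fun θ => Real.log (2 * Real.sin θ) ^ 2 + Real.log (2 * Real.cos θ) ^ 2)
      (fun θ => 1 / 2 * (Real.log (2 * Real.sin (2 * θ)) ^ 2 + Real.log (Real.tan θ) ^ 2))
      (Ioo 0 (π / 4)) := by
    intro θ hθ
    have hθ' : θ ∈ Ioo 0 (π / 2) := ⟨hθ.1, by linarith [hθ.2, Real.pi_pos]⟩
    simp only [log_two_sin_eq hθ', log_two_sin_two_mul_eq hθ']
    ring
  have heq := integral_sq_log_two_sin_two_mul_eq_half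
  rw [intervalIntegral.integral_congr_Ioo_of_le hle hparallelogram,
    intervalIntegral.integral_const_mul,
    intervalIntegral.integral_add intervalIntegrable_sq_log_two_sin_two_mul
      intervalIntegrable_sq_log_tan, integral_sq_log_tan] at heq
  linarith

/-! ### The integral of `φ cot φ log tan (φ / 2)` -/

lemma continuousOn_logSqPrimitive_ofReal_mul_I :
    ContinuousOn (fun u : ℝ => logSqPrimitive (u * Complex.I)) (Ici 0) := by
  have hre (u : ℝ) : 0 ≤ (u * Complex.I).re := by simp
  have hslit (u : ℝ) := one_add_mem_slitPlane (hre u)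
  have hline : Continuous fun u : ℝ => 1 + u * Complex.I := by fun_prop
  have hL : Continuous fun u : ℝ => Complex.log (1 + u * Complex.I) :=
    hline.clog hslit
  have hpolylog {s : ℕ} (hs : 2 ≤ s) : Continuous fun u : ℝ => polylog s (1 + u * Complex.I)⁻¹ :=
    (continuousOn_polylog hs).comp_continuous
      (hline.inv₀ fun u => Complex.slitPlane_ne_zero (hslit u))
      fun u => mem_closedBall_zero_iff.2 (norm_one_add_inv_le_one (hre u))
  have hd : DifferentiableAt ℝ (fun u : ℝ => Complex.log (1 + u * Complex.I) ^ 2) 0 :=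
    (((hasDerivAt_ofReal_mul_I 0).const_add 1).clog_real (hslit 0)).differentiableAt.pow 2
  have hlogL := continuousOn_log_pow_smul (S := Ici 0) 1 (hL.pow 2).continuousOn hd (by simp)
  refine (hlogL.add (Continuous.continuousOn (f := fun u : ℝ =>
    π / 2 * Complex.I * Complex.log (1 + u * Complex.I) ^ 2 -
      2 / 3 * Complex.log (1 + u * Complex.I) ^ 3 -
      2 * Complex.log (1 + u * Complex.I) * polylog 2 (1 + u * Complex.I)⁻¹ -
      2 * polylog 3 (1 + u * Complex.I)⁻¹) ?_)).congr fun u hu => ?_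
  · have h₂ := hpolylog (s := 2) le_rfl
    have h₃ := hpolylog (s := 3) (by simp)
    fun_prop
  · rcases (mem_Ici.1 hu).eq_or_lt with rfl | hpos
    · simp [logSqPrimitive]
    · simp only [logSqPrimitive, Complex.log_ofReal_mul hpos Complex.I_ne_zero, Complex.log_I,
        Pi.add_apply, Pi.pow_apply, pow_one, Complex.real_smul]
      ring

lemma hasDerivAt_logSqPrimitive_ofReal_mul_I_im {u : ℝ} (hu : u ≠ 0) :
    HasDerivAt (fun x : ℝ => (logSqPrimitive (x * Complex.I)).im)
      (Real.log (1 + u ^ 2) * Real.arctan u / u) u := by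
  refine (hasDerivAt_im (hasDerivAt_comp_ofReal_curve
    (hasDerivAt_logSqPrimitive (by simp) (by simpa using hu))
    (hasDerivAt_ofReal_mul_I u))).congr_deriv ?_
  rw [div_mul_eq_mul_div, mul_div_mul_right _ _ Complex.I_ne_zero, Complex.div_ofReal_im,
    log_one_add_ofReal_mul_I]
  simp only [sq, Complex.mul_im, Complex.add_re, Complex.add_im, Complex.re_ofReal_mul,
    Complex.ofReal_re, Complex.ofReal_im, Complex.I_re, Complex.I_im]
  ring

lemma hasDerivAt_logSqPrimitive_tan_im {θ : ℝ} (hθ : θ ∈ Ioo 0 (π / 2)) :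
    HasDerivAt (fun x : ℝ => (logSqPrimitive (Real.tan x * Complex.I)).im)
      (2 * (Real.log 2 - Real.log (2 * Real.cos θ)) * θ / (Real.sin θ * Real.cos θ)) θ := by
  have hs := sin_ne_zero_of_mem_Ioo hθ
  have hc := cos_ne_zero_of_mem_Ioo hθ
  have htan : Real.tan θ ≠ 0 := (Real.tan_pos_of_pos_of_lt_pi_div_two hθ.1 hθ.2).ne'
  have hlog : Real.log (1 + Real.tan θ ^ 2) =
      2 * (Real.log 2 - Real.log (2 * Real.cos θ)) := by
    rw [← inv_inv (1 + Real.tan θ ^ 2), Real.inv_one_add_tan_sq hc, Real.log_inv, Real.log_pow,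
      Real.log_mul two_ne_zero hc]
    push_cast
    ring
  have harctan : Real.arctan (Real.tan θ) = θ :=
    Real.arctan_tan (by linarith [hθ.1, Real.pi_pos]) hθ.2
  refine (hasDerivAt_comp_tan hs hc
    (hasDerivAt_logSqPrimitive_ofReal_mul_I_im htan)).congr_deriv ?_
  rw [hlog, harctan]

lemma hasDerivAt_logSqPrimitive_exp_im {θ : ℝ} (hθ : |θ| ≤ π / 4) :
    HasDerivAt (fun x : ℝ => (logSqPrimitive (Complex.exp ((2 * x : ℝ) * Complex.I))).im)
      (2 * (Real.log (2 * Real.cos θ) ^ 2 - θ ^ 2)) θ := by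
  obtain ⟨hlo, hhi⟩ := abs_le.1 hθ
  have hre : 0 ≤ (Complex.exp ((2 * θ : ℝ) * Complex.I)).re := by
    rw [Complex.exp_ofReal_mul_I_re]
    exact Real.cos_nonneg_of_neg_pi_div_two_le_of_le (by linarith) (by linarith)
  have hcurve : HasDerivAt (fun x : ℝ => Complex.exp ((2 * x : ℝ) * Complex.I))
      (Complex.exp ((2 * θ : ℝ) * Complex.I) * (2 * Complex.I)) θ :=
    ((((hasDerivAt_id θ).const_mul 2).ofReal_comp.mul_const Complex.I).cexp).congr_deriv (by simp)
  refine (hasDerivAt_im (hasDerivAt_comp_ofReal_curve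
    (hasDerivAt_logSqPrimitive hre (Complex.exp_ne_zero _)) hcurve)).congr_deriv ?_
  rw [← mul_assoc, div_mul_cancel₀ _ (Complex.exp_ne_zero _),
    log_one_add_exp_two_mul_I ⟨by linarith [Real.pi_pos], by linarith [Real.pi_pos]⟩]
  simp only [sq, Complex.mul_im, Complex.mul_re, Complex.add_re, Complex.add_im, Complex.ofReal_re,
    Complex.ofReal_im, Complex.I_re, Complex.I_im, Complex.re_ofNat, Complex.im_ofNat]
  ring

/-- A primitive of `-4θ cot 2θ log tan θ - log² (2 sin 2θ)` on `(0, π/4)`. -/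
noncomputable def cotLogTanPrimitive (θ : ℝ) : ℝ :=
  -(θ * Real.log (Real.tan θ) * (Real.log (Real.tan θ) + 4 * Real.log (2 * Real.cos θ))) +
    4 * Real.log 2 * invTanIntegral 2 (Real.tan θ) -
    2 * (logSqPrimitive (Real.tan θ * Complex.I)).im -
    2 * (logSqPrimitive (Complex.exp ((2 * θ : ℝ) * Complex.I))).im - 4 / 3 * θ ^ 3

lemma continuousOn_cotLogTanPrimitive : ContinuousOn cotLogTanPrimitive (Icc 0 (π / 4)) := by
  have hlog (n : ℕ) := continuousOn_log_tan_pow_mul n Real.continuous_arctan.continuousOn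
    (Real.differentiableAt_arctan 0) Real.arctan_zero
  have hTi := (continuousOn_invTanIntegral_Icc le_rfl).comp continuousOn_tan_Icc
    fun _ => tan_mem_Icc
  have htan := Complex.continuous_im.comp_continuousOn
    (continuousOn_logSqPrimitive_ofReal_mul_I.comp continuousOn_tan_Icc fun _ hθ =>
      (tan_mem_Icc hθ).1)
  have hexp : ContinuousOn (fun x : ℝ =>
      (logSqPrimitive (Complex.exp ((2 * x : ℝ) * Complex.I))).im) (Icc 0 (π / 4)) :=
    fun θ hθ => (hasDerivAt_logSqPrimitive_exp_im
      (abs_le.2 ⟨by linarith [hθ.1, Real.pi_pos], hθ.2⟩)).continuousAt.continuousWithinAt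
  refine (((((hlog 2).add (((hlog 1).mul continuousOn_log_two_mul_cos).const_mul 4)).neg.add
    (hTi.const_mul (4 * Real.log 2))).sub (htan.const_mul 2)).sub (hexp.const_mul 2)).sub
    ((continuous_pow 3).const_mul (4 / 3)).continuousOn |>.congr fun θ hθ => ?_
  simp only [cotLogTanPrimitive, Function.comp_apply, Pi.add_apply, Pi.sub_apply, Pi.neg_apply,
    Pi.mul_apply]
  rw [Real.arctan_tan (by linarith [hθ.1, Real.pi_pos]) (by linarith [hθ.2, Real.pi_pos])]
  ring

lemma hasDerivAt_cotLogTanPrimitive {θ : ℝ} (hθ : θ ∈ Ioo 0 (π / 4)) :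
    HasDerivAt cotLogTanPrimitive
      (2 * -(2 * θ * Real.cot (2 * θ) * Real.log (Real.tan θ)) -
        Real.log (2 * Real.sin (2 * θ)) ^ 2) θ := by
  have hθ' : θ ∈ Ioo 0 (π / 2) := ⟨hθ.1, by linarith [hθ.2, Real.pi_pos]⟩
  have hs := sin_ne_zero_of_mem_Ioo hθ'
  have hc := cos_ne_zero_of_mem_Ioo hθ'
  have ht := hasDerivAt_log_tan hs hc
  have hk := hasDerivAt_log_two_mul_cos hc
  have hexp := hasDerivAt_logSqPrimitive_exp_im
    (abs_le.2 ⟨by linarith [hθ.1, Real.pi_pos], hθ.2.le⟩)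
  refine ((((((hasDerivAt_id θ).mul ht).mul (ht.add (hk.const_mul 4))).neg.add
    ((hasDerivAt_invTanIntegral_tan 1 hθ).const_mul (4 * Real.log 2))).sub
    ((hasDerivAt_logSqPrimitive_tan_im hθ').const_mul 2)).sub (hexp.const_mul 2)).sub
    (((hasDerivAt_id θ).pow 3).const_mul (4 / 3)) |>.congr_deriv ?_
  simp only [id, Pi.mul_apply, Pi.add_apply, invTanIntegral_one_tan hθ,
    log_two_sin_two_mul_eq hθ']
  rw [Real.cot_eq_cos_div_sin, Real.sin_two_mul, Real.cos_two_mul', Real.tan_eq_sin_div_cos]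
  generalize Real.log (Real.sin θ / Real.cos θ) = t
  generalize Real.log (2 * Real.cos θ) = k
  field_simp
  linear_combination 6 * t * θ * Real.sin_sq_add_cos_sq θ

lemma abs_mul_cot_le_one {φ : ℝ} (hφ : φ ∈ Ioo 0 (π / 2)) : |φ * Real.cot φ| ≤ 1 := by
  have htan := Real.tan_pos_of_pos_of_lt_pi_div_two hφ.1 hφ.2
  rw [Real.cot_eq_cos_div_sin, ← inv_div, ← Real.tan_eq_sin_div_cos, ← div_eq_mul_inv,
    abs_of_pos (div_pos hφ.1 htan), div_le_one htan]
  exact Real.le_tan hφ.1.le hφ.2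

lemma intervalIntegrable_mul_cot_mul_log_tan_half :
    IntervalIntegrable (fun φ => -(φ * Real.cot φ * Real.log (Real.tan (φ / 2)))) volume
      0 (π / 2) := by
  have hle : (0 : ℝ) ≤ π / 4 := by positivity
  have hbound : IntegrableOn (fun θ => 1 + Real.log (Real.tan θ) ^ 2) (Ioo 0 (π / 4)) :=
    (intervalIntegrable_iff_integrableOn_Ioo_of_le hle).1
      (intervalIntegrable_const.add intervalIntegrable_sq_log_tan)
  rw [← IntervalIntegrable.comp_mul_left_iff two_ne_zero, zero_div, div_div,
    show (2 * 2 : ℝ) = 4 by norm_num, intervalIntegrable_iff_integrableOn_Ioo_of_le hle]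
  refine hbound.mono' ?_ ((ae_restrict_iff' measurableSet_Ioo).2 <| .of_forall fun θ hθ => ?_)
  · simp only [Real.cot_eq_cos_div_sin, Real.tan_eq_sin_div_cos]
    fun_prop
  · have hcot := abs_mul_cot_le_one (φ := 2 * θ) ⟨by linarith [hθ.1], by linarith [hθ.2]⟩
    rw [mul_div_cancel_left₀ θ two_ne_zero, norm_neg, norm_mul, Real.norm_eq_abs, Real.norm_eq_abs]
    calc |2 * θ * Real.cot (2 * θ)| * |Real.log (Real.tan θ)|
        ≤ |Real.log (Real.tan θ)| := mul_le_of_le_one_left (abs_nonneg _) hcot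
      _ ≤ 1 + Real.log (Real.tan θ) ^ 2 := by
        nlinarith [sq_abs (Real.log (Real.tan θ)), sq_nonneg (|Real.log (Real.tan θ)| - 1)]

lemma cotLogTanPrimitive_zero : cotLogTanPrimitive 0 = 0 := by
  have hzero := logSqPrimitive_ofReal_im (x := 0) le_rfl
  have hone := logSqPrimitive_ofReal_im (x := 1) zero_le_one
  simp_all [cotLogTanPrimitive]

lemma cotLogTanPrimitive_pi_div_four : cotLogTanPrimitive (π / 4) =
    4 * Real.log 2 * (polylog 2 Complex.I).im - 4 * (logSqPrimitive Complex.I).im -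
      π ^ 3 / 48 := by
  have hexp : Complex.exp ((2 * (π / 4) : ℝ) * Complex.I) = Complex.I := by
    simp [show 2 * (π / 4) = π / 2 by ring]
  rw [cotLogTanPrimitive, hexp, Real.tan_pi_div_four, Real.log_one, invTanIntegral,
    Complex.ofReal_one, one_mul]
  ring

lemma integral_mul_cot_mul_log_tan_half :
    ∫ φ in (0 : ℝ)..(π / 2), -(φ * Real.cot φ * Real.log (Real.tan (φ / 2))) =
      3 * π ^ 3 / 16 - 8 * (polylog 3 ((1 + Complex.I) / 2)).im + π * Real.log 2 ^ 2 / 4 := by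
  have hle : (0 : ℝ) ≤ π / 4 := by positivity
  have hhalf : π / 2 = 2 * (π / 4) := by ring
  have hcot : IntervalIntegrable
      (fun θ => 2 * -(2 * θ * Real.cot (2 * θ) * Real.log (Real.tan θ))) volume 0 (π / 4) := by
    have h := (intervalIntegrable_mul_cot_mul_log_tan_half.comp_mul_left (c := 2)).const_mul 2
    simpa [hhalf] using h
  have hsin : IntervalIntegrable (fun θ => Real.log (2 * Real.sin (2 * θ)) ^ 2) volume
      0 (π / 4) := intervalIntegrable_sq_log_two_sin_two_mul
  have hFTC := intervalIntegral.integral_eq_sub_of_hasDerivAt_of_le hle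
    continuousOn_cotLogTanPrimitive (fun _ => hasDerivAt_cotLogTanPrimitive) (hcot.sub hsin)
  have hscale := intervalIntegral.mul_integral_comp_mul_left (a := 0) (b := π / 4)
    (f := fun φ => -(φ * Real.cot φ * Real.log (Real.tan (φ / 2)))) 2
  rw [intervalIntegral.integral_sub hcot hsin, integral_sq_log_two_sin_two_mul,
    cotLogTanPrimitive_zero, cotLogTanPrimitive_pi_div_four, logSqPrimitive_I_im,
    intervalIntegral.integral_const_mul] at hFTC
  simp only [mul_div_cancel_left₀ _ (two_ne_zero' ℝ), mul_zero, ← hhalf] at hscale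
  rw [← hscale]
  linarith

/-! ### The double series -/

lemma integral_cos_pow_odd (n : ℕ) : ∫ x in (0 : ℝ)..(π / 2), Real.cos x ^ (2 * n + 1) =
    4 ^ n / ((Nat.choose (2 * n) n : ℝ) * (2 * n + 1)) := by
  induction n with
  | zero => simp
  | succ k ih =>
    have hrec : ((k : ℝ) + 1) * (Nat.choose (2 * (k + 1)) (k + 1) : ℝ) =
        2 * (2 * k + 1) * (Nat.choose (2 * k) k : ℝ) := by
      exact_mod_cast Nat.succ_mul_centralBinom_succ k
    have hchoose : (Nat.choose (2 * k) k : ℝ) ≠ 0 :=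
      Nat.cast_ne_zero.2 (Nat.centralBinom_ne_zero k)
    have hsucc : (Nat.choose (2 * (k + 1)) (k + 1) : ℝ) =
        2 * (2 * k + 1) * (Nat.choose (2 * k) k : ℝ) / (k + 1) := by
      rw [eq_div_iff (by positivity), mul_comm, hrec]
    rw [show 2 * (k + 1) + 1 = 2 * k + 1 + 2 by ring, integral_cos_pow, ih, hsucc]
    simp only [Real.cos_pi_div_two, Real.sin_zero, mul_zero, sub_zero]
    push_cast
    rw [zero_pow (by simp), zero_mul]
    field_simp
    ring

lemma integral_mul_cos_pow_even_mul_sin (n : ℕ) :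
    ∫ x in (0 : ℝ)..(π / 2), x * Real.cos x ^ (2 * n) * Real.sin x =
      4 ^ n / ((Nat.choose (2 * n) n : ℝ) * (2 * n + 1) ^ 2) := by
  have hcos (x : ℝ) : HasDerivAt (fun y => -(Real.cos y ^ (2 * n + 1) / (2 * n + 1)))
      (Real.cos x ^ (2 * n) * Real.sin x) x := by
    refine (((Real.hasDerivAt_cos x).pow (2 * n + 1)).div_const (2 * n + 1)).neg.congr_deriv ?_
    simp only [add_tsub_cancel_right]
    push_cast
    field_simp
  simp only [mul_assoc]
  rw [intervalIntegral.integral_mul_deriv_eq_deriv_mul (fun x _ => hasDerivAt_id' x)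
    (fun x _ => hcos x) intervalIntegrable_const
    (Continuous.intervalIntegrable (by fun_prop) _ _)]
  simp only [one_mul, intervalIntegral.integral_neg, intervalIntegral.integral_div,
    integral_cos_pow_odd, Real.cos_pi_div_two, zero_pow (Nat.succ_ne_zero (2 * n)), zero_div,
    neg_zero, mul_zero, zero_mul, sub_self]
  field_simp
  ring

lemma hasSum_pow_two_mul_add_div_two_mul_add_one {c : ℝ} (hc : |c| < 1) :
    HasSum (fun q : ℕ × ℕ => c ^ (2 * (q.1 + q.2 + 1)) / (2 * q.2 + 1))
      (c / (2 * (1 - c ^ 2)) * (Real.log (1 + c) - Real.log (1 - c))) := by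
  have hgeom := hasSum_geometric_of_abs_lt_one (r := c ^ 2) (by
    rw [abs_pow]
    exact pow_lt_one₀ (abs_nonneg c) hc two_ne_zero)
  have hlog := Real.hasSum_log_sub_log_of_abs_lt_one hc
  have hsummable := summable_mul_of_summable_norm hgeom.summable.norm hlog.summable.norm
  have hprod := (hgeom.mul hlog hsummable).mul_left (c / 2)
  have hterm (q : ℕ × ℕ) : c / 2 * ((c ^ 2) ^ q.1 * (2 * (1 / (2 * q.2 + 1)) * c ^ (2 * q.2 + 1))) =
      c ^ (2 * (q.1 + q.2 + 1)) / (2 * q.2 + 1) := by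
    field_simp
    ring
  have hvalue (y : ℝ) : c / 2 * ((1 - c ^ 2)⁻¹ * y) = c / (2 * (1 - c ^ 2)) * y := by
    rw [← mul_assoc, div_mul_eq_div_div, div_eq_mul_inv (c / 2)]
  simpa only [hterm, hvalue] using hprod

lemma log_one_add_cos_sub_log_one_sub_cos {x : ℝ} (hx : x ∈ Ioo 0 π) :
    Real.log (1 + Real.cos x) - Real.log (1 - Real.cos x) =
      -(2 * Real.log (Real.tan (x / 2))) := by
  have hx' : x / 2 ∈ Ioo 0 (π / 2) := ⟨by linarith [hx.1], by linarith [hx.2]⟩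
  have hs := sin_ne_zero_of_mem_Ioo hx'
  have hc := cos_ne_zero_of_mem_Ioo hx'
  have hcos : Real.cos x = 2 * Real.cos (x / 2) ^ 2 - 1 := by
    rw [← Real.cos_two_mul, mul_div_cancel₀ x two_ne_zero]
  have hadd : 1 + Real.cos x = 2 * Real.cos (x / 2) ^ 2 := by linarith
  have hsub : 1 - Real.cos x = 2 * Real.sin (x / 2) ^ 2 := by
    linarith [Real.sin_sq_add_cos_sq (x / 2)]
  rw [hadd, hsub, Real.tan_eq_sin_div_cos, Real.log_mul two_ne_zero (pow_ne_zero 2 hc),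
    Real.log_mul two_ne_zero (pow_ne_zero 2 hs), Real.log_pow, Real.log_pow, Real.log_div hs hc]
  push_cast
  ring

lemma hasSum_mul_cos_pow_mul_sin {x : ℝ} (hx : x ∈ Ioo 0 π) :
    HasSum (fun q : ℕ × ℕ => x * Real.cos x ^ (2 * (q.1 + q.2 + 1)) * Real.sin x / (2 * q.2 + 1))
      (-(x * Real.cot x * Real.log (Real.tan (x / 2)))) := by
  have hs : 0 < Real.sin x := Real.sin_pos_of_pos_of_lt_pi hx.1 hx.2
  have hsq := Real.sin_sq_add_cos_sq x
  have hc : |Real.cos x| < 1 := (sq_lt_one_iff_abs_lt_one _).1 (by nlinarith)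
  have hprod := (hasSum_pow_two_mul_add_div_two_mul_add_one hc).mul_left (x * Real.sin x)
  have hterm (q : ℕ × ℕ) :
      x * Real.sin x * (Real.cos x ^ (2 * (q.1 + q.2 + 1)) / (2 * q.2 + 1)) =
        x * Real.cos x ^ (2 * (q.1 + q.2 + 1)) * Real.sin x / (2 * q.2 + 1) := by ring
  have hvalue : x * Real.sin x * (Real.cos x / (2 * (1 - Real.cos x ^ 2)) *
      -(2 * Real.log (Real.tan (x / 2)))) = -(x * Real.cot x * Real.log (Real.tan (x / 2))) := by
    rw [← Real.sin_sq, Real.cot_eq_cos_div_sin]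
    field_simp
  simpa only [hterm, log_one_add_cos_sub_log_one_sub_cos hx, hvalue] using hprod

lemma hasSum_integral_mul_cos_pow_mul_sin :
    HasSum (fun q : ℕ × ℕ =>
        ∫ x in (0 : ℝ)..(π / 2),
          x * Real.cos x ^ (2 * (q.1 + q.2 + 1)) * Real.sin x / (2 * q.2 + 1))
      (∫ x in (0 : ℝ)..(π / 2), -(x * Real.cot x * Real.log (Real.tan (x / 2)))) := by
  have hle : (0 : ℝ) ≤ π / 2 := by positivity
  have hmem {x : ℝ} (hx : x ∈ uIoc 0 (π / 2)) : x ∈ Ioo 0 π := by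
    rw [uIoc_of_le hle] at hx
    exact ⟨hx.1, by linarith [hx.2, Real.pi_pos]⟩
  have hsum {x : ℝ} (hx : x ∈ uIoc 0 (π / 2)) := hasSum_mul_cos_pow_mul_sin (hmem hx)
  refine intervalIntegral.hasSum_integral_of_dominated_convergence
    (fun q x => x * Real.cos x ^ (2 * (q.1 + q.2 + 1)) * Real.sin x / (2 * q.2 + 1))
    (fun q => Continuous.aestronglyMeasurable (by fun_prop))
    (fun q => .of_forall fun x hx => ?_) (.of_forall fun x hx => (hsum hx).summable)
    (intervalIntegrable_mul_cot_mul_log_tan_half.congr fun x hx => (hsum hx).tsum_eq.symm)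
    (.of_forall fun x hx => hsum hx)
  have hx₀ := (hmem hx).1
  have hs := Real.sin_pos_of_pos_of_lt_pi hx₀ (hmem hx).2
  have heven : 0 ≤ Real.cos x ^ (2 * (q.1 + q.2 + 1)) := Even.pow_nonneg (even_two_mul _) _
  exact (Real.norm_of_nonneg (by positivity)).le

/-- The pairs `n₁ ≥ n₂ ≥ 1` parametrised by `(n₁ - n₂, n₂ - 1) ∈ ℕ × ℕ`. -/
def prodEquivLEPairs : ℕ × ℕ ≃ {p : ℕ × ℕ // p.2 ≤ p.1 ∧ 1 ≤ p.2} where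
  toFun q := ⟨(q.1 + q.2 + 1, q.2 + 1), by omega, by omega⟩
  invFun p := (p.1.1 - p.1.2, p.1.2 - 1)
  left_inv q := by ext <;> simp
  right_inv p := by
    obtain ⟨⟨a, b⟩, h₁, h₂⟩ := p
    simp only [Subtype.mk.injEq, Prod.mk.injEq] at *
    omega

end

/-- `∑_{n₁ ≥ n₂ ≥ 1} 4^{n₁}/(binom(2n₁,n₁)(2n₁+1)²(2n₂−1))
  = 3π³/16 − 8 Im Li₃((1+i)/2) + π log²2/4`. -/
theorem stmt14 :
    (∑' p : {p : ℕ × ℕ // p.2 ≤ p.1 ∧ 1 ≤ p.2},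
      (4 : ℝ) ^ p.1.1 /
        ((Nat.choose (2 * p.1.1) p.1.1 : ℝ) * (2 * (p.1.1 : ℝ) + 1) ^ 2 *
          (2 * (p.1.2 : ℝ) - 1))) =
    3 * π ^ 3 / 16 -
      8 * (∑' n : ℕ, ((1 + Complex.I) / 2) ^ (n + 1) / ((n : ℂ) + 1) ^ 3).im +
      π * Real.log 2 ^ 2 / 4 := by
  change _ = 3 * π ^ 3 / 16 - 8 * (polylog 3 ((1 + Complex.I) / 2)).im + π * Real.log 2 ^ 2 / 4
  rw [← integral_mul_cot_mul_log_tan_half, ← hasSum_integral_mul_cos_pow_mul_sin.tsum_eq,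
    ← prodEquivLEPairs.tsum_eq]
  refine tsum_congr fun q => ?_
  rw [intervalIntegral.integral_div, integral_mul_cos_pow_even_mul_sin, div_div]
  simp only [prodEquivLEPairs, Equiv.coe_fn_mk]
  congr 2
  push_cast
  ring
end
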